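/- Every triconnected planar simple graph with maximum degree at most 4 on n vertices admits a planar octilinear drawing whose total number of bends is at most n + 5. -/

import Mathlib

/-!
The bound is obtained from a drawing that bends every edge at most once, one edge excepted, and that
draws one incoming edge of every vertex but one without bends.

*From the drawing to combinatorics.* The segments of a planar polyline drawing, after a generic
shear, are ordered around each node. For a circulation on them, the flow passing to the left of a
node serves as a potential: it is the same at both ends of a segment up to the flow through
neighbouring segments (`leftFlow_transport`). Hence a planar graph has a rotation system in which
every circulation is the coboundary of a function on the faces (`exists_rotation_system`). Comparing
dimensions, `m + 2 ≤ n + f` (`card_up_add_two_le`); no Jordan curve theorem is needed.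

*Bipolar orientation.* As `G` stays connected after deleting a vertex, it has an st-numbering for
any edge `s t` (`exists_level`), built by adding ears. Every vertex other than `s`, `t` has both
lower and higher neighbours, and every face has a local maximum on its boundary; counting with the
inequality above shows that around each vertex the upward edges are consecutive and that each face
has a single local maximum (`exists_stMap`).

*Sweep.* It follows that the edges, other than `s t`, crossing a level between two consecutive
vertices form a left-to-right list, which changes at a vertex by replacing the consecutive
incoming edges by the outgoing ones (`StMap.exists_sweep`). Every vertex has at most three of each.

*Coordinates.* The vertex number `k` is placed at the height `3 ^ n + 3 ^ (n - 1) + ⋯` (`k` terms).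
The outgoing edges of a vertex leave with horizontal shift `-1`, `0`, `1` per unit of height, from
left to right, and keep going up to the height of their upper ends. The upper end is put on the
middle one of its incoming edges, which is therefore straight; the others, at most one on each side,
reach it by a horizontal segment. Since each strip is three times as high as the next, a gap
between two edges at the top of a strip does not close in the next one (`Sweep.Q_lt_step`), so the
order of the lists persists and the drawing is planar (`Sweep.curve_inter`). All of it lies in the
cone `|x| ≤ y` above `s`, and `s t` is drawn around it with two bends.

*Count.* There are at most `m - (n - 1) + 1` bends (`Sweep.totalBends_le`), and `m ≤ 2 n`, so the
total is at most `n + 2`.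
-/

/-!
Common definitions: polylines, octilinear drawings, planarity, triconnectivity.
-/

/-- A polyline: a sequence of `len + 1` points `pt 0, pt 1, …, pt len`,
consisting of `len ≥ 1` segments. (Values of `pt` beyond `len` are irrelevant.) -/
structure Polyline where
  len : ℕ
  len_pos : 1 ≤ len
  pt : ℕ → ℝ × ℝ

namespace Polyline

/-- The number of bends of a polyline (its interior points `pt 1, …, pt (len-1)`). -/
def bends (P : Polyline) : ℕ := P.len - 1

/-- Piecewise-linear parametrization of the polyline on the interval `[0, len]`. -/
noncomputable def param (P : Polyline) (s : ℝ) : ℝ × ℝ :=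
  P.pt ⌊s⌋.toNat + (s - (⌊s⌋.toNat : ℝ)) • (P.pt (⌊s⌋.toNat + 1) - P.pt ⌊s⌋.toNat)

/-- The image (trace) of the polyline in the plane. -/
noncomputable def image (P : Polyline) : Set (ℝ × ℝ) :=
  P.param '' Set.Icc 0 (P.len : ℝ)

/-- The polyline is a simple curve. -/
def Simple (P : Polyline) : Prop :=
  Set.InjOn P.param (Set.Icc 0 (P.len : ℝ))

/-- Every segment is nondegenerate, and no two consecutive segments are collinear. -/
def Proper (P : Polyline) : Prop :=
  (∀ i < P.len, P.pt i ≠ P.pt (i + 1)) ∧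
  (∀ i, i + 1 < P.len → ¬ Collinear ℝ ({P.pt i, P.pt (i + 1), P.pt (i + 2)} : Set (ℝ × ℝ)))

/-- The segment from `a` to `b` is horizontal, vertical, or diagonal at `45°`. -/
def OctiSeg (a b : ℝ × ℝ) : Prop :=
  b.2 - a.2 = 0 ∨ b.1 - a.1 = 0 ∨ b.2 - a.2 = b.1 - a.1 ∨ b.2 - a.2 = -(b.1 - a.1)

/-- The polyline is octilinear: proper, with all segments in octilinear directions. -/
def Octilinear (P : Polyline) : Prop :=
  P.Proper ∧ ∀ i < P.len, OctiSeg (P.pt i) (P.pt (i + 1))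

end Polyline

/-- Embedding of the integer grid into the real plane. -/
def toR (p : ℤ × ℤ) : ℝ × ℝ := ((p.1 : ℝ), (p.2 : ℝ))

/-- A polyline drawing of a simple graph `G` in the plane:
an injective placement of the vertices and, for each edge, a polyline whose
endpoints are the points of the edge's endvertices, with nondegenerate segments
and no two consecutive segments collinear. -/
structure PolyDrawing {V : Type*} (G : SimpleGraph V) where
  pos : V → ℝ × ℝ
  inj : Function.Injective pos
  poly : Sym2 V → Polyline
  ends : ∀ u v, G.Adj u v →
    ({(poly s(u, v)).pt 0, (poly s(u, v)).pt (poly s(u, v)).len} : Set (ℝ × ℝ)) =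
      {pos u, pos v}
  proper : ∀ e ∈ G.edgeSet, (poly e).Proper

/-- A polyline drawing is planar: every edge-polyline is a simple curve meeting the
vertex points exactly in its two endpoints, and polylines of distinct edges intersect
only in images of common endvertices. -/
def PolyDrawing.IsPlanar {V : Type*} {G : SimpleGraph V} (D : PolyDrawing G) : Prop :=
  (∀ e ∈ G.edgeSet, (D.poly e).Simple) ∧
  (∀ u v, G.Adj u v →
    (D.poly s(u, v)).image ∩ Set.range D.pos = {D.pos u, D.pos v}) ∧
  (∀ e ∈ G.edgeSet, ∀ e' ∈ G.edgeSet, e ≠ e' →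
    (D.poly e).image ∩ (D.poly e').image ⊆ D.pos '' {w | w ∈ e ∧ w ∈ e'})

/-- A simple graph is planar if it admits a planar polyline drawing in `ℝ²`. -/
def GraphPlanar {V : Type*} (G : SimpleGraph V) : Prop :=
  ∃ D : PolyDrawing G, D.IsPlanar

/-- An octilinear drawing of a simple graph `G`: vertices are placed injectively on the
integer grid and each edge is drawn as an octilinear polyline between its endvertices. -/
structure OctiDrawing {V : Type*} (G : SimpleGraph V) where
  pos : V → ℤ × ℤ
  inj : Function.Injective pos
  poly : Sym2 V → Polyline
  ends : ∀ u v, G.Adj u v →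
    ({(poly s(u, v)).pt 0, (poly s(u, v)).pt (poly s(u, v)).len} : Set (ℝ × ℝ)) =
      {toR (pos u), toR (pos v)}
  octi : ∀ e ∈ G.edgeSet, (poly e).Octilinear

/-- An octilinear drawing is planar: every edge-polyline is a simple curve meeting the
vertex points exactly in its two endpoints, and polylines of distinct edges intersect
only in images of common endvertices. -/
def OctiDrawing.IsPlanar {V : Type*} {G : SimpleGraph V} (D : OctiDrawing G) : Prop :=
  (∀ e ∈ G.edgeSet, (D.poly e).Simple) ∧
  (∀ u v, G.Adj u v →
    (D.poly s(u, v)).image ∩ Set.range (fun w => toR (D.pos w)) =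
      {toR (D.pos u), toR (D.pos v)}) ∧
  (∀ e ∈ G.edgeSet, ∀ e' ∈ G.edgeSet, e ≠ e' →
    (D.poly e).image ∩ (D.poly e').image ⊆
      (fun w => toR (D.pos w)) '' {w | w ∈ e ∧ w ∈ e'})

/-- The total number of bends of an octilinear drawing. -/
noncomputable def OctiDrawing.totalBends {V : Type*} [Fintype V] {G : SimpleGraph V}
    (D : OctiDrawing G) : ℕ :=
  ∑ e ∈ G.edgeSet.toFinite.toFinset, (D.poly e).bends

/-- The union of the images of the polylines of a set `S` of edges. -/
noncomputable def edgesImage {V : Type*} {G : SimpleGraph V} (D : OctiDrawing G)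
    (S : Set (Sym2 V)) : Set (ℝ × ℝ) :=
  ⋃ e ∈ S, (D.poly e).image

/-- The interior (in the drawing `D`) of the closed curve formed by the edges in `S`:
the union of the bounded connected components of the complement of the curve. -/
noncomputable def interiorOf {V : Type*} {G : SimpleGraph V} (D : OctiDrawing G)
    (S : Set (Sym2 V)) : Set (ℝ × ℝ) :=
  {z | z ∉ edgesImage D S ∧ Bornology.IsBounded (connectedComponentIn (edgesImage D S)ᶜ z)}

/-- A graph is triconnected if it has at least `4` vertices and deleting
any at most `2` vertices leaves it connected. -/
def Triconnected {V : Type*} [Fintype V] (G : SimpleGraph V) : Prop :=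
  4 ≤ Fintype.card V ∧ ∀ S : Set V, S.ncard ≤ 2 → (G.induce Sᶜ).Connected

/-- The maximum degree of `G` is at most `k`. -/
def MaxDegLE {V : Type*} (G : SimpleGraph V) (k : ℕ) : Prop :=
  ∀ v, (G.neighborSet v).ncard ≤ k

namespace OctiProof

/-! ### Potentials of a flow on a set of non-crossing segments -/

/-- The abscissa at height `h` of the segment that starts at height `l`, at abscissa `ξ l`,
and has inverse slope `m`. -/
def absc (ξ : ℝ → ℝ) (l m h : ℝ) : ℝ := ξ l + m * (h - l)

/-- Total flow through the segments crossing the height `h` strictly to the left of the node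
at that height. -/
noncomputable def leftFlow {A : Type*} [Fintype A] (ξ : ℝ → ℝ) (yl yh m c : A → ℝ) (h : ℝ) : ℝ :=
  by classical exact
    ∑ b : A, if yl b < h ∧ h < yh b ∧ absc ξ (yl b) (m b) h < ξ h then c b else 0

/-- An affine function without zeros in an open interval has a constant sign there. -/
lemma affine_sign {p q α β : ℝ} (hpq : p < q) (h0 : ∀ h, p < h → h < q → α + β * h ≠ 0) :
    (∀ h, p < h → h < q → α + β * h < 0) ∨ (∀ h, p < h → h < q → 0 < α + β * h) := by
  have hc : ContinuousOn (fun h : ℝ => α + β * h) (Set.Ioo p q) := by fun_prop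
  have hmid : (p + q) / 2 ∈ Set.Ioo p q := by constructor <;> linarith
  rcases lt_or_gt_of_ne (h0 _ hmid.1 hmid.2) with hm | hm
  · left
    intro h h1 h2
    by_contra hcon
    have hcon' : 0 < α + β * h := lt_of_le_of_ne (not_lt.mp hcon) (Ne.symm (h0 h h1 h2))
    have := isPreconnected_Ioo.intermediate_value hmid (show h ∈ Set.Ioo p q from ⟨h1, h2⟩) hc
    obtain ⟨z, hz, hz0⟩ := this (show (0:ℝ) ∈ Set.Icc _ _ from ⟨hm.le, hcon'.le⟩)
    exact h0 z hz.1 hz.2 hz0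
  · right
    intro h h1 h2
    by_contra hcon
    have hcon' : α + β * h < 0 := lt_of_le_of_ne (not_lt.mp hcon) (h0 h h1 h2)
    have := isPreconnected_Ioo.intermediate_value (show h ∈ Set.Ioo p q from ⟨h1, h2⟩) hmid hc
    obtain ⟨z, hz, hz0⟩ := this (show (0:ℝ) ∈ Set.Icc _ _ from ⟨hcon'.le, hm.le⟩)
    exact h0 z hz.1 hz.2 hz0

/-- Weak sign of an affine function at the ends of an interval. -/
lemma affine_end {p q α β : ℝ} (hpq : p < q) (h0 : ∀ h, p < h → h < q → α + β * h < 0) :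
    α + β * p ≤ 0 ∧ α + β * q ≤ 0 := by
  constructor
  · by_contra hcon
    push Not at hcon
    by_cases hβ : 0 ≤ β
    · have := h0 ((p + q) / 2) (by linarith) (by linarith)
      nlinarith
    · push Not at hβ
      have h1 : 0 < (α + β * p) / (-β) := div_pos hcon (by linarith)
      have h2 : 0 < min ((α + β * p) / (-β)) ((q - p) / 2) := lt_min h1 (by linarith)
      have := h0 (p + min ((α + β * p) / (-β)) ((q - p) / 2)) (by linarith)
        (by have := min_le_right ((α + β * p) / (-β)) ((q - p) / 2); linarith)
      have h3 : min ((α + β * p) / (-β)) ((q - p) / 2) * (-β) ≤ α + β * p := by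
        rw [← le_div_iff₀ (by linarith)]; exact min_le_left _ _
      nlinarith
  · by_contra hcon
    push Not at hcon
    by_cases hβ : β ≤ 0
    · have := h0 ((p + q) / 2) (by linarith) (by linarith)
      nlinarith
    · push Not at hβ
      have h1 : 0 < (α + β * q) / β := div_pos hcon (by linarith)
      have h2 : 0 < min ((α + β * q) / β) ((q - p) / 2) := lt_min h1 (by linarith)
      have := h0 (q - min ((α + β * q) / β) ((q - p) / 2))
        (by have := min_le_right ((α + β * q) / β) ((q - p) / 2); linarith) (by linarith)
      have h3 : min ((α + β * q) / β) ((q - p) / 2) * β ≤ α + β * q := by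
        rw [← le_div_iff₀ (by linarith)]; exact min_le_left _ _
      nlinarith

/-- Pointwise count behind `leftFlow_transport`. Going up, the segment `b` enters the open region
to the left of the segment `a` as often as it leaves it; entering and leaving happen at the
endpoints of `b` or through the bottom and top of the region. The quantities `lb, hb, mb` (resp.
`la, ha, ma`) are the lower height, upper height and inverse slope of `b` (resp. `a`). -/
lemma region_count (ξ : ℝ → ℝ) {la ha ma lb hb mb : ℝ} (hla : la < ha) (hlb : lb < hb)
    (hxa : absc ξ la ma ha = ξ ha) (hxb : absc ξ lb mb hb = ξ hb)
    (hnc : ∀ h, la ≤ h → h ≤ ha → lb ≤ h → h ≤ hb → absc ξ la ma h = absc ξ lb mb h →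
      (h = la ∨ h = ha) ∧ (h = lb ∨ h = hb)) (c : ℝ) :
    (if la < hb ∧ hb < ha ∧ ξ hb < absc ξ la ma hb then c else 0)
      - (if la < lb ∧ lb < ha ∧ ξ lb < absc ξ la ma lb then c else 0)
    = ((if lb < la ∧ la < hb ∧ absc ξ lb mb la < ξ la then c else 0)
        + (if lb = la ∧ mb < ma then c else 0))
      - ((if lb < ha ∧ ha < hb ∧ absc ξ lb mb ha < ξ ha then c else 0)
        + (if hb = ha ∧ ma < mb then c else 0)) := by
  by_cases hov : max la lb < min ha hb
  swap
  · have hno : hb ≤ la ∨ ha ≤ lb := by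
      rw [not_lt, min_le_iff, le_max_iff, le_max_iff] at hov
      rcases hov with (h | h) | (h | h)
      · linarith
      · exact Or.inr h
      · exact Or.inl h
      · linarith
    rcases hno with h | h
    · rw [if_neg (by intro h'; linarith [h'.1]), if_neg (by intro h'; linarith [h'.1]),
        if_neg (by intro h'; linarith [h'.2.1]), if_neg (by intro h'; linarith [h'.1]),
        if_neg (by intro h'; linarith [h'.2.1]), if_neg (by intro h'; linarith [h'.1])]
      simp
    · rw [if_neg (by intro h'; linarith [h'.2.1]), if_neg (by intro h'; linarith [h'.2.1]),
        if_neg (by intro h'; linarith [h'.1]), if_neg (by intro h'; linarith [h'.1]),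
        if_neg (by intro h'; linarith [h'.1]), if_neg (by intro h'; linarith [h'.1])]
      simp
  have hov' := hov
  simp only [max_lt_iff, lt_min_iff] at hov'
  obtain ⟨⟨-, h2⟩, h1, -⟩ := hov'
  -- the difference of the two abscissas, written as `α + β h`
  set α := (ξ lb - mb * lb) - (ξ la - ma * la) with hα
  set β := mb - ma with hβ
  have key : ∀ h, absc ξ lb mb h - absc ξ la ma h = α + β * h := by
    intro h; simp only [absc, hα, hβ]; ring
  have hla' : absc ξ la ma la = ξ la := by simp [absc]
  have hlb' : absc ξ lb mb lb = ξ lb := by simp [absc]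
  have hne : ∀ h, max la lb < h → h < min ha hb → α + β * h ≠ 0 := by
    intro h e1 e2 e0
    simp only [max_lt_iff, lt_min_iff] at e1 e2
    have := hnc h e1.1.le e2.1.le e1.2.le e2.2.le (by linarith [key h])
    rcases this.1 with e | e <;> linarith [e1.1, e2.1]
  rcases affine_sign hov hne with hs | hs
  · have hE := affine_end hov hs
    have B1 : (lb < la ∧ la < hb ∧ absc ξ lb mb la < ξ la) ↔ lb < la := by
      refine ⟨fun h => h.1, fun h => ⟨h, h1, ?_⟩⟩
      rw [max_eq_left h.le] at hE
      refine lt_of_le_of_ne (by linarith [key la, hE.1]) fun e => ?_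
      have := (hnc la le_rfl hla.le h.le h1.le (by rw [hla', e])).2
      rcases this with e | e <;> linarith
    have B2 : (lb = la ∧ mb < ma) ↔ lb = la := by
      refine ⟨fun h => h.1, fun h => ⟨h, ?_⟩⟩
      have := hs ((max la lb + min ha hb) / 2) (by linarith) (by linarith)
      have k := key la
      rw [← h, hlb', h, hla', sub_self] at k
      have hm : la < (max la lb + min ha hb) / 2 := by
        have := le_max_left la lb; linarith
      have : β * ((max la lb + min ha hb) / 2 - la) < 0 := by nlinarith
      have : β < 0 := by
        by_contra hcon; push Not at hcon
        nlinarith [mul_nonneg hcon (sub_nonneg.2 hm.le)]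
      linarith
    have W1 : (la < lb ∧ lb < ha ∧ ξ lb < absc ξ la ma lb) ↔ la < lb := by
      refine ⟨fun h => h.1, fun h => ⟨h, h2, ?_⟩⟩
      rw [max_eq_right h.le] at hE
      refine lt_of_le_of_ne (by linarith [key lb, hE.1]) fun e => ?_
      have := (hnc lb h.le h2.le le_rfl hlb.le (by rw [hlb', e])).1
      rcases this with e | e <;> linarith
    have T1 : (lb < ha ∧ ha < hb ∧ absc ξ lb mb ha < ξ ha) ↔ ha < hb := by
      refine ⟨fun h => h.2.1, fun h => ⟨h2, h, ?_⟩⟩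
      rw [min_eq_left h.le] at hE
      refine lt_of_le_of_ne (by linarith [key ha, hE.2]) fun e => ?_
      have := (hnc ha hla.le le_rfl h2.le h.le (by rw [hxa, e])).2
      rcases this with e | e <;> linarith
    have T2 : (hb = ha ∧ ma < mb) ↔ hb = ha := by
      refine ⟨fun h => h.1, fun h => ⟨h, ?_⟩⟩
      have := hs ((max la lb + min ha hb) / 2) (by linarith) (by linarith)
      have k := key ha
      rw [← h, hxb, h, hxa, sub_self] at k
      have hm : (max la lb + min ha hb) / 2 < ha := by
        have := min_le_left ha hb; linarith
      have : 0 < β * (ha - (max la lb + min ha hb) / 2) := by nlinarith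
      have : 0 < β := by
        by_contra hcon; push Not at hcon
        nlinarith [mul_nonneg (neg_nonneg.2 hcon) (sub_nonneg.2 hm.le)]
      linarith
    have W2 : (la < hb ∧ hb < ha ∧ ξ hb < absc ξ la ma hb) ↔ hb < ha := by
      refine ⟨fun h => h.2.1, fun h => ⟨h1, h, ?_⟩⟩
      rw [min_eq_right h.le] at hE
      refine lt_of_le_of_ne (by linarith [key hb, hE.2]) fun e => ?_
      have := (hnc hb h1.le h.le hlb.le le_rfl (by rw [hxb, e])).1
      rcases this with e | e <;> linarith
    simp only [B1, B2, W1, T1, T2, W2]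
    rcases lt_trichotomy la lb with e | e | e <;> rcases lt_trichotomy ha hb with e' | e' | e' <;>
      split_ifs <;> first | ring1 | (exfalso; linarith) | skip
    all_goals grind
  · have hs' : ∀ h, max la lb < h → h < min ha hb → (-α) + (-β) * h < 0 := by
      intro h e1 e2; linarith [hs h e1 e2]
    have hE := affine_end hov hs'
    have B1 : ¬ (lb < la ∧ la < hb ∧ absc ξ lb mb la < ξ la) := by
      rintro ⟨h, -, h'⟩
      rw [max_eq_left h.le] at hE
      linarith [key la, hE.1]
    have B2 : ¬ (lb = la ∧ mb < ma) := by
      rintro ⟨h, h'⟩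
      have := hs ((max la lb + min ha hb) / 2) (by linarith) (by linarith)
      have k := key la
      rw [← h, hlb', h, hla', sub_self] at k
      have hm : la < (max la lb + min ha hb) / 2 := by
        have := le_max_left la lb; linarith
      have hβ0 : β < 0 := by linarith
      nlinarith [mul_pos (neg_pos.2 hβ0) (sub_pos.2 hm)]
    have W1 : ¬ (la < lb ∧ lb < ha ∧ ξ lb < absc ξ la ma lb) := by
      rintro ⟨h, -, h'⟩
      rw [max_eq_right h.le] at hE
      linarith [key lb, hE.1]
    have T1 : ¬ (lb < ha ∧ ha < hb ∧ absc ξ lb mb ha < ξ ha) := by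
      rintro ⟨-, h, h'⟩
      rw [min_eq_left h.le] at hE
      linarith [key ha, hE.2]
    have T2 : ¬ (hb = ha ∧ ma < mb) := by
      rintro ⟨h, h'⟩
      have := hs ((max la lb + min ha hb) / 2) (by linarith) (by linarith)
      have k := key ha
      rw [← h, hxb, h, hxa, sub_self] at k
      have hm : (max la lb + min ha hb) / 2 < ha := by
        have := min_le_left ha hb; linarith
      have hβ0 : 0 < β := by linarith
      nlinarith [mul_pos hβ0 (sub_pos.2 hm)]
    have W2 : ¬ (la < hb ∧ hb < ha ∧ ξ hb < absc ξ la ma hb) := by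
      rintro ⟨-, h, h'⟩
      rw [min_eq_right h.le] at hE
      linarith [key hb, hE.2]
    simp only [B1, B2, W1, T1, T2, W2, if_false]
    ring

open Classical in
/-- The flow passing to the left of a segment is the same just above its lower end and just below
its upper end: a flow is conserved at every node of the region to the left of the segment, and no
other segment crosses it. -/
lemma leftFlow_transport {A : Type*} [Fintype A] (ξ : ℝ → ℝ) (yl yh m c : A → ℝ)
    (hlt : ∀ a, yl a < yh a) (hhi : ∀ a, absc ξ (yl a) (m a) (yh a) = ξ (yh a))
    (hnc : ∀ a b, a ≠ b → ∀ h, yl a ≤ h → h ≤ yh a → yl b ≤ h → h ≤ yh b →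
      absc ξ (yl a) (m a) h = absc ξ (yl b) (m b) h →
      (h = yl a ∨ h = yh a) ∧ (h = yl b ∨ h = yh b))
    (hcons : ∀ h, (∑ b, if yh b = h then c b else 0) = ∑ b, if yl b = h then c b else 0)
    (a : A) :
    leftFlow ξ yl yh m c (yl a) + (∑ b, if yl b = yl a ∧ m b < m a then c b else 0)
      = leftFlow ξ yl yh m c (yh a) + ∑ b, if yh b = yh a ∧ m a < m b then c b else 0 := by
  have hw : ∀ w : ℝ → Prop, (∑ b, if w (yh b) then c b else 0) = ∑ b, if w (yl b) then c b else 0 := by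
    intro w
    have expand : ∀ y : A → ℝ, (∀ b, y b ∈ Finset.univ.image yh ∪ Finset.univ.image yl) →
        (∑ b, if w (y b) then c b else 0) =
        ∑ h ∈ (Finset.univ.image yh ∪ Finset.univ.image yl),
          (if w h then ∑ b, (if y b = h then c b else 0) else 0) := by
      intro y hy
      have : ∀ h, (if w h then ∑ b, (if y b = h then c b else 0) else 0)
          = ∑ b, (if y b = h then (if w h then c b else 0) else 0) := by
        intro h
        by_cases hwh : w h <;> simp [hwh]
      simp only [this]
      rw [Finset.sum_comm]
      refine Finset.sum_congr rfl fun b _ => ?_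
      rw [Finset.sum_ite_eq, if_pos (hy b)]
    rw [expand yh (by simp), expand yl (by simp)]
    simp only [hcons]
  have h1 := hw (fun h => yl a < h ∧ h < yh a ∧ ξ h < absc ξ (yl a) (m a) h)
  simp only [leftFlow]
  rw [← sub_eq_zero, ← Finset.sum_sub_distrib] at h1
  rw [← sub_eq_zero, ← Finset.sum_add_distrib, ← Finset.sum_add_distrib, ← Finset.sum_sub_distrib]
  refine Eq.trans (Finset.sum_congr rfl fun b _ => ?_) h1
  by_cases hab : a = b
  · subst hab
    simp
  · have := (region_count ξ (hlt a) (hlt b) (hhi a) (hhi b) (hnc a b hab) (c b)).symm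
    convert this

end OctiProof

namespace OctiProof

/-! ### The potential of a flow on a planar set of segments -/

/-- A finite set of oriented, pairwise non-crossing segments, closed under reversal. -/
structure SegSys (B : Type*) where
  st : B → ℝ × ℝ
  en : B → ℝ × ℝ
  rev : B → B
  rev_rev : ∀ b, rev (rev b) = b
  st_rev : ∀ b, st (rev b) = en b
  ne : ∀ b, st b ≠ en b
  nc : ∀ b b', b' ≠ b → b' ≠ rev b → ∀ t t' : ℝ, 0 ≤ t → t ≤ 1 → 0 ≤ t' → t' ≤ 1 →
    st b + t • (en b - st b) = st b' + t' • (en b' - st b') →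
    (t = 0 ∨ t = 1) ∧ (t' = 0 ∨ t' = 1)

namespace SegSys
variable {B : Type*} (S : SegSys B)

lemma en_rev (b : B) : S.en (S.rev b) = S.st b := by
  rw [← S.st_rev, S.rev_rev]

/-- Inverse slope of a segment. -/
noncomputable def slp (b : B) : ℝ := ((S.en b).1 - (S.st b).1) / ((S.en b).2 - (S.st b).2)

lemma slp_rev (b : B) : S.slp (S.rev b) = S.slp b := by
  unfold slp
  rw [S.en_rev, S.st_rev, ← neg_sub, ← neg_sub (S.en b).2, neg_div_neg_eq]

open Classical in
/-- Position of a segment in the left-to-right order around its starting point: upward segments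
come first. -/
noncomputable def key (b : B) : Bool ×ₗ ℝ :=
  toLex (decide ((S.en b).2 < (S.st b).2), S.slp b)

lemma key_lt (b b' : B) : S.key b < S.key b' ↔
    (¬ (S.en b).2 < (S.st b).2 ∧ (S.en b').2 < (S.st b').2) ∨
    (((S.en b).2 < (S.st b).2 ↔ (S.en b').2 < (S.st b').2) ∧ S.slp b < S.slp b') := by
  unfold key
  rw [Prod.Lex.toLex_lt_toLex]
  by_cases h1 : (S.en b).2 < (S.st b).2 <;> by_cases h2 : (S.en b').2 < (S.st b').2 <;>
    simp [h1, h2]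

lemma key_inj (hy : ∀ b, (S.st b).2 ≠ (S.en b).2) {b b' : B} (hst : S.st b = S.st b')
    (hk : S.key b = S.key b') : b = b' := by
  by_contra hne
  have hk' : ((S.en b).2 < (S.st b).2 ↔ (S.en b').2 < (S.st b').2) ∧ S.slp b = S.slp b' := by
    unfold key at hk
    have := toLex_inj.1 hk
    simpa using this
  obtain ⟨hs, hm⟩ := hk'
  have hr : b' ≠ S.rev b := by
    rintro rfl
    rw [S.st_rev] at hst
    exact S.ne b hst
  set u := (S.en b).2 - (S.st b).2 with hu
  set u' := (S.en b').2 - (S.st b').2 with hu'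
  have hu0 : u ≠ 0 := sub_ne_zero.2 (hy b).symm
  have hu0' : u' ≠ 0 := sub_ne_zero.2 (hy b').symm
  have hx : (S.en b).1 - (S.st b).1 = S.slp b * u := by
    simp only [slp]; rw [← hu]; field_simp
  have hx' : (S.en b').1 - (S.st b').1 = S.slp b * u' := by
    rw [hm]; simp only [slp]; rw [← hu']; field_simp
  have hpos : 0 < |u| := abs_pos.2 hu0
  have hpos' : 0 < |u'| := abs_pos.2 hu0'
  have habs : u * |u'| = u' * |u| := by
    have h1 := hy b; have h2 := hy b'
    rcases lt_or_gt_of_ne hu0 with h | h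
    · have : u' < 0 := by
        have : (S.en b').2 < (S.st b').2 := hs.1 (by linarith)
        linarith
      rw [abs_of_neg h, abs_of_neg this]; ring
    · have : 0 < u' := by
        have : ¬ (S.en b').2 < (S.st b').2 := fun e => by linarith [hs.2 e]
        exact lt_of_le_of_ne (by linarith) hu0'.symm
      rw [abs_of_pos h, abs_of_pos this]; ring
  have hsum : 0 < |u| + |u'| := by positivity
  have h0 : |u'| / (|u| + |u'|) * u = |u| / (|u| + |u'|) * u' := by
    field_simp; linarith
  have := S.nc b b' (Ne.symm hne) hr (|u'| / (|u| + |u'|)) (|u| / (|u| + |u'|)) (by positivity)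
    (by rw [div_le_one hsum]; linarith) (by positivity)
    (by rw [div_le_one hsum]; linarith) (by
      rw [hst]
      congr 1
      ext
      · simp only [Prod.smul_fst, Prod.fst_sub, smul_eq_mul]
        rw [← hst, hx, hst, hx']
        linear_combination (S.slp b) * h0
      · simp only [Prod.smul_snd, Prod.snd_sub, smul_eq_mul]
        rw [← hst, ← hu, hst, ← hu']
        exact h0)
  rcases this.1 with h | h
  · have : 0 < |u'| / (|u| + |u'|) := by positivity
    linarith
  · rw [div_eq_one_iff_eq hsum.ne'] at h; linarith

open Classical in
/-- A flow on the segments has a potential, provided that the heights of the nodes are distinct. -/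
lemma potential_aux [Fintype B] (hy : ∀ b, (S.st b).2 ≠ (S.en b).2)
    (hh : ∀ b b', (S.st b).2 = (S.st b').2 → S.st b = S.st b')
    (z : B → ℝ) (hz : ∀ b, z (S.rev b) = - z b)
    (hcons : ∀ b0, (∑ b, if S.st b = S.st b0 then z b else 0) = 0) :
    ∃ Λ : ℝ × ℝ → ℝ, ∀ b,
      Λ (S.st (S.rev b)) +
        (∑ b', if S.st b' = S.st (S.rev b) ∧ S.key b' < S.key (S.rev b) then z b' else 0)
      = Λ (S.st b) + (∑ b', if S.st b' = S.st b ∧ S.key b' < S.key b then z b' else 0) + z b := by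
  -- the abscissa of the node at a given height
  obtain ⟨ξ, hξ⟩ : ∃ ξ : ℝ → ℝ, ∀ b, ξ (S.st b).2 = (S.st b).1 := by
    refine ⟨fun h => if hb : ∃ b, (S.st b).2 = h then (S.st hb.choose).1 else 0, fun b => ?_⟩
    have hb : ∃ b', (S.st b').2 = (S.st b).2 := ⟨b, rfl⟩
    simp only [hb, dif_pos]
    rw [hh _ _ hb.choose_spec]
  have hheq : ∀ b b', S.st b = S.st b' ↔ (S.st b).2 = (S.st b').2 :=
    fun b b' => ⟨fun h => by rw [h], hh b b'⟩
  let A := {b : B // (S.st b).2 < (S.en b).2}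
  have hdown : ∀ b, (S.en b).2 < (S.st b).2 ↔ ¬ (S.st b).2 < (S.en b).2 := fun b =>
    ⟨fun h => h.not_gt, fun h => lt_of_le_of_ne (not_lt.1 h) (hy b).symm⟩
  -- a sum over all segments, split into upward segments and reverses of upward segments
  have hsplit : ∀ w : B → ℝ, ∑ b, w b = ∑ a : A, (w a.1 + w (S.rev a.1)) := by
    intro w
    rw [Finset.sum_add_distrib, ← Fintype.sum_subtype_add_sum_subtype
      (fun b => (S.st b).2 < (S.en b).2) w]
    congr 1
    let E : A ≃ {b : B // ¬ (S.st b).2 < (S.en b).2} :=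
      { toFun := fun a => ⟨S.rev a.1, by rw [S.st_rev, S.en_rev]; exact a.2.not_gt⟩
        invFun := fun b => ⟨S.rev b.1, by rw [S.st_rev, S.en_rev]; exact (hdown _).2 b.2⟩
        left_inv := fun a => Subtype.ext (S.rev_rev _)
        right_inv := fun a => Subtype.ext (S.rev_rev _) }
    exact (Fintype.sum_equiv E _ _ fun a => rfl).symm
  have hcons' : ∀ h, (∑ a : A, if (S.en a.1).2 = h then z a.1 else 0)
      = ∑ a : A, if (S.st a.1).2 = h then z a.1 else 0 := by
    intro h
    by_cases hb : ∃ b, (S.st b).2 = h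
    · obtain ⟨b0, rfl⟩ := hb
      have := hcons b0
      simp only [hheq] at this
      rw [hsplit, Finset.sum_add_distrib] at this
      simp only [S.st_rev, hz] at this
      have h2 : (∑ a : A, if (S.en a.1).2 = (S.st b0).2 then - z a.1 else 0)
          = - ∑ a : A, if (S.en a.1).2 = (S.st b0).2 then z a.1 else 0 := by
        rw [← Finset.sum_neg_distrib]
        refine Finset.sum_congr rfl fun a _ => ?_
        split_ifs <;> simp
      rw [h2] at this
      linarith
    · rw [Finset.sum_eq_zero, Finset.sum_eq_zero]
      · intro a _
        rw [if_neg]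
        exact fun e => hb ⟨_, e⟩
      · intro a _
        rw [if_neg]
        exact fun e => hb ⟨S.rev a.1, by rw [S.st_rev, e]⟩
  have hxen : ∀ b, ξ (S.en b).2 = (S.en b).1 := fun b => by rw [← S.st_rev, hξ]
  have htr := leftFlow_transport (A := A) ξ (fun a => (S.st a.1).2) (fun a => (S.en a.1).2)
    (fun a => S.slp a.1) (fun a => z a.1) (fun a => a.2)
    (fun a => by
      have := a.2
      simp only [absc, hξ, hxen, slp]
      have : (S.en a.1).2 - (S.st a.1).2 ≠ 0 := by linarith
      field_simp; ring)
    (fun a b hab h e1 e2 e3 e4 e => by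
      have ha := a.2
      have hb := b.2
      have ha' : (S.en a.1).2 - (S.st a.1).2 ≠ 0 := by linarith
      have hb' : (S.en b.1).2 - (S.st b.1).2 ≠ 0 := by linarith
      have hr : b.1 ≠ S.rev a.1 := by
        intro hr
        rw [hr, S.st_rev, S.en_rev] at hb
        exact hb.not_gt ha
      simp only [absc, hξ, slp] at e
      have := S.nc a.1 b.1 (fun h => hab (Subtype.ext h.symm)) hr
        ((h - (S.st a.1).2) / ((S.en a.1).2 - (S.st a.1).2))
        ((h - (S.st b.1).2) / ((S.en b.1).2 - (S.st b.1).2))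
        (div_nonneg (by linarith) (by linarith))
        ((div_le_one (by linarith)).2 (by linarith))
        (div_nonneg (by linarith) (by linarith))
        ((div_le_one (by linarith)).2 (by linarith)) (by
          ext
          · simp only [Prod.fst_add, Prod.smul_fst, Prod.fst_sub, smul_eq_mul]
            linear_combination e
          · simp only [Prod.snd_add, Prod.smul_snd, Prod.snd_sub, smul_eq_mul]
            rw [div_mul_cancel₀ _ ha', div_mul_cancel₀ _ hb']
            ring)
      have k : ∀ p q : ℝ, q - p ≠ 0 → ((h - p) / (q - p) = 0 ∨ (h - p) / (q - p) = 1) →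
          h = p ∨ h = q := by
        intro p q hpq h'
        rcases h' with h' | h'
        · rw [div_eq_zero_iff] at h'
          rcases h' with h' | h'
          · left; linarith
          · exact absurd h' hpq
        · rw [div_eq_one_iff_eq hpq] at h'
          right; linarith
      exact ⟨k _ _ ha' this.1, k _ _ hb' this.2⟩)
    hcons'
  refine ⟨fun p => leftFlow (A := A) ξ (fun a => (S.st a.1).2) (fun a => (S.en a.1).2)
    (fun a => S.slp a.1) (fun a => z a.1) p.2, ?_⟩
  have hup : ∀ b, (S.st b).2 < (S.en b).2 →
      leftFlow (A := A) ξ (fun a => (S.st a.1).2) (fun a => (S.en a.1).2)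
        (fun a => S.slp a.1) (fun a => z a.1) (S.st (S.rev b)).2 +
        (∑ b', if S.st b' = S.st (S.rev b) ∧ S.key b' < S.key (S.rev b) then z b' else 0)
      = leftFlow (A := A) ξ (fun a => (S.st a.1).2) (fun a => (S.en a.1).2)
        (fun a => S.slp a.1) (fun a => z a.1) (S.st b).2 +
        (∑ b', if S.st b' = S.st b ∧ S.key b' < S.key b then z b' else 0) + z b := by
    intro b hb
    have h := htr ⟨b, hb⟩
    simp only at h
    have hs1 : (∑ b', if S.st b' = S.st b ∧ S.key b' < S.key b then z b' else 0)
        = ∑ a : A, if (S.st a.1).2 = (S.st b).2 ∧ S.slp a.1 < S.slp b then z a.1 else 0 := by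
      rw [hsplit]
      refine Finset.sum_congr rfl fun a _ => ?_
      rw [if_neg (c := S.st (S.rev a.1) = S.st b ∧ _), add_zero]
      · simp only [hheq, key_lt, hdown, a.2, hb]
        simp
      · rintro ⟨-, hk⟩
        rw [key_lt, hdown, hdown, S.st_rev, S.en_rev] at hk
        have := a.2.not_gt
        tauto
    have hs2 : (∑ b', if S.st b' = S.st (S.rev b) ∧ S.key b' < S.key (S.rev b) then z b' else 0)
        = ∑ a : A, ((if (S.st a.1).2 = (S.en b).2 then z a.1 else 0) +
          (if (S.en a.1).2 = (S.en b).2 ∧ S.slp a.1 < S.slp b then - z a.1 else 0)) := by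
      rw [hsplit]
      refine Finset.sum_congr rfl fun a _ => ?_
      rw [← S.st_rev b, ← S.st_rev a.1]
      simp only [← hheq]
      congr 1
      · simp only [key_lt, S.st_rev, S.en_rev, a.2.not_gt, hb]
        simp
      · simp only [key_lt, S.st_rev, S.en_rev, a.2, hb, slp_rev, hz]
        simp
    rw [hs1, hs2, Finset.sum_add_distrib, ← hcons', ← Finset.sum_add_distrib, h, add_assoc, S.st_rev]
    congr 1
    have hzb : z b = ∑ a : A, if a = ⟨b, hb⟩ then z a.1 else 0 := by
      rw [Finset.sum_ite_eq']; simp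
    rw [hzb, ← Finset.sum_add_distrib]
    refine Finset.sum_congr rfl fun a _ => ?_
    by_cases hab : a = ⟨b, hb⟩
    · subst hab
      simp
    · rw [if_neg hab]
      by_cases hen : (S.en a.1).2 = (S.en b).2
      · have hne : S.slp a.1 ≠ S.slp b := by
          intro hm
          apply hab
          apply Subtype.ext
          have : S.rev a.1 = S.rev b := by
            apply S.key_inj hy
            · rw [hheq, S.st_rev, S.st_rev, hen]
            · unfold key
              rw [slp_rev, slp_rev, hm]
              simp only [S.st_rev, S.en_rev, a.2, hb]
          rw [← S.rev_rev a.1, this, S.rev_rev]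
        rcases lt_or_gt_of_ne hne with h' | h'
        · simp [hen, h', h'.not_gt]
        · simp [hen, h', h'.not_gt]
      · simp [hen]
  intro b
  by_cases hb : (S.st b).2 < (S.en b).2
  · exact hup b hb
  · have := hup (S.rev b) (by rw [S.st_rev, S.en_rev]; exact (hdown b).2 hb)
    rw [S.rev_rev, hz] at this
    linarith

/-- The system of segments sheared by the linear map `(x, y) ↦ (x, y + c x)`. -/
noncomputable def shear (c : ℝ) : SegSys B where
  st b := ((S.st b).1, (S.st b).2 + c * (S.st b).1)
  en b := ((S.en b).1, (S.en b).2 + c * (S.en b).1)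
  rev := S.rev
  rev_rev := S.rev_rev
  st_rev b := by rw [S.st_rev]
  ne b h := by
    have h1 := congrArg Prod.fst h
    have h2 := congrArg Prod.snd h
    simp only at h1 h2
    exact S.ne b (Prod.ext h1 (by rw [h1] at h2; linarith))
  nc b b' h h' t t' a1 a2 a3 a4 e := by
    refine S.nc b b' h h' t t' a1 a2 a3 a4 ?_
    have h1 := congrArg Prod.fst e
    have h2 := congrArg Prod.snd e
    simp only [Prod.fst_add, Prod.smul_fst, Prod.fst_sub, smul_eq_mul, Prod.snd_add,
      Prod.smul_snd, Prod.snd_sub] at h1 h2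
    ext
    · simpa using h1
    · simp only [Prod.snd_add, Prod.smul_snd, Prod.snd_sub, smul_eq_mul]
      linear_combination h2 - c * h1

open Classical in
/-- A planar system of segments carries an order of the segments around each node for which every
flow has a potential. -/
lemma exists_potential [Fintype B] : ∃ key : B → Bool ×ₗ ℝ,
    (∀ b b', S.st b = S.st b' → key b = key b' → b = b') ∧
    ∀ z : B → ℝ, (∀ b, z (S.rev b) = - z b) →
      (∀ b0, (∑ b, if S.st b = S.st b0 then z b else 0) = 0) →
      ∃ Λ : ℝ × ℝ → ℝ, ∀ b,
        Λ (S.st (S.rev b)) +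
          (∑ b', if S.st b' = S.st (S.rev b) ∧ key b' < key (S.rev b) then z b' else 0)
        = Λ (S.st b) + (∑ b', if S.st b' = S.st b ∧ key b' < key b then z b' else 0) + z b := by
  obtain ⟨c, hc⟩ := Infinite.exists_notMem_finset (Finset.univ.image fun q : B × B =>
    ((S.st q.2).2 - (S.st q.1).2) / ((S.st q.1).1 - (S.st q.2).1))
  have hh : ∀ b b', (S.st b).2 + c * (S.st b).1 = (S.st b').2 + c * (S.st b').1 →
      S.st b = S.st b' := by
    intro b b' h
    by_cases hx : (S.st b).1 = (S.st b').1
    · rw [hx] at h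
      exact Prod.ext hx (by linarith)
    · exfalso
      apply hc
      rw [Finset.mem_image]
      refine ⟨(b, b'), Finset.mem_univ _, ?_⟩
      have : (S.st b).1 - (S.st b').1 ≠ 0 := sub_ne_zero.2 hx
      field_simp
      linarith
  have hst : ∀ b b', (S.shear c).st b = (S.shear c).st b' ↔ S.st b = S.st b' := by
    intro b b'
    refine ⟨fun h => hh _ _ (congrArg Prod.snd h), fun h => by simp only [shear, h]⟩
  have hy : ∀ b, ((S.shear c).st b).2 ≠ ((S.shear c).en b).2 := by
    intro b h
    apply S.ne b
    rw [← S.st_rev]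
    apply hh
    rw [S.st_rev]
    exact h
  refine ⟨(S.shear c).key, fun b b' h hk => (S.shear c).key_inj hy ((hst _ _).2 h) hk, ?_⟩
  intro z hz hcons
  obtain ⟨Λ, hΛ⟩ := (S.shear c).potential_aux hy (fun b b' h => (hst _ _).2 (hh _ _ h)) z hz
    (fun b0 => by simp only [hst]; exact hcons b0)
  refine ⟨fun p => Λ (p.1, p.2 + c * p.1), fun b => ?_⟩
  have := hΛ b
  simp only [hst] at this
  exact this

end SegSys
end OctiProof

namespace OctiProof

/-! ### Rotation of the darts around each vertex -/

open Classical in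
/-- The cyclic successor in a finite linear order; partial sums of a family with zero total
change by one term along it. -/
lemma exists_rotation_linear (F : Type*) [Fintype F] [LinearOrder F] :
    ∃ ρ : Equiv.Perm F, (∀ d d', ρ.SameCycle d d') ∧
      ∀ z : F → ℝ, ∑ d, z d = 0 → ∀ d,
        (∑ d', if d' < ρ d then z d' else 0) = (∑ d', if d' < d then z d' else 0) + z d := by
  rcases isEmpty_or_nonempty F with hF | hF
  · exact ⟨1, fun d => (hF.false d).elim, fun z _ d => (hF.false d).elim⟩
  obtain ⟨n, hn⟩ : ∃ n, Fintype.card F = n + 1 :=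
    ⟨_, (Nat.succ_pred_eq_of_pos Fintype.card_pos).symm⟩
  let e : Fin (n + 1) ≃o F := Fintype.orderIsoFinOfCardEq F hn
  refine ⟨(e.symm.toEquiv.trans (finRotate (n + 1))).trans e.toEquiv, ?_, ?_⟩
  · have hpow : ∀ (k : ℕ) (hk : k < n + 1),
        Equiv.Perm.SameCycle ((e.symm.toEquiv.trans (finRotate (n + 1))).trans e.toEquiv) (e 0) (e ⟨k, hk⟩) := by
      intro k
      induction k with
      | zero => intro hk; exact Equiv.Perm.SameCycle.refl _ _
      | succ k ih =>
        intro hk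
        have h := ih (by omega)
        have h2 := Equiv.Perm.sameCycle_apply_right.2 h
        convert h2 using 1
        simp only [Equiv.trans_apply, RelIso.coe_fn_toEquiv, OrderIso.toEquiv_symm,
          finRotate_apply]
        congr 1
        ext
        rw [Fin.val_add_one_of_lt (by rw [Fin.lt_def]; simp; omega)]
        simp
    have h0 : ∀ d, Equiv.Perm.SameCycle ((e.symm.toEquiv.trans (finRotate (n + 1))).trans e.toEquiv) (e 0) d := by
      intro d
      obtain ⟨i, rfl⟩ := e.surjective d
      exact hpow i.1 i.2
    exact fun d d' => (h0 d).symm.trans (h0 d')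
  · intro z hz d
    obtain ⟨i, rfl⟩ := e.surjective d
    have hsum : ∀ w : F → ℝ, ∑ d, w d = ∑ j, w (e j) := fun w =>
      (Fintype.sum_equiv e.toEquiv _ _ fun _ => rfl).symm
    rw [hsum] at hz
    rw [hsum, hsum]
    simp only [Equiv.trans_apply, RelIso.coe_fn_toEquiv, OrderIso.symm_apply_apply,
      finRotate_apply, OrderIso.lt_iff_lt]
    have hzi : z (e i) = ∑ j, if j = i then z (e j) else 0 := by simp
    rw [hzi, ← Finset.sum_add_distrib]
    by_cases hi : i = Fin.last n
    · subst hi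
      rw [Fin.last_add_one]
      simp only [Fin.not_lt_zero, if_false, Finset.sum_const_zero]
      refine hz.symm.trans (Finset.sum_congr rfl fun j _ => ?_)
      rcases (Fin.le_last j).lt_or_eq with h | h
      · simp [h, h.ne]
      · simp [h]
    · refine Finset.sum_congr rfl fun j _ => ?_
      have h1 : ((i + 1 : Fin (n + 1)) : ℕ) = i + 1 := Fin.val_add_one_of_lt (Fin.lt_last_iff_ne_last.2 hi)
      rcases lt_trichotomy j i with h | h | h
      · have : j < i + 1 := by rw [Fin.lt_def, h1]; rw [Fin.lt_def] at h; omega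
        simp [h, this, h.ne]
      · subst h
        have : j < j + 1 := by rw [Fin.lt_def, h1]; omega
        simp [this]
      · have : ¬ j < i + 1 := by rw [Fin.lt_def, h1]; rw [Fin.lt_def] at h; omega
        simp [h.not_gt, this, h.ne']

open Classical in
/-- Gluing of the cyclic orders of the fibres of `base`. -/
lemma exists_rotation {D V K : Type*} [Fintype D] [LinearOrder K] (base : D → V) (key : D → K)
    (hinj : ∀ d d', base d = base d' → key d = key d' → d = d') :
    ∃ σ : Equiv.Perm D, (∀ d, base (σ d) = base d) ∧
      (∀ d d', base d = base d' → σ.SameCycle d d') ∧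
      ∀ z : D → ℝ, (∀ v, (∑ d, if base d = v then z d else 0) = 0) → ∀ d,
        (∑ d', if base d' = base (σ d) ∧ key d' < key (σ d) then z d' else 0)
          = (∑ d', if base d' = base d ∧ key d' < key d then z d' else 0) + z d := by
  let ord : ∀ v, LinearOrder {d // base d = v} := fun v =>
    LinearOrder.lift' (fun d : {d // base d = v} => key d.1)
      (fun a b h => Subtype.ext (hinj _ _ (a.2.trans b.2.symm) h))
  have hlt : ∀ v (a b : {d // base d = v}), a < b ↔ key a.1 < key b.1 := fun v a b => Iff.rfl
  choose ρ hρ1 hρ2 using fun v => exists_rotation_linear {d // base d = v}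
  let E := Equiv.sigmaFiberEquiv base
  let σ : Equiv.Perm D := (E.symm.trans (Equiv.sigmaCongrRight ρ)).trans E
  have hσ : ∀ d, σ d = (ρ (base d) ⟨d, rfl⟩).1 := fun d => rfl
  have hb : ∀ d, base (σ d) = base d := fun d => by rw [hσ]; exact (ρ (base d) ⟨d, rfl⟩).2
  have hσ' : ∀ v (a : {d // base d = v}), σ a.1 = (ρ v a).1 := by
    rintro v ⟨d, rfl⟩; rfl
  refine ⟨σ, hb, ?_, ?_⟩
  · intro d d' h
    have hpow : ∀ (k : ℕ) (a : {x // base x = base d}), (σ ^ k) a.1 = ((ρ (base d) ^ k) a).1 := by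
      intro k
      induction k with
      | zero => intro a; rfl
      | succ k ih => intro a; rw [pow_succ', pow_succ', Equiv.Perm.mul_apply, ih, hσ']; rfl
    obtain ⟨k, -, hk⟩ := (hρ1 (base d) ⟨d, rfl⟩ ⟨d', h.symm⟩).exists_pow_eq'
    refine ⟨k, ?_⟩
    rw [zpow_natCast, hpow k ⟨d, rfl⟩, hk]
  · intro z hz d
    have hsub : ∀ v (p : D → Prop) [DecidablePred p], (∑ d', if base d' = v ∧ p d' then z d' else 0)
        = ∑ a : {x // base x = v}, if p a.1 then z a.1 else 0 := by
      intro v p _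
      rw [← Finset.sum_subtype (p := fun x => base x = v)
        (f := fun x => if p x then z x else 0) (Finset.univ.filter fun x => base x = v) (by simp),
        Finset.sum_filter]
      refine Finset.sum_congr rfl fun x _ => ?_
      by_cases h : base x = v <;> simp [h]
    have := hρ2 (base d) (fun a => z a.1) (by
      have h := hz (base d)
      have h2 := hsub (base d) (fun _ => True)
      simp only [and_true, if_true] at h2
      rw [← h2]; exact h) ⟨d, rfl⟩
    rw [hb, hsub, hsub]
    simp only [hlt] at this
    convert this
    exact hσ d

end OctiProof

namespace OctiProof

/-! ### Parametrization of polylines -/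

lemma param_seg (P : Polyline) (i : ℕ) {t : ℝ} (h0 : 0 ≤ t) (h1 : t ≤ 1) :
    P.param (i + t) = P.pt i + t • (P.pt (i + 1) - P.pt i) := by
  rcases h1.lt_or_eq with h1 | rfl
  · have : ⌊(i : ℝ) + t⌋.toNat = i := by
      have : ⌊(i : ℝ) + t⌋ = (i : ℤ) := by
        rw [Int.floor_eq_iff]
        constructor
        · push_cast; linarith
        · push_cast; linarith
      rw [this]; simp
    unfold Polyline.param
    rw [this]
    congr 2
    ring
  · have : ⌊(i : ℝ) + 1⌋.toNat = i + 1 := by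
      have : ⌊(i : ℝ) + 1⌋ = ((i + 1 : ℕ) : ℤ) := by
        rw [Int.floor_eq_iff]
        constructor <;> push_cast <;> linarith
      rw [this]; simp
    unfold Polyline.param
    rw [this]
    push_cast
    simp

lemma param_nat (P : Polyline) (i : ℕ) : P.param i = P.pt i := by
  have := param_seg P i le_rfl zero_le_one
  simpa using this

/-! ### The subdivision of a planar drawing at its bends -/

section Subdivision
variable {V : Type*} {G : SimpleGraph V} (D : PolyDrawing G)

/-- Number of segments of the edge underlying a dart. -/
def dlen (d : G.Dart) : ℕ := (D.poly d.edge).len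

open Classical in
/-- The points of the polyline of a dart, listed from its tail to its head. -/
noncomputable def opt (d : G.Dart) (i : ℕ) : ℝ × ℝ :=
  if (D.poly d.edge).pt 0 = D.pos d.fst then (D.poly d.edge).pt i
  else (D.poly d.edge).pt ((D.poly d.edge).len - i)

open Classical in
/-- The parameter, on the polyline of the underlying edge, of the point at distance `s` from the
tail of a dart. -/
noncomputable def loc (d : G.Dart) (s : ℝ) : ℝ :=
  if (D.poly d.edge).pt 0 = D.pos d.fst then s else (D.poly d.edge).len - s

lemma dlen_symm (d : G.Dart) : dlen D d.symm = dlen D d := by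
  unfold dlen; rw [SimpleGraph.Dart.edge_symm]

lemma dlen_pos (d : G.Dart) : 0 < dlen D d := (D.poly d.edge).len_pos

lemma dart_ends (d : G.Dart) :
    ((D.poly d.edge).pt 0 = D.pos d.fst ∧ (D.poly d.edge).pt (D.poly d.edge).len = D.pos d.snd) ∨
    ((D.poly d.edge).pt 0 = D.pos d.snd ∧ (D.poly d.edge).pt (D.poly d.edge).len = D.pos d.fst) := by
  have := D.ends d.fst d.snd d.adj
  rwa [Set.pair_eq_pair_iff] at this

lemma pos_ne (d : G.Dart) : D.pos d.fst ≠ D.pos d.snd := fun h => d.adj.ne (D.inj h)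

lemma fwd_symm (d : G.Dart) : (D.poly d.symm.edge).pt 0 = D.pos d.symm.fst ↔
    ¬ (D.poly d.edge).pt 0 = D.pos d.fst := by
  rw [SimpleGraph.Dart.edge_symm]
  change _ = D.pos d.snd ↔ _
  have h := pos_ne D d
  rcases dart_ends D d with h1 | h1 <;> rw [h1.1] <;> simp [h, h.symm]

lemma opt_zero (d : G.Dart) : opt D d 0 = D.pos d.fst := by
  unfold opt
  split_ifs with h
  · exact h
  · rcases dart_ends D d with h1 | h1
    · exact absurd h1.1 h
    · simpa using h1.2

lemma opt_symm (d : G.Dart) {i : ℕ} (hi : i ≤ dlen D d) :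
    opt D d.symm i = opt D d (dlen D d - i) := by
  have h := fwd_symm D d
  unfold opt dlen at *
  by_cases h1 : (D.poly d.edge).pt 0 = D.pos d.fst
  · rw [if_neg (by tauto), if_pos h1, SimpleGraph.Dart.edge_symm]
  · rw [if_pos (by tauto), if_neg h1, SimpleGraph.Dart.edge_symm]
    congr 1; omega

lemma loc_symm (d : G.Dart) (s : ℝ) : loc D d.symm s = loc D d (dlen D d - s) := by
  have h := fwd_symm D d
  unfold loc dlen at *
  by_cases h1 : (D.poly d.edge).pt 0 = D.pos d.fst
  · rw [if_neg (by tauto), if_pos h1, SimpleGraph.Dart.edge_symm]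
  · rw [if_pos (by tauto), if_neg h1]
    ring

lemma loc_inj (d : G.Dart) {s s' : ℝ} (h : loc D d s = loc D d s') : s = s' := by
  unfold loc at h
  split_ifs at h <;> linarith

lemma loc_mem (d : G.Dart) {s : ℝ} (h0 : 0 ≤ s) (h1 : s ≤ dlen D d) :
    loc D d s ∈ Set.Icc (0 : ℝ) (D.poly d.edge).len := by
  unfold loc dlen at *
  split_ifs
  · exact ⟨h0, h1⟩
  · constructor <;> linarith

lemma param_loc (d : G.Dart) {i : ℕ} (hi : i < dlen D d) {t : ℝ} (h0 : 0 ≤ t) (h1 : t ≤ 1) :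
    opt D d i + t • (opt D d (i + 1) - opt D d i) = (D.poly d.edge).param (loc D d (i + t)) := by
  unfold opt loc dlen at *
  split_ifs
  · rw [param_seg _ _ h0 h1]
  · obtain ⟨j, hj⟩ : ∃ j, (D.poly d.edge).len = i + 1 + j := ⟨_, (Nat.add_sub_of_le hi).symm⟩
    have e1 : (D.poly d.edge).len - i = j + 1 := by omega
    have e2 : (D.poly d.edge).len - (i + 1) = j := by omega
    have e3 : ((D.poly d.edge).len : ℝ) - (i + t) = j + (1 - t) := by rw [hj]; push_cast; ring
    rw [e1, e2, e3, param_seg _ _ (by linarith) (by linarith)]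
    module

variable {D}

/-- Two points of the drawing that coincide are either the same point of the same edge or the
image of a common endvertex. -/
lemma noncross (hD : D.IsPlanar) (d d' : G.Dart) {i i' : ℕ} (hi : i < dlen D d) (hi' : i' < dlen D d')
    {t t' : ℝ} (h0 : 0 ≤ t) (h1 : t ≤ 1) (h0' : 0 ≤ t') (h1' : t' ≤ 1)
    (h : opt D d i + t • (opt D d (i + 1) - opt D d i)
      = opt D d' i' + t' • (opt D d' (i' + 1) - opt D d' i')) :
    (d' = d ∧ (i : ℝ) + t = i' + t') ∨ (d' = d.symm ∧ (i : ℝ) + t = dlen D d - (i' + t')) ∨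
    (((t = 0 ∧ i = 0) ∨ (t = 1 ∧ i + 1 = dlen D d)) ∧
      ((t' = 0 ∧ i' = 0) ∨ (t' = 1 ∧ i' + 1 = dlen D d'))) := by
  have hle : ∀ (d : G.Dart) (i : ℕ), i < dlen D d → ∀ t : ℝ, 0 ≤ t → t ≤ 1 →
      loc D d (i + t) ∈ Set.Icc (0 : ℝ) (D.poly d.edge).len := by
    intro d i hi t h0 h1
    apply loc_mem
    · positivity
    · have : (i : ℝ) + 1 ≤ dlen D d := by exact_mod_cast hi
      linarith
  rw [param_loc D d hi h0 h1, param_loc D d' hi' h0' h1'] at h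
  by_cases he : d'.edge = d.edge
  · rw [SimpleGraph.dart_edge_eq_iff] at he
    rcases he with rfl | rfl
    · left
      exact ⟨rfl, loc_inj D d' (hD.1 _ d'.edge_mem (hle _ _ hi _ h0 h1) (hle _ _ hi' _ h0' h1') h)⟩
    · right; left
      have e := hle _ _ hi' _ h0' h1'
      rw [SimpleGraph.Dart.edge_symm] at h e
      refine ⟨rfl, ?_⟩
      have := hD.1 _ d.edge_mem (hle _ _ hi _ h0 h1) e h
      rw [loc_symm] at this
      exact loc_inj D d this
  · right; right
    have key : ∀ (d : G.Dart) (i : ℕ), i < dlen D d → ∀ t : ℝ, 0 ≤ t → t ≤ 1 →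
        ∀ w ∈ d.edge, (D.poly d.edge).param (loc D d (i + t)) = D.pos w →
        ((t = 0 ∧ i = 0) ∨ (t = 1 ∧ i + 1 = dlen D d)) := by
      intro d i hi t h0 h1 w hw hp
      have hs : loc D d (i + t) = loc D d 0 ∨ loc D d (i + t) = loc D d (dlen D d) := by
        have hmem : loc D d (i + t) = 0 ∨ loc D d (i + t) = (D.poly d.edge).len := by
          have hw' : w = d.fst ∨ w = d.snd := by
            have : w ∈ s(d.fst, d.snd) := hw
            simpa using this
          have hz : (0 : ℝ) ∈ Set.Icc (0 : ℝ) (D.poly d.edge).len := ⟨le_rfl, by positivity⟩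
          have hl : ((D.poly d.edge).len : ℝ) ∈ Set.Icc (0 : ℝ) (D.poly d.edge).len :=
            ⟨by positivity, le_rfl⟩
          have p0 : (D.poly d.edge).param 0 = (D.poly d.edge).pt 0 := by
            simpa using param_nat (D.poly d.edge) 0
          have p1 := param_nat (D.poly d.edge) (D.poly d.edge).len
          have : D.pos w = (D.poly d.edge).pt 0 ∨
              D.pos w = (D.poly d.edge).pt (D.poly d.edge).len := by
            rcases dart_ends D d with e | e <;> rw [e.1, e.2] <;> rcases hw' with rfl | rfl <;> simp
          rcases this with e | e
          · left
            exact hD.1 _ d.edge_mem (hle _ _ hi _ h0 h1) hz (by rw [hp, e, p0])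
          · right
            exact hD.1 _ d.edge_mem (hle _ _ hi _ h0 h1) hl (by rw [hp, e, p1])
        unfold loc at hmem ⊢
        unfold dlen
        split_ifs at hmem ⊢ <;> rcases hmem with h | h
        · left; linarith
        · right; linarith
        · right; linarith
        · left; linarith
      rcases hs with h | h
      · left
        have := loc_inj D d h
        have hi0 : (0 : ℝ) ≤ i := by positivity
        refine ⟨by linarith, ?_⟩
        have : (i : ℝ) = 0 := by linarith
        exact_mod_cast this
      · right
        have := loc_inj D d h
        have hi1 : (i : ℝ) + 1 ≤ dlen D d := by exact_mod_cast hi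
        have ht : t = 1 := by linarith
        refine ⟨ht, ?_⟩
        have : (i : ℝ) + 1 = dlen D d := by linarith
        exact_mod_cast this
    have hmem := hD.2.2 _ d.edge_mem _ d'.edge_mem (Ne.symm he)
      ⟨⟨_, hle _ _ hi _ h0 h1, rfl⟩, ⟨_, hle _ _ hi' _ h0' h1', h.symm⟩⟩
    obtain ⟨w, ⟨hw, hw'⟩, hp⟩ := hmem
    exact ⟨key d i hi t h0 h1 w hw hp.symm, key d' i' hi' t' h0' h1' w hw' (by rw [← h, hp])⟩

lemma opt_ne (d : G.Dart) {i : ℕ} (hi : i < dlen D d) : opt D d i ≠ opt D d (i + 1) := by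
  intro h
  have := D.proper d.edge d.edge_mem
  unfold opt dlen at *
  split_ifs at h
  · exact this.1 i hi h
  · have e : (D.poly d.edge).len - i = (D.poly d.edge).len - (i + 1) + 1 := by omega
    rw [e] at h
    exact this.1 _ (by omega) h.symm

lemma opt_eq_opt (hD : D.IsPlanar) {d d' : G.Dart} {i i' : ℕ} (hi : i < dlen D d) (hi' : i' < dlen D d')
    (h1 : 0 < i) (h : opt D d i = opt D d' i') :
    (d' = d ∧ i' = i) ∨ (d' = d.symm ∧ i' = dlen D d - i) := by
  rcases noncross hD d d' hi hi' le_rfl zero_le_one le_rfl zero_le_one (by simpa using h) with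
    h' | h' | h'
  · left
    refine ⟨h'.1, ?_⟩
    have : (i : ℝ) = i' := by linarith [h'.2]
    exact_mod_cast this.symm
  · right
    refine ⟨h'.1, ?_⟩
    have : (i : ℝ) + i' = dlen D d := by linarith [h'.2]
    have : i + i' = dlen D d := by exact_mod_cast this
    omega
  · exfalso
    rcases h'.1 with h | h
    · omega
    · exact zero_ne_one h.1

/-- The segments of the drawing, as a planar system of segments. -/
noncomputable def segSys (hD : D.IsPlanar) : SegSys {b : G.Dart × ℕ // b.2 < dlen D b.1} where
  st b := opt D b.1.1 b.1.2
  en b := opt D b.1.1 (b.1.2 + 1)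
  rev b := ⟨(b.1.1.symm, dlen D b.1.1 - 1 - b.1.2), by
    have := b.2; simp only [dlen_symm]; omega⟩
  rev_rev b := by
    have := b.2
    apply Subtype.ext
    simp only [dlen_symm, SimpleGraph.Dart.symm_symm]
    ext1
    · rfl
    · simp only; omega
  st_rev b := by
    have := b.2
    simp only
    rw [opt_symm D _ (by omega)]
    congr 1
    omega
  ne b := opt_ne _ b.2
  nc b b' hne hne' t t' h0 h1 h0' h1' h := by
    have hb := b.2
    have hb' := b'.2
    rcases noncross hD b.1.1 b'.1.1 hb hb' h0 h1 h0' h1' h with h | h | h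
    · have hi : b'.1.2 ≠ b.1.2 := fun e => hne (Subtype.ext (Prod.ext h.1 e))
      rcases lt_or_gt_of_ne hi with hi | hi
      · have : (b'.1.2 : ℝ) + 1 ≤ b.1.2 := by exact_mod_cast hi
        exact ⟨Or.inl (by linarith [h.2]), Or.inr (by linarith [h.2])⟩
      · have : (b.1.2 : ℝ) + 1 ≤ b'.1.2 := by exact_mod_cast hi
        exact ⟨Or.inr (by linarith [h.2]), Or.inl (by linarith [h.2])⟩
    · have hi : b'.1.2 ≠ dlen D b.1.1 - 1 - b.1.2 :=
        fun e => hne' (Subtype.ext (Prod.ext h.1 e))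
      have hi : b'.1.2 + 1 + b.1.2 ≠ dlen D b.1.1 := by omega
      rcases lt_or_gt_of_ne hi with hi | hi
      · have : (b'.1.2 : ℝ) + 1 + b.1.2 + 1 ≤ dlen D b.1.1 := by exact_mod_cast hi
        exact ⟨Or.inr (by linarith [h.2]), Or.inr (by linarith [h.2])⟩
      · have : (dlen D b.1.1 : ℝ) ≤ (b'.1.2 : ℝ) + b.1.2 := by
          exact_mod_cast (show dlen D b.1.1 ≤ b'.1.2 + b.1.2 by omega)
        exact ⟨Or.inl (by linarith [h.2]), Or.inl (by linarith [h.2])⟩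
    · exact ⟨h.1.imp And.left And.left, h.2.imp And.left And.left⟩

end Subdivision
end OctiProof

namespace OctiProof

/-! ### The rotation system of a planar drawing -/

open Classical in
/-- A planar graph has a rotation system in which every circulation is the coboundary of a
function on the darts that is constant along faces: `g d` plays the role of the potential of the
face of `d`. -/
theorem exists_rotation_system {V : Type*} [Fintype V] (G : SimpleGraph V) (hG : GraphPlanar G) :
    ∃ σ : Equiv.Perm G.Dart, (∀ d, (σ d).fst = d.fst) ∧
      (∀ d d' : G.Dart, d.fst = d'.fst → σ.SameCycle d d') ∧
      ∀ z : G.Dart → ℝ, (∀ d, z d.symm = - z d) →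
        (∀ v, (∑ d : G.Dart, if d.fst = v then z d else 0) = 0) →
        ∃ g : G.Dart → ℝ, ∀ d, g d.symm = g d + z d ∧ g (σ d) = g d + z d := by
  obtain ⟨D, hD⟩ := hG
  let B := {b : G.Dart × ℕ // b.2 < dlen D b.1}
  have : Finite B := by
    refine Finite.of_injective
      (fun b : B => (⟨b.1.1, ⟨b.1.2, b.2⟩⟩ : Σ d : G.Dart, Fin (dlen D d))) ?_
    rintro ⟨⟨d, i⟩, hi⟩ ⟨⟨d', i'⟩, hi'⟩ h
    simp only [Sigma.mk.injEq] at h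
    obtain ⟨rfl, h⟩ := h
    simp at h
    subst h
    rfl
  let _ : Fintype B := Fintype.ofFinite B
  let S : SegSys B := segSys hD
  have hst : ∀ b : B, S.st b = opt D b.1.1 b.1.2 := fun b => rfl
  obtain ⟨key, hkey, hpot⟩ := S.exists_potential
  let b0 : G.Dart → B := fun d => ⟨(d, 0), dlen_pos D d⟩
  have hst0 : ∀ d, S.st (b0 d) = D.pos d.fst := fun d => opt_zero D d
  -- a segment starting at a vertex is the first segment of a dart
  have hfirst : ∀ (b : B) (d : G.Dart), S.st b = S.st (b0 d) → b = b0 b.1.1 := by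
    intro b d h
    apply Subtype.ext
    refine Prod.ext rfl ?_
    by_contra h0
    rcases opt_eq_opt hD b.2 (dlen_pos D d) (Nat.pos_of_ne_zero h0) h with h1 | h1
    · exact h0 h1.2.symm
    · have := b.2; omega
  have hb0inj : Function.Injective b0 := fun d d' h => congrArg (fun b => b.1.1) h
  obtain ⟨σ, hσ1, hσ2, hσ3⟩ := exists_rotation (fun d : G.Dart => d.fst) (fun d => key (b0 d))
    (fun d d' h hk => hb0inj (hkey _ _ (by rw [hst0, hst0, h]) hk))
  refine ⟨σ, hσ1, hσ2, fun z hz hcons => ?_⟩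
  have hsum0 : ∀ (p : B → Prop) [DecidablePred p], (∀ b, p b → b = b0 b.1.1) →
      (∑ b, if p b then z b.1.1 else 0) = ∑ d, if p (b0 d) then z d else 0 := by
    intro p _ hp
    rw [← Finset.sum_filter, ← Finset.sum_filter]
    refine Finset.sum_bij' (fun b _ => b.1.1) (fun d _ => b0 d) ?_ ?_ ?_ ?_ ?_
    · intro b hb
      simp only [Finset.mem_filter, Finset.mem_univ, true_and] at hb ⊢
      rwa [← hp b hb]
    · intro d hd
      simpa using hd
    · intro b hb
      exact (hp b (by simpa using hb)).symm
    · intro d _; rfl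
    · intro b _; rfl
  obtain ⟨Λ, hΛ⟩ := hpot (fun b => z b.1.1) (fun b => hz _) (by
    intro c
    have hsplit : (∑ b : B, if S.st b = S.st c then z b.1.1 else 0)
        = (∑ b : B, if S.st b = S.st c ∧ b.1.2 = 0 then z b.1.1 else 0)
          + ∑ b : B, if S.st b = S.st c ∧ b.1.2 ≠ 0 then z b.1.1 else 0 := by
      rw [← Finset.sum_add_distrib]
      refine Finset.sum_congr rfl fun b _ => ?_
      by_cases h1 : S.st b = S.st c <;> by_cases h2 : b.1.2 = 0 <;> simp [h1, h2]
    rw [hsplit]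
    have e1 : (∑ b : B, if S.st b = S.st c ∧ b.1.2 = 0 then z b.1.1 else 0) = 0 := by
      rw [hsum0 (fun b => S.st b = S.st c ∧ b.1.2 = 0)
        (fun b hb => Subtype.ext (Prod.ext rfl hb.2))]
      simp only [hst0]
      by_cases hv : ∃ v, D.pos v = S.st c
      · obtain ⟨v, hv⟩ := hv
        rw [← hv]
        refine Eq.trans (Finset.sum_congr rfl fun d _ => ?_) (hcons v)
        simp [D.inj.eq_iff, b0]
      · apply Finset.sum_eq_zero
        intro d _
        rw [if_neg]
        exact fun h => hv ⟨_, h.1⟩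
    have e2 : (∑ b : B, if S.st b = S.st c ∧ b.1.2 ≠ 0 then z b.1.1 else 0) = 0 := by
      rw [← Finset.sum_filter]
      have hlt : ∀ b : B, b.1.2 ≠ 0 → dlen D b.1.1 - b.1.2 < dlen D b.1.1.symm := by
        intro b h
        have := b.2
        rw [dlen_symm]; omega
      refine Finset.sum_involution
        (fun b hb => ⟨(b.1.1.symm, dlen D b.1.1 - b.1.2),
          hlt b (Finset.mem_filter.1 hb).2.2⟩) ?_ ?_ ?_ ?_
      · intro b hb
        simp [hz]
      · intro b hb _ h
        have := congrArg (fun b : B => b.1.1) h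
        exact SimpleGraph.Dart.symm_ne _ this
      · intro b hb
        have hb2 := b.2
        simp only [Finset.mem_filter, Finset.mem_univ, true_and] at hb ⊢
        refine ⟨?_, by omega⟩
        refine Eq.trans ?_ hb.1
        simp only [hst]
        rw [opt_symm D _ (by omega)]
        congr 1; omega
      · intro b hb
        have hb2 := b.2
        apply Subtype.ext
        simp only [dlen_symm, SimpleGraph.Dart.symm_symm]
        refine Prod.ext rfl ?_
        simp only; omega
    rw [e1, e2, add_zero])
  set gg : B → ℝ := fun b => Λ (S.st b) +
    ∑ b', if S.st b' = S.st b ∧ key b' < key b then z b'.1.1 else 0 with hgg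
  have hrev : ∀ b, gg (S.rev b) = gg b + z b.1.1 := hΛ
  -- only two segments start at a bend, so the potential does not change there
  have hbend : ∀ (d : G.Dart) (i : ℕ) (h1 : i + 1 < dlen D d),
      gg ⟨(d, i + 1), h1⟩ = gg ⟨(d, i), by simp only; omega⟩ := by
    intro d i h1
    set b1 : B := ⟨(d, i + 1), h1⟩ with hb1
    set b2 : B := S.rev ⟨(d, i), by simp only; omega⟩ with hb2
    have hb2' : b2.1 = (d.symm, dlen D d - 1 - i) := rfl
    have hs : S.st b2 = S.st b1 := by
      rw [hb2, S.st_rev]; rfl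
    have hne : b1 ≠ b2 := by
      intro h
      have := congrArg (fun b : B => b.1.1) h
      exact SimpleGraph.Dart.symm_ne _ this.symm
    have hall : ∀ b, S.st b = S.st b1 ↔ b = b1 ∨ b = b2 := by
      intro b
      constructor
      · intro h
        rcases opt_eq_opt hD h1 b.2 (Nat.succ_pos i) h.symm with h | h
        · left; exact Subtype.ext (Prod.ext h.1 h.2)
        · right
          apply Subtype.ext
          rw [hb2']
          refine Prod.ext h.1 ?_
          rw [h.2]; simp only; omega
      · rintro (rfl | rfl)
        · rfl
        · exact hs
    have h2 := hrev ⟨(d, i), by simp only; omega⟩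
    rw [← hb2] at h2
    simp only at h2
    have hsum : ∀ c, S.st c = S.st b1 →
        (∑ b', if S.st b' = S.st c ∧ key b' < key c then z b'.1.1 else 0)
        = (if key b1 < key c then z d else 0) + (if key b2 < key c then - z d else 0) := by
      intro c hc
      have : ∀ b' : B, (if S.st b' = S.st c ∧ key b' < key c then z b'.1.1 else 0)
          = (if b' = b1 then (if key b1 < key c then z d else 0) else 0)
            + (if b' = b2 then (if key b2 < key c then - z d else 0) else 0) := by
        intro b'
        simp only [hc, hall]
        by_cases e1 : b' = b1
        · rw [e1]
          have : z b1.1.1 = z d := rfl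
          simp only [hne, true_or, true_and, if_true, if_false, add_zero, this]
        · by_cases e2 : b' = b2
          · simp only [e2, hne.symm, or_true, true_and, if_false, zero_add, if_true]
            have : z b2.1.1 = - z d := by rw [hb2']; exact hz d
            rw [this]
          · simp [e1, e2]
      rw [Finset.sum_congr rfl fun b' _ => this b', Finset.sum_add_distrib]
      congr 1
      · exact (Finset.sum_eq_single b1 (fun b _ hb => if_neg hb)
          (fun h => absurd (Finset.mem_univ _) h)).trans (if_pos rfl)
      · exact (Finset.sum_eq_single b2 (fun b _ hb => if_neg hb)
          (fun h => absurd (Finset.mem_univ _) h)).trans (if_pos rfl)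
    have g1 : gg b1 = Λ (S.st b1) + (if key b2 < key b1 then - z d else 0) := by
      simp only [hgg]
      rw [hsum b1 rfl]
      simp
    have g2 : gg b2 = Λ (S.st b1) + (if key b1 < key b2 then z d else 0) := by
      simp only [hgg]
      rw [hsum b2 hs, hs]
      simp
    rcases lt_or_gt_of_ne (fun h => hne (hkey _ _ hs.symm h)) with h | h
    · rw [if_neg h.not_gt] at g1
      rw [if_pos h] at g2
      linarith
    · rw [if_pos h] at g1
      rw [if_neg h.not_gt] at g2
      linarith
  have hconst : ∀ (d : G.Dart) (i : ℕ) (h1 : i < dlen D d), gg ⟨(d, i), h1⟩ = gg (b0 d) := by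
    intro d i
    induction i with
    | zero => intro _; rfl
    | succ i ih => intro h1; rw [hbend, ih]
  refine ⟨fun d => gg (b0 d), fun d => ⟨?_, ?_⟩⟩
  · have hd := dlen_pos D d
    have h := hrev ⟨(d, dlen D d - 1), by simp only; omega⟩
    have hc := hconst d (dlen D d - 1) (by omega)
    simp only at h ⊢
    rw [hc] at h
    rw [← h]
    congr 1
    apply Subtype.ext
    change (d.symm, 0) = (d.symm, dlen D d - 1 - (dlen D d - 1))
    rw [Nat.sub_self]
  · have hg : ∀ d, gg (b0 d) = Λ (D.pos d.fst) +
        ∑ d' : G.Dart, if d'.fst = d.fst ∧ key (b0 d') < key (b0 d) then z d' else 0 := by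
      intro d
      simp only [hgg]
      rw [hsum0 (fun b => S.st b = S.st (b0 d) ∧ key b < key (b0 d)) (fun b hb => hfirst b d hb.1)]
      simp only [hst0, D.inj.eq_iff]
    simp only [hg]
    have h3 := hσ3 z hcons d
    rw [h3, hσ1, add_assoc]

end OctiProof

namespace OctiProof

/-! ### st-numberings -/

section StNumbering
variable {V : Type*} {G : SimpleGraph V}

/-- A walk that starts outside `S` and ends in `S` contains a path that stays outside `S` up to
its last step. -/
lemma exists_ear (S : Finset V) (a : V) {x y : V}
    (h : Relation.ReflTransGen (fun u v => G.Adj u v ∧ v ≠ a) x y) (hy : y ∈ S) (hx : x ∉ S) :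
    ∃ L : List V, (∃ L', L = x :: L') ∧ L.Nodup ∧ List.IsChain G.Adj L ∧ (∀ v ∈ L, v ∉ S) ∧
      ∃ b ∈ S, b ≠ a ∧ ∃ l, L.getLast? = some l ∧ G.Adj l b := by
  induction h using Relation.ReflTransGen.head_induction_on with
  | refl => exact absurd hy hx
  | @head x x2 hxx2 _ ih =>
    by_cases h2 : x2 ∈ S
    · exact ⟨[x], ⟨[], rfl⟩, by simp, by simp, by simpa using hx, x2, h2, hxx2.2, x, rfl, hxx2.1⟩
    · obtain ⟨L, ⟨L', rfl⟩, hnd, hch, hS, b, hb, hba, l, hl, hlb⟩ := ih h2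
      by_cases hmem : x ∈ x2 :: L'
      · obtain ⟨l1, l2, h12⟩ := List.append_of_mem hmem
        rw [h12] at hnd hch hS hl
        refine ⟨x :: l2, ⟨l2, rfl⟩, hnd.of_append_right, hch.right_of_append, ?_, b, hb, hba, l, ?_, hlb⟩
        · intro v hv
          exact hS v (List.mem_append_right _ hv)
        · rw [List.getLast?_append_of_ne_nil _ (by simp)] at hl
          exact hl
      · refine ⟨x :: x2 :: L', ⟨_, rfl⟩, List.nodup_cons.2 ⟨hmem, hnd⟩, ?_, ?_, b, hb, hba, l, ?_, hlb⟩
        · exact List.isChain_cons_cons.2 ⟨hxx2.1, hch⟩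
        · intro v hv
          rcases List.mem_cons.1 hv with rfl | hv
          · exact hx
          · exact hS v hv
        · rw [List.getLast?_cons_cons]; exact hl

/-- `f` is an st-numbering of the part of the graph induced by `S`. -/
structure GoodNum (G : SimpleGraph V) (s t : V) (S : Finset V) (f : V → ℝ) : Prop where
  hs : s ∈ S
  ht : t ∈ S
  inj : ∀ v ∈ S, ∀ w ∈ S, f v = f w → v = w
  smin : ∀ v ∈ S, f s ≤ f v
  tmax : ∀ v ∈ S, f v ≤ f t
  mid : ∀ v ∈ S, v ≠ s → v ≠ t →
    (∃ u ∈ S, G.Adj v u ∧ f u < f v) ∧ (∃ u ∈ S, G.Adj v u ∧ f v < f u)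

open Classical in
/-- Adding an ear: its vertices get increasing values just above that of its lower end. -/
lemma GoodNum.extend {s t : V} {S : Finset V} {f : V → ℝ} (h : GoodNum G s t S f) {a b : V}
    (ha : a ∈ S) (hb : b ∈ S) (hab : f a < f b) {L : List V} (hnd : L.Nodup)
    (hch : List.IsChain G.Adj L) (hS : ∀ v ∈ L, v ∉ S)
    (hhead : ∃ x, L.head? = some x ∧ G.Adj a x) (hlast : ∃ l, L.getLast? = some l ∧ G.Adj l b) :
    ∃ f', GoodNum G s t (S ∪ L.toFinset) f' := by
  obtain ⟨c, hc, hcmin⟩ := (S.filter fun w => f a < f w).exists_min_image f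
    ⟨b, Finset.mem_filter.2 ⟨hb, hab⟩⟩
  rw [Finset.mem_filter] at hc
  set δ := f c - f a with hδ
  have hδ0 : 0 < δ := by linarith [hc.2]
  have hgap : ∀ w ∈ S, f w ≤ f a ∨ f a + δ ≤ f w := by
    intro w hw
    by_cases hw' : f a < f w
    · right
      have := hcmin w (Finset.mem_filter.2 ⟨hw, hw'⟩)
      linarith
    · left; linarith
  set val : ℕ → ℝ := fun i => f a + δ * ((i + 1) / (L.length + 1)) with hval
  have hvmono : ∀ i j : ℕ, i < j → val i < val j := by
    intro i j hij
    have : (i : ℝ) < j := by exact_mod_cast hij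
    simp only [hval]
    gcongr
  have hv0 : ∀ i, f a < val i := by
    intro i
    simp only [hval]
    have : 0 < δ * (((i : ℝ) + 1) / (L.length + 1)) := by positivity
    linarith
  have hv1 : ∀ i < L.length, val i < f a + δ := by
    intro i hi
    have : (i : ℝ) < L.length := by exact_mod_cast hi
    simp only [hval]
    have : ((i : ℝ) + 1) / (L.length + 1) < 1 := by
      rw [div_lt_one (by positivity)]; linarith
    nlinarith
  set f' : V → ℝ := fun v => if v ∈ L then val (L.idxOf v) else f v with hf'
  have hfS : ∀ v ∈ S, f' v = f v := by
    intro v hv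
    simp only [hf']
    rw [if_neg]
    exact fun hL => hS v hL hv
  have hfL : ∀ (i : ℕ) (hi : i < L.length), f' L[i] = val i := by
    intro i hi
    simp only [hf']
    rw [if_pos (List.getElem_mem hi), hnd.idxOf_getElem]
  have hmem : ∀ v, v ∈ S ∪ L.toFinset ↔ v ∈ S ∨ ∃ (i : ℕ) (hi : i < L.length), L[i] = v := by
    intro v
    rw [Finset.mem_union, List.mem_toFinset, List.mem_iff_getElem]
  have hsm := h.smin
  have htm := h.tmax
  have hSL : ∀ v ∈ S, ∀ i < L.length, f v ≠ val i := by
    intro v hv i hi e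
    rcases hgap v hv with h1 | h1
    · linarith [hv0 i]
    · linarith [hv1 i hi]
  have hbd : f a + δ ≤ f b := by
    rcases hgap b hb with h1 | h1
    · linarith
    · exact h1
  refine ⟨f', ?_, ?_, ?_, ?_, ?_, ?_⟩
  · exact Finset.mem_union_left _ h.hs
  · exact Finset.mem_union_left _ h.ht
  · intro v hv w hw e
    rw [hmem] at hv hw
    rcases hv with hv | ⟨i, hi, rfl⟩ <;> rcases hw with hw | ⟨j, hj, rfl⟩
    · rw [hfS v hv, hfS w hw] at e
      exact h.inj v hv w hw e
    · rw [hfS v hv, hfL] at e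
      exact absurd e (hSL v hv j hj)
    · rw [hfS w hw, hfL] at e
      exact absurd e.symm (hSL w hw i hi)
    · rw [hfL, hfL] at e
      rcases lt_trichotomy i j with h' | h' | h'
      · linarith [hvmono _ _ h']
      · subst h'; rfl
      · linarith [hvmono _ _ h']
  · intro v hv
    rw [hmem] at hv
    rw [hfS s h.hs]
    rcases hv with hv | ⟨i, hi, rfl⟩
    · rw [hfS v hv]; exact hsm v hv
    · rw [hfL]; linarith [hsm a ha, hv0 i]
  · intro v hv
    rw [hmem] at hv
    rw [hfS t h.ht]
    rcases hv with hv | ⟨i, hi, rfl⟩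
    · rw [hfS v hv]; exact htm v hv
    · rw [hfL]; linarith [htm b hb, hv1 i hi]
  · intro v hv hvs hvt
    rw [hmem] at hv
    rcases hv with hv | ⟨i, hi, rfl⟩
    · obtain ⟨⟨u, hu, hau, hlu⟩, ⟨w, hw, haw, hlw⟩⟩ := h.mid v hv hvs hvt
      refine ⟨⟨u, Finset.mem_union_left _ hu, hau, ?_⟩, ⟨w, Finset.mem_union_left _ hw, haw, ?_⟩⟩
      · rw [hfS v hv, hfS u hu]; exact hlu
      · rw [hfS v hv, hfS w hw]; exact hlw
    · rw [List.isChain_iff_getElem] at hch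
      constructor
      · rcases Nat.eq_zero_or_pos i with h0 | h0
        · subst h0
          obtain ⟨x, hx, hax⟩ := hhead
          refine ⟨a, Finset.mem_union_left _ ha, ?_, ?_⟩
          · rw [List.head?_eq_getElem?, List.getElem?_eq_getElem hi, Option.some_inj] at hx
            rw [hx]; exact hax.symm
          · rw [hfL, hfS a ha]; exact hv0 0
        · obtain ⟨j, rfl⟩ : ∃ j, i = j + 1 := ⟨i - 1, by omega⟩
          refine ⟨L[j], (hmem _).2 (Or.inr ⟨j, by omega, rfl⟩), (hch j hi).symm, ?_⟩
          rw [hfL, hfL]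
          exact hvmono _ _ (by omega)
      · by_cases hlen : i + 1 < L.length
        · refine ⟨L[i + 1], (hmem _).2 (Or.inr ⟨i + 1, hlen, rfl⟩), hch i hlen, ?_⟩
          rw [hfL, hfL]
          exact hvmono _ _ (by omega)
        · obtain ⟨l, hl, hlb⟩ := hlast
          have hi' : i = L.length - 1 := by omega
          refine ⟨b, Finset.mem_union_left _ hb, ?_, ?_⟩
          · rw [List.getLast?_eq_getElem?, ← hi', List.getElem?_eq_getElem hi, Option.some_inj] at hl
            rw [hl]; exact hlb
          · rw [hfL, hfS b hb]; linarith [hv1 i hi]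

open Classical in
/-- Every 2-connected graph has an st-numbering. -/
lemma exists_st [Fintype V] (hconn : G.Connected)
    (h2 : ∀ v : V, (G.induce ({v}ᶜ : Set V)).Connected) {s t : V} (hst : s ≠ t) :
    ∃ f : V → ℝ, GoodNum G s t Finset.univ f := by
  have hex : ∃ S, S ∈ (Finset.univ : Finset (Finset V)).filter fun S => ∃ f, GoodNum G s t S f := by
    refine ⟨{s, t}, Finset.mem_filter.2 ⟨Finset.mem_univ _, fun v => if v = s then 0 else 1, ?_⟩⟩
    refine ⟨by simp, by simp, ?_, ?_, ?_, ?_⟩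
    · intro v hv w hw
      simp only [Finset.mem_insert, Finset.mem_singleton] at hv hw
      rcases hv with rfl | rfl <;> rcases hw with rfl | rfl <;> simp [hst.symm]
    · intro v hv
      simp only [if_true]; split_ifs <;> norm_num
    · intro v hv
      rw [if_neg hst.symm]; split_ifs <;> norm_num
    · intro v hv h1 h2
      simp only [Finset.mem_insert, Finset.mem_singleton] at hv
      tauto
  obtain ⟨S, hS, hmax⟩ := Finset.exists_max_image _ Finset.card hex
  rw [Finset.mem_filter] at hS
  obtain ⟨-, f, hf⟩ := hS
  by_cases huniv : S = Finset.univ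
  · exact ⟨f, huniv ▸ hf⟩
  exfalso
  -- an edge leaving `S`
  obtain ⟨x0, hx0⟩ : ∃ x, x ∉ S := by
    by_contra hcon
    push Not at hcon
    exact huniv (Finset.eq_univ_iff_forall.2 hcon)
  obtain ⟨a, x, ha, hx, hax⟩ : ∃ a x, a ∈ S ∧ x ∉ S ∧ G.Adj a x := by
    by_contra hcon
    push Not at hcon
    have hr := (SimpleGraph.reachable_iff_reflTransGen s x0).1 (hconn.preconnected s x0)
    have : ∀ y, Relation.ReflTransGen G.Adj s y → y ∈ S := by
      intro y hy
      induction hy with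
      | refl => exact hf.hs
      | tail _ h ih => by_contra h'; exact hcon _ _ ih h' h
    exact hx0 (this x0 hr)
  obtain ⟨y, hyS, hya⟩ : ∃ y ∈ S, y ≠ a := by
    by_cases h : s = a
    · exact ⟨t, hf.ht, fun h' => hst (h.trans h'.symm)⟩
    · exact ⟨s, hf.hs, h⟩
  have hxa : x ≠ a := fun h => hx (h ▸ ha)
  have hr : Relation.ReflTransGen (fun u v => G.Adj u v ∧ v ≠ a) x y := by
    have := (SimpleGraph.reachable_iff_reflTransGen _ _).1
      ((h2 a).preconnected ⟨x, hxa⟩ ⟨y, hya⟩)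
    exact this.lift (fun u : ({a}ᶜ : Set V) => u.1) (fun u v huv => ⟨huv, v.2⟩)
  obtain ⟨L, ⟨L', hL'⟩, hnd, hch, hLS, b, hb, hba, l, hl, hlb⟩ := exists_ear S a hr hyS hx
  have hbig : ∃ f', GoodNum G s t (S ∪ L.toFinset) f' := by
    have hne : f a ≠ f b := fun h => hba (hf.inj a ha b hb h).symm
    rcases lt_or_gt_of_ne hne with hlt | hlt
    · exact hf.extend ha hb hlt hnd hch hLS ⟨x, by simp [hL'], hax⟩ ⟨l, hl, hlb⟩
    · have := hf.extend hb ha hlt (L := L.reverse) (List.nodup_reverse.2 hnd)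
        (by rw [List.isChain_reverse]; exact hch.imp fun _ _ h => h.symm)
        (by intro v hv; exact hLS v (List.mem_reverse.1 hv))
        ⟨l, by rw [List.head?_reverse]; exact hl, hlb.symm⟩
        ⟨x, by rw [List.getLast?_reverse]; simp [hL'], hax.symm⟩
      rwa [List.toFinset_reverse] at this
  have hcard := hmax (S ∪ L.toFinset) (Finset.mem_filter.2 ⟨Finset.mem_univ _, hbig⟩)
  have : S ⊂ S ∪ L.toFinset := by
    refine ⟨Finset.subset_union_left, fun h => hx (h ?_)⟩
    apply Finset.mem_union_right
    simp [hL']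
  have := Finset.card_lt_card this
  omega

open Classical in
/-- The number of vertices below a vertex in an st-numbering is again an st-numbering. -/
lemma exists_level [Fintype V] (hconn : G.Connected)
    (h2 : ∀ v : V, (G.induce ({v}ᶜ : Set V)).Connected) {s t : V} (hst : s ≠ t) :
    ∃ lev : V → ℕ, Function.Injective lev ∧ (∀ k < Fintype.card V, ∃ v, lev v = k) ∧
      (∀ v, lev v < Fintype.card V) ∧ lev s = 0 ∧ lev t + 1 = Fintype.card V ∧
      ∀ v, v ≠ s → v ≠ t → (∃ u, G.Adj v u ∧ lev u < lev v) ∧ (∃ u, G.Adj v u ∧ lev v < lev u) := by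
  obtain ⟨f, hf⟩ := exists_st hconn h2 hst
  let lev : V → ℕ := fun v => (Finset.univ.filter fun w => f w < f v).card
  have hmono : ∀ u v, f u < f v → lev u < lev v := by
    intro u v huv
    apply Finset.card_lt_card
    refine ⟨fun w hw => ?_, fun h => ?_⟩
    · simp only [Finset.mem_filter, Finset.mem_univ, true_and] at hw ⊢; linarith
    · have := h (Finset.mem_filter.2 ⟨Finset.mem_univ _, huv⟩)
      simp at this
  have hinj : Function.Injective lev := by
    intro u v huv
    by_contra hne
    rcases lt_or_gt_of_ne (fun h => hne (hf.inj u (Finset.mem_univ _) v (Finset.mem_univ _) h)) with h | h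
    · have := hmono _ _ h; omega
    · have := hmono _ _ h; omega
  have hlt : ∀ v, lev v < Fintype.card V := by
    intro v
    apply Finset.card_lt_univ_of_notMem (x := v)
    simp
  have hsurj : ∀ k < Fintype.card V, ∃ v, lev v = k := by
    have himg : Finset.univ.image lev = Finset.range (Fintype.card V) := by
      apply Finset.eq_of_subset_of_card_le
      · intro k hk
        obtain ⟨v, -, rfl⟩ := Finset.mem_image.1 hk
        exact Finset.mem_range.2 (hlt v)
      · rw [Finset.card_range, Finset.card_image_of_injective _ hinj, Finset.card_univ]
    intro k hk
    have := himg ▸ Finset.mem_range.2 hk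
    obtain ⟨v, -, hv⟩ := Finset.mem_image.1 this
    exact ⟨v, hv⟩
  refine ⟨lev, hinj, hsurj, hlt, ?_, ?_, ?_⟩
  · apply Finset.card_eq_zero.2
    rw [Finset.filter_eq_empty_iff]
    intro v _
    exact not_lt.2 (hf.smin v (Finset.mem_univ _))
  · have h1 := hlt t
    obtain ⟨v, hv⟩ := hsurj (Fintype.card V - 1) (by omega)
    have : lev v ≤ lev t := by
      rcases (hf.tmax v (Finset.mem_univ _)).lt_or_eq with h | h
      · exact (hmono _ _ h).le
      · rw [hf.inj v (Finset.mem_univ _) t (Finset.mem_univ _) h]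
    omega
  · intro v h1 h2
    obtain ⟨⟨u, -, hu, hu'⟩, ⟨w, -, hw, hw'⟩⟩ := hf.mid v (Finset.mem_univ _) h1 h2
    exact ⟨⟨u, hu, hmono _ _ hu'⟩, ⟨w, hw, hmono _ _ hw'⟩⟩

end StNumbering
end OctiProof

namespace OctiProof

/-! ### Bipolar orientations: counting switches and peaks -/

section Counting
variable {V : Type*} {G : SimpleGraph V}

/-- The face permutation of a rotation system `σ`: the successor of a dart on its face. -/
def facePerm (σ : Equiv.Perm G.Dart) : Equiv.Perm G.Dart where
  toFun d := σ d.symm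
  invFun d := (σ.symm d).symm
  left_inv d := by simp
  right_inv d := by simp

/-- The faces of a rotation system are the orbits of its face permutation. -/
def Face (σ : Equiv.Perm G.Dart) : Type _ := Quotient (Equiv.Perm.SameCycle.setoid (facePerm σ))

/-- The face of a dart. -/
def face (σ : Equiv.Perm G.Dart) (d : G.Dart) : Face σ := Quotient.mk _ d

lemma face_eq_iff (σ : Equiv.Perm G.Dart) {d d' : G.Dart} :
    face σ d = face σ d' ↔ (facePerm σ).SameCycle d d' := by
  unfold face
  exact Quotient.eq

lemma face_symm (σ : Equiv.Perm G.Dart) (d : G.Dart) : face σ d.symm = face σ (σ d) := by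
  rw [face_eq_iff]
  refine ⟨1, ?_⟩
  simp [facePerm]

lemma facePerm_fst {σ : Equiv.Perm G.Dart} (h : ∀ d, (σ d).fst = d.fst) (d : G.Dart) :
    (facePerm σ d).fst = d.snd := by
  change (σ d.symm).fst = d.snd
  rw [h]; rfl

/-- A dart is up if the numbering increases along it. -/
def Up (lev : V → ℕ) (d : G.Dart) : Prop := lev d.fst < lev d.snd

lemma up_symm {lev : V → ℕ} (hl : Function.Injective lev) (d : G.Dart) :
    Up lev d.symm ↔ ¬ Up lev d := by
  have : lev d.fst ≠ lev d.snd := fun h => d.adj.ne (hl h)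
  unfold Up
  change lev d.snd < lev d.fst ↔ _
  omega

open Classical in
/-- One half of the Euler formula, by comparing dimensions: every circulation is the coboundary of a
function on the faces. -/
lemma card_up_add_two_le [Fintype V] [Fintype G.Dart] (σ : Equiv.Perm G.Dart)
    [Fintype (Face σ)]
    (hpot : ∀ z : G.Dart → ℝ, (∀ d, z d.symm = - z d) →
        (∀ v, (∑ d : G.Dart, if d.fst = v then z d else 0) = 0) →
        ∃ g : G.Dart → ℝ, ∀ d, g d.symm = g d + z d ∧ g (σ d) = g d + z d)
    {lev : V → ℕ} (hl : Function.Injective lev) (d₀ : G.Dart) :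
    Fintype.card {d : G.Dart // Up lev d} + 2 ≤ Fintype.card V + Fintype.card (Face σ) := by
  let U := {d : G.Dart // Up lev d}
  let T : (Face σ → ℝ) →ₗ[ℝ] (U → ℝ) :=
    { toFun := fun f u => f (face σ u.1.symm) - f (face σ u.1)
      map_add' := by intro f g; ext u; simp; ring
      map_smul' := by intro f g; ext u; simp; ring }
  let dv : (U → ℝ) →ₗ[ℝ] (V → ℝ) :=
    { toFun := fun y v => ∑ u : U, ((if u.1.fst = v then y u else 0) - if u.1.snd = v then y u else 0)
      map_add' := by
        intro f g; ext v
        simp only [Pi.add_apply]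
        rw [← Finset.sum_add_distrib]
        refine Finset.sum_congr rfl fun u _ => ?_
        split_ifs <;> ring
      map_smul' := by
        intro f g; ext v
        simp only [Pi.smul_apply, smul_eq_mul, RingHom.id_apply]
        rw [Finset.mul_sum]
        refine Finset.sum_congr rfl fun u _ => ?_
        split_ifs <;> ring }
  let S : (V → ℝ) →ₗ[ℝ] ℝ :=
    { toFun := fun f => ∑ v, f v
      map_add' := by intro f g; simp [Finset.sum_add_distrib]
      map_smul' := by intro f g; simp [Finset.mul_sum] }
  have h1 : LinearMap.ker dv ≤ LinearMap.range T := by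
    intro y hy
    rw [LinearMap.mem_ker] at hy
    let z : G.Dart → ℝ := fun d => if h : Up lev d then y ⟨d, h⟩ else
      - y ⟨d.symm, (up_symm hl d).2 h⟩
    have hz : ∀ d, z d.symm = - z d := by
      intro d
      simp only [z]
      by_cases h : Up lev d
      · have h' : ¬ Up lev d.symm := by rw [up_symm hl]; simpa using h
        rw [dif_neg h', dif_pos h]
        simp
      · have h' : Up lev d.symm := (up_symm hl d).2 h
        rw [dif_pos h', dif_neg h]
        simp
    obtain ⟨g, hg⟩ := hpot z hz (by
      intro v
      have := congrFun hy v
      change ∑ u : U, ((if u.1.fst = v then y u else 0) - if u.1.snd = v then y u else 0) = 0 at this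
      refine Eq.trans ?_ this
      rw [Finset.sum_sub_distrib]
      have e1 : ∀ F : G.Dart → ℝ, ∑ d, F d = ∑ u : U, F u.1 + ∑ u : U, F u.1.symm := by
        intro F
        rw [← Fintype.sum_subtype_add_sum_subtype (fun d => Up lev d) F]
        congr 1
        refine Fintype.sum_equiv ⟨fun d => (⟨d.1.symm, (up_symm hl _).2 d.2⟩ : U),
          fun u => ⟨u.1.symm, by rw [up_symm hl]; simpa using u.2⟩, ?_, ?_⟩ _ _ ?_
        · intro d; simp
        · intro d; simp
        · intro d; simp
      rw [e1, sub_eq_add_neg, ← Finset.sum_neg_distrib]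
      congr 1
      · refine Finset.sum_congr rfl fun u _ => ?_
        have hzu : z u.1 = y u := dif_pos u.2
        rw [hzu]
      · refine Finset.sum_congr rfl fun u _ => ?_
        rw [hz]
        have hzu : z u.1 = y u := dif_pos u.2
        rw [hzu]
        change (if u.1.snd = v then - y u else 0) = -(if u.1.snd = v then y u else 0)
        split_ifs <;> simp)
    have hinv : ∀ d, g (facePerm σ d) = g d := by
      intro d
      change g (σ d.symm) = g d
      rw [(hg d.symm).2, (hg d).1, hz]; ring
    have hinvp : ∀ n : ℕ, ∀ d, g ((facePerm σ ^ n) d) = g d := by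
      intro n
      induction n with
      | zero => simp
      | succ n ih => intro d; rw [pow_succ, Equiv.Perm.mul_apply, ih, hinv]
    let f : Face σ → ℝ := Quotient.lift g (by
      intro a b hab
      obtain ⟨i, hi⟩ := Equiv.Perm.SameCycle.exists_nat_pow_eq hab
      rw [← hi, hinvp])
    refine ⟨f, ?_⟩
    ext u
    change g u.1.symm - g u.1 = y u
    rw [(hg u.1).1]
    simp [z, dif_pos u.2]
  have h2 : LinearMap.range dv ≤ LinearMap.ker S := by
    rintro _ ⟨y, rfl⟩
    rw [LinearMap.mem_ker]
    change ∑ v, ∑ u : U, ((if u.1.fst = v then y u else 0) - if u.1.snd = v then y u else 0) = 0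
    rw [Finset.sum_comm]
    refine Finset.sum_eq_zero fun u _ => ?_
    simp
  have h3 := LinearMap.finrank_range_add_finrank_ker dv
  have h4 := LinearMap.finrank_range_add_finrank_ker T
  have h5 := LinearMap.finrank_range_add_finrank_ker S
  have h6 := Submodule.finrank_mono h1
  have h7 := Submodule.finrank_mono h2
  have h8 : 1 ≤ Module.finrank ℝ (LinearMap.range S) := by
    rw [Nat.one_le_iff_ne_zero, Ne, Submodule.finrank_eq_zero]
    intro h
    have : S (Pi.single d₀.fst 1) = 0 := by
      have : S (Pi.single d₀.fst 1) ∈ LinearMap.range S := ⟨_, rfl⟩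
      rw [h] at this
      simpa using this
    simp [S] at this
  have h9 : 1 ≤ Module.finrank ℝ (LinearMap.ker T) := by
    rw [Nat.one_le_iff_ne_zero, Ne, Submodule.finrank_eq_zero]
    intro h
    have : (fun _ => 1 : Face σ → ℝ) ∈ LinearMap.ker T := by
      rw [LinearMap.mem_ker]; ext u; simp [T]
    rw [h, Submodule.mem_bot] at this
    simpa using congrFun this (face σ d₀)
  rw [Module.finrank_pi] at h3 h4 h5
  change _ = Fintype.card U at h3
  change Fintype.card U + 2 ≤ _
  omega

/-- Along a cycle of a permutation, a predicate that is not constant switches somewhere. -/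
lemma exists_switch {α : Type*} [Finite α] {f : Equiv.Perm α} {p : α → Prop} {x y : α}
    (h : f.SameCycle x y) (hx : p x) (hy : ¬ p y) :
    ∃ z, f.SameCycle x z ∧ p z ∧ ¬ p (f z) := by
  obtain ⟨n, hn⟩ := h.exists_nat_pow_eq
  induction n generalizing y with
  | zero => simp at hn; exact absurd (hn ▸ hx) hy
  | succ n ih =>
    by_cases hp : p ((f ^ n) x)
    · refine ⟨_, ⟨n, by simp⟩, hp, ?_⟩
      rw [← Equiv.Perm.mul_apply, ← pow_succ', hn]
      exact hy
    · exact ih ⟨n, by simp⟩ hp rfl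

/-- A plane `st`-graph, combinatorially: a rotation system together with a numbering of the
vertices with a single source `s` and a single sink `t`, which are adjacent, such that the up darts
are consecutive around every vertex and every face has a single peak. -/
structure StMap (G : SimpleGraph V) [Fintype V] where
  σ : Equiv.Perm G.Dart
  lev : V → ℕ
  s : V
  t : V
  σ_fst : ∀ d, (σ d).fst = d.fst
  cyc : ∀ d d' : G.Dart, d.fst = d'.fst → σ.SameCycle d d'
  lev_inj : Function.Injective lev
  lev_lt : ∀ v, lev v < Fintype.card V
  lev_surj : ∀ k < Fintype.card V, ∃ v, lev v = k
  lev_s : lev s = 0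
  lev_t : lev t + 1 = Fintype.card V
  adj : G.Adj s t
  mid : ∀ v, v ≠ s → v ≠ t → (∃ u, G.Adj v u ∧ lev u < lev v) ∧ (∃ u, G.Adj v u ∧ lev v < lev u)
  switch : ∀ d d' : G.Dart, d.fst = d'.fst → ¬ Up lev d → Up lev (σ d) → ¬ Up lev d' →
    Up lev (σ d') → d = d'
  peak : ∀ d d' : G.Dart, face σ d = face σ d' → Up lev d → ¬ Up lev (facePerm σ d) → Up lev d' →
    ¬ Up lev (facePerm σ d') → d = d'

open Classical in
/-- The counts of switches and peaks are bounded below by the numbers of inner vertices and of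
faces, and the Euler formula bounds their sum from above, so equality holds in both: this is what
the fields `switch` and `peak` of `StMap` record. -/
theorem exists_stMap [Fintype V] (hG : GraphPlanar G) (hconn : G.Connected)
    (h2 : ∀ v, (G.induce ({v}ᶜ : Set V)).Connected) {s t : V} (hst : G.Adj s t) :
    ∃ M : StMap G, M.s = s ∧ M.t = t := by
  obtain ⟨σ, hσ, hcyc, hpot⟩ := exists_rotation_system G hG
  obtain ⟨lev, hl, hsurj, hlt, hs, ht, hmid⟩ := exists_level hconn h2 hst.ne
  have : Finite (Face σ) := Quotient.finite _
  have : Fintype (Face σ) := Fintype.ofFinite _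
  have hE := card_up_add_two_le σ hpot hl ⟨(s, t), hst⟩
  let A : Finset G.Dart := Finset.univ.filter fun d => ¬ Up lev d ∧ Up lev (σ d)
  let B : Finset G.Dart := Finset.univ.filter fun d => Up lev d ∧ ¬ Up lev (facePerm σ d)
  have hA : A.image (fun d => d.fst) = Finset.univ \ {s, t} := by
    ext v
    simp only [Finset.mem_image, Finset.mem_sdiff, Finset.mem_univ, true_and, Finset.mem_insert,
      Finset.mem_singleton, not_or, A, Finset.mem_filter]
    constructor
    · rintro ⟨d, ⟨h1, h2⟩, rfl⟩
      constructor
      · intro h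
        have : lev d.fst = 0 := by rw [h, hs]
        have h3 : lev d.fst ≠ lev d.snd := fun h => d.adj.ne (hl h)
        unfold Up at h1
        omega
      · intro h
        have h3 := hlt (σ d).snd
        unfold Up at h2
        rw [hσ, h] at h2
        omega
    · rintro ⟨h1, h2⟩
      obtain ⟨⟨u, hu, hu'⟩, ⟨w, hw, hw'⟩⟩ := hmid v h1 h2
      obtain ⟨z, hz, hz1, hz2⟩ := exists_switch (p := fun d => ¬ Up lev d)
        (hcyc ⟨(v, u), hu⟩ ⟨(v, w), hw⟩ rfl) (by unfold Up; simpa using hu'.le)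
        (by unfold Up; simpa using hw')
      refine ⟨z, ⟨hz1, not_not.1 hz2⟩, ?_⟩
      obtain ⟨i, hi⟩ := hz.exists_nat_pow_eq
      rw [← hi]
      have : ∀ i : ℕ, ∀ d, ((σ ^ i) d).fst = d.fst := by
        intro i
        induction i with
        | zero => simp
        | succ i ih => intro d; rw [pow_succ, Equiv.Perm.mul_apply, ih, hσ]
      rw [this]
  have hB : B.image (face σ) = Finset.univ := by
    rw [Finset.eq_univ_iff_forall]
    intro q
    obtain ⟨d, rfl⟩ : ∃ d, face σ d = q := Quotient.exists_rep q
    obtain ⟨e, he, hmax⟩ := Finset.exists_max_image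
      (Finset.univ.filter fun e => (facePerm σ).SameCycle d e) (fun e => lev e.snd)
      ⟨d, by simp; exact Equiv.Perm.SameCycle.refl _ _⟩
    have he' : (facePerm σ).SameCycle d e := by simpa using he
    have hm : ∀ e', (facePerm σ).SameCycle d e' → lev e'.snd ≤ lev e.snd := by
      intro e' h; exact hmax e' (by simpa using h)
    refine Finset.mem_image.2 ⟨e, ?_, ((face_eq_iff σ).2 he').symm⟩
    simp only [B, Finset.mem_filter, Finset.mem_univ, true_and]
    constructor
    · have h1 := hm ((facePerm σ).symm e) (by simpa using he')
      have h3 : lev e.fst ≠ lev e.snd := fun h => e.adj.ne (hl h)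
      have h4 := facePerm_fst hσ ((facePerm σ).symm e)
      rw [Equiv.apply_symm_apply] at h4
      unfold Up
      rw [← h4] at h1
      omega
    · have h1 := hm (facePerm σ e) (by simpa using he')
      unfold Up
      rw [facePerm_fst hσ]
      omega
  have hAB : A.card + B.card = Fintype.card {d : G.Dart // Up lev d} := by
    let B' : Finset G.Dart := Finset.univ.filter fun d => ¬ Up lev d ∧ ¬ Up lev (σ d)
    have e1 : B.card = B'.card := by
      refine Finset.card_bij (fun d _ => d.symm) ?_ ?_ ?_
      · intro d hd
        simp only [B, B', Finset.mem_filter, Finset.mem_univ, true_and] at hd ⊢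
        refine ⟨?_, hd.2⟩
        rw [up_symm hl]; simpa using hd.1
      · intro d _ d' _ h
        exact SimpleGraph.Dart.symm_involutive.injective h
      · intro d hd
        simp only [B, B', Finset.mem_filter, Finset.mem_univ, true_and] at hd ⊢
        refine ⟨d.symm, ⟨(up_symm hl d).2 hd.1, ?_⟩, by simp⟩
        change ¬ Up lev (σ d.symm.symm)
        simpa using hd.2
    have e2 : A.card + B'.card = (Finset.univ.filter fun d : G.Dart => ¬ Up lev d).card := by
      rw [← Finset.card_filter_add_card_filter_not (s := Finset.univ.filter fun d : G.Dart => ¬ Up lev d)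
        (fun d => Up lev (σ d)), Finset.filter_filter, Finset.filter_filter]
    rw [e1, e2, Fintype.card_subtype]
    refine Finset.card_bij (fun d _ => d.symm) ?_ ?_ ?_
    · intro d hd
      simp only [Finset.mem_filter, Finset.mem_univ, true_and] at hd ⊢
      exact (up_symm hl d).2 hd
    · intro d _ d' _ h
      exact SimpleGraph.Dart.symm_involutive.injective h
    · intro d hd
      simp only [Finset.mem_filter, Finset.mem_univ, true_and] at hd
      refine ⟨d.symm, ?_, by simp⟩
      simp only [Finset.mem_filter, Finset.mem_univ, true_and]
      rw [up_symm hl]; simpa using hd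
  have hA' : (A.image (fun d => d.fst)).card + 2 = Fintype.card V := by
    rw [hA, Finset.card_sdiff_of_subset (Finset.subset_univ _), Finset.card_pair hst.ne,
      Finset.card_univ]
    have : 2 ≤ Fintype.card V := by
      rw [← Finset.card_pair hst.ne]; exact Finset.card_le_univ _
    omega
  have hB' : (B.image (face σ)).card = Fintype.card (Face σ) := by
    rw [hB, Finset.card_univ]
  have lA : (A.image (fun d => d.fst)).card ≤ A.card := Finset.card_image_le
  have lB : (B.image (face σ)).card ≤ B.card := Finset.card_image_le
  have iA := Finset.card_image_iff.1 (show (A.image (fun d => d.fst)).card = A.card by omega)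
  have iB := Finset.card_image_iff.1 (show (B.image (face σ)).card = B.card by omega)
  refine ⟨⟨σ, lev, s, t, hσ, hcyc, hl, hlt, hsurj, hs, ht, hst, hmid, ?_, ?_⟩, rfl, rfl⟩
  · intro d d' h h1 h2 h3 h4
    exact iA (by simp [A, h1, h2]) (by simp [A, h3, h4]) h
  · intro d d' h h1 h2 h3 h4
    exact iB (by simp [B, h1, h2]) (by simp [B, h3, h4]) h

end Counting
end OctiProof

namespace OctiProof

/-! ### Sweeping a plane st-graph -/

section Sweep
variable {V : Type*} {G : SimpleGraph V}

/-- The cycle of a permutation through a point, as a list starting there. -/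
lemma exists_cycle_list {α : Type*} [Finite α] (f : Equiv.Perm α) (x : α) :
    ∃ L : List α, (x :: L).Nodup ∧ (∀ y, y ∈ x :: L ↔ f.SameCycle x y) ∧
      (x :: L).IsChain (fun a b => f a = b) ∧
      f ((x :: L).getLast (List.cons_ne_nil _ _)) = x := by
  have hp : 0 < Function.minimalPeriod f x := Function.minimalPeriod_pos_of_mem_periodicPts
    (Function.Injective.mem_periodicPts f.injective x)
  obtain ⟨p, hp'⟩ : ∃ p, Function.minimalPeriod f x = p + 1 := ⟨_, (Nat.succ_pred hp.ne').symm⟩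
  have hL : (List.range (p + 1)).map (fun i => f^[i] x) =
      x :: (List.range p).map (fun i => f^[i + 1] x) := by
    rw [List.range_succ_eq_map, List.map_cons, List.map_map]
    rfl
  refine ⟨(List.range p).map (fun i => f^[i + 1] x), ?_, ?_, ?_, ?_⟩
  · rw [← hL]
    refine List.Nodup.map_on ?_ List.nodup_range
    intro i hi j hj h
    rw [List.mem_range, ← hp'] at hi hj
    exact Function.iterate_injOn_Iio_minimalPeriod hi hj h
  · intro y
    rw [← hL]
    simp only [List.mem_map, List.mem_range]
    constructor
    · rintro ⟨i, -, rfl⟩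
      exact ⟨i, by rw [zpow_natCast, Equiv.Perm.iterate_eq_pow]⟩
    · intro h
      obtain ⟨n, rfl⟩ := h.exists_nat_pow_eq
      refine ⟨n % (p + 1), Nat.mod_lt _ (Nat.succ_pos _), ?_⟩
      rw [← hp', Function.iterate_mod_minimalPeriod_eq, Equiv.Perm.iterate_eq_pow]
  · rw [← hL, List.isChain_iff_getElem]
    intro i hi
    simp only [List.getElem_map, List.getElem_range, Function.iterate_succ_apply']
  · have : (x :: (List.range p).map (fun i => f^[i + 1] x)).getLast (List.cons_ne_nil _ _) =
        f^[p] x := by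
      have h := hL
      rw [List.range_succ, List.map_append] at h
      simp only [List.map_cons, List.map_nil] at h
      rw [← List.getLast_congr (List.append_ne_nil_of_right_ne_nil _ (List.cons_ne_nil _ _)) _ h]
      simp
    rw [this, ← Function.iterate_succ_apply' f, Nat.succ_eq_add_one, ← hp', Function.iterate_minimalPeriod]

/-- `FPath σ a L b`: crossing the edges of the darts of `L` in succession, each from its own face
to the face on its other side, leads from the face `a` to the face `b`. -/
def FPath (σ : Equiv.Perm G.Dart) : Face σ → List G.Dart → Face σ → Prop
  | a, [], b => a = b
  | a, d :: L, b => face σ d = a ∧ FPath σ (face σ d.symm) L b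

lemma FPath.append {σ : Equiv.Perm G.Dart} {L₁ L₂ : List G.Dart} {a b c : Face σ}
    (h₁ : FPath σ a L₁ b) (h₂ : FPath σ b L₂ c) : FPath σ a (L₁ ++ L₂) c := by
  induction L₁ generalizing a with
  | nil => cases h₁; exact h₂
  | cons d L ih => exact ⟨h₁.1, ih h₁.2⟩

lemma FPath.of_append {σ : Equiv.Perm G.Dart} {L₁ L₂ : List G.Dart} {a c : Face σ}
    (h : FPath σ a (L₁ ++ L₂) c) : ∃ b, FPath σ a L₁ b ∧ FPath σ b L₂ c := by
  induction L₁ generalizing a with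
  | nil => exact ⟨a, rfl, h⟩
  | cons d L ih =>
    obtain ⟨b, hb, hb'⟩ := ih h.2
    exact ⟨b, ⟨h.1, hb⟩, hb'⟩

lemma FPath.rev {σ : Equiv.Perm G.Dart} {L : List G.Dart} {a b : Face σ}
    (h : FPath σ a L b) : FPath σ b (L.map SimpleGraph.Dart.symm).reverse a := by
  induction L generalizing a with
  | nil => exact Eq.symm h
  | cons d L ih =>
    rw [List.map_cons, List.reverse_cons]
    refine (ih h.2).append ⟨rfl, ?_⟩
    rw [SimpleGraph.Dart.symm_symm]
    exact h.1

lemma fPath_of_chain {σ : Equiv.Perm G.Dart} {x : G.Dart} {L : List G.Dart}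
    (h : (x :: L).IsChain (fun a b => σ a = b)) :
    FPath σ (face σ x) (x :: L) (face σ (σ ((x :: L).getLast (List.cons_ne_nil _ _)))) := by
  induction L generalizing x with
  | nil => exact ⟨rfl, face_symm σ x⟩
  | cons y L ih =>
    rw [List.isChain_cons_cons] at h
    refine ⟨rfl, ?_⟩
    rw [face_symm, h.1, List.getLast_cons (List.cons_ne_nil _ _)]
    exact ih h.2

lemma eq_filter_append {α : Type*} (p : α → Bool) {L : List α}
    (h : L.IsChain (fun a b => p b = true → p a = true)) :
    L = L.filter p ++ L.filter (fun a => !p a) := by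
  induction L with
  | nil => rfl
  | cons a L ih =>
    have ih' := ih h.tail
    by_cases ha : p a = true
    · rw [List.filter_cons_of_pos ha, List.filter_cons_of_neg (by simp [ha]), List.cons_append,
        ← ih']
    · have hL : ∀ b ∈ L, ¬ p b = true := by
        clear ih ih'
        induction L generalizing a with
        | nil => simp
        | cons b L ih =>
          rw [List.isChain_cons_cons] at h
          have hb : ¬ p b = true := fun hb => ha (h.1 hb)
          intro c hc
          rcases List.mem_cons.1 hc with rfl | hc
          · exact hb
          · exact ih b h.2 hb c hc
      rw [List.filter_cons_of_neg ha, List.filter_eq_nil_iff.2 hL, List.nil_append,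
        List.filter_eq_self.2]
      intro b hb
      rcases List.mem_cons.1 hb with rfl | hb
      · simpa using ha
      · simpa using hL b hb

/-- Dependent choice along `ℕ`. -/
lemma exists_seq {α : Type*} (P : ℕ → α → Prop) (R : ℕ → α → α → Prop) {a : α} (ha : P 0 a)
    (h : ∀ k x, P k x → ∃ y, P (k + 1) y ∧ R k x y) :
    ∃ f : ℕ → α, f 0 = a ∧ (∀ k, P k (f k)) ∧ ∀ k, R k (f k) (f (k + 1)) := by
  choose g hg hg' using h
  let F : (k : ℕ) → {x // P k x} := fun k => Nat.rec ⟨a, ha⟩ (fun k x => ⟨g k x.1 x.2, hg _ _ _⟩) k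
  exact ⟨fun k => (F k).1, rfl, fun k => (F k).2, fun k => hg' k _ (F k).2⟩

variable [Fintype V]

namespace StMap
variable (M : StMap G)

/-- The dart from the source to the sink. -/
def d₀ : G.Dart := ⟨(M.s, M.t), M.adj⟩

lemma up_d₀ : Up M.lev M.d₀ := by
  have h := M.lev_s
  have h' : M.lev M.s ≠ M.lev M.t := fun e => M.adj.ne (M.lev_inj e)
  change M.lev M.s < M.lev M.t
  omega

lemma up_symm (d : G.Dart) : Up M.lev d.symm ↔ ¬ Up M.lev d := OctiProof.up_symm M.lev_inj d

/-- The maximal run of up darts that follows an up dart on its face. -/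
lemma exists_run {e : G.Dart} (he : Up M.lev e) : ∃ i : ℕ,
    (∀ j ≤ i, Up M.lev ((facePerm M.σ ^ j) e)) ∧ ¬ Up M.lev ((facePerm M.σ ^ (i + 1)) e) := by
  classical
  have hex : ∃ i : ℕ, ¬ Up M.lev ((facePerm M.σ ^ (i + 1)) e) := by
    by_contra! hcon
    have : ∀ i : ℕ, i ≤ M.lev ((facePerm M.σ ^ (i + 1)) e).fst := by
      intro i
      induction i with
      | zero => exact Nat.zero_le _
      | succ i ih =>
        have h1 := hcon i
        rw [pow_succ', Equiv.Perm.mul_apply, facePerm_fst M.σ_fst]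
        unfold Up at h1
        omega
    have h1 := this (Fintype.card V)
    have h2 := M.lev_lt ((facePerm M.σ ^ (Fintype.card V + 1)) e).fst
    omega
  refine ⟨Nat.find hex, ?_, Nat.find_spec hex⟩
  intro j hj
  rcases j with _ | j
  · simpa using he
  · exact not_not.1 (Nat.find_min hex hj)

lemma run_lt {e : G.Dart} {i j : ℕ} (hij : i < j)
    (h : ∀ l ≤ j, Up M.lev ((facePerm M.σ ^ l) e)) :
    M.lev ((facePerm M.σ ^ i) e).snd ≤ M.lev ((facePerm M.σ ^ j) e).fst := by
  induction j with
  | zero => omega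
  | succ j ih =>
    rw [pow_succ' _ j, Equiv.Perm.mul_apply, facePerm_fst M.σ_fst]
    rcases (Nat.lt_succ_iff.1 hij).lt_or_eq with h1 | rfl
    · have h2 := ih h1 (fun l hl => h l (by omega))
      have h3 := h j (by omega)
      unfold Up at h3
      omega
    · exact le_rfl

/-- Every horizontal level meets the upward boundary of a face at most once, because the boundary
has a single peak. -/
lemma active {e e' : G.Dart} (hf : face M.σ e = face M.σ e') (he : Up M.lev e) (he' : Up M.lev e')
    {k : ℕ} (h1 : M.lev e.fst ≤ k) (h2 : k < M.lev e.snd) (h3 : M.lev e'.fst ≤ k)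
    (h4 : k < M.lev e'.snd) : e = e' := by
  obtain ⟨i, hi, hi'⟩ := M.exists_run he
  obtain ⟨j, hj, hj'⟩ := M.exists_run he'
  have hface : ∀ (l : ℕ) (d : G.Dart), face M.σ ((facePerm M.σ ^ l) d) = face M.σ d := by
    intro l d
    rw [face_eq_iff]
    exact Equiv.Perm.SameCycle.symm ⟨l, by simp⟩
  have hp := M.peak _ _ (by rw [hface i e, hface j e', hf]) (hi i le_rfl)
    (by rwa [pow_succ', Equiv.Perm.mul_apply] at hi') (hj j le_rfl)
    (by rwa [pow_succ', Equiv.Perm.mul_apply] at hj')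
  have key : ∀ {e e' : G.Dart} {i j : ℕ}, i ≤ j → (facePerm M.σ ^ i) e = (facePerm M.σ ^ j) e' →
      (∀ l ≤ j, Up M.lev ((facePerm M.σ ^ l) e')) → M.lev e.fst ≤ k → k < M.lev e'.snd →
      e = e' := by
    intro e e' i j hij h hj h1 h4
    obtain ⟨l, rfl⟩ := Nat.exists_eq_add_of_le hij
    rw [pow_add, Equiv.Perm.mul_apply] at h
    have h' := (facePerm M.σ ^ i).injective h
    rcases Nat.eq_zero_or_pos l with rfl | hl
    · simpa using h'
    · have := M.run_lt hl (fun a ha => hj a (by omega))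
      rw [← h'] at this
      simp at this
      omega
  rcases le_total i j with hij | hij
  · exact key hij hp hj h1 h4
  · exact (key hij hp.symm hi h3 h2).symm

/-- At every vertex, the upgoing edges and the incoming edges, both listed from left to right,
lead from the same face to the same face. The edge `s t` is left out. -/
lemma exists_lists (v : V) : ∃ (O I : List G.Dart) (a b : Face M.σ),
    O.Nodup ∧ I.Nodup ∧ (∀ d, d ∈ O ↔ d.fst = v ∧ Up M.lev d ∧ d ≠ M.d₀) ∧
    (∀ d, d ∈ I ↔ d.snd = v ∧ Up M.lev d ∧ d ≠ M.d₀) ∧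
    (v ≠ M.t → FPath M.σ a O b) ∧ (v ≠ M.s → FPath M.σ a I b) ∧
    (v = M.s ∨ v = M.t → a = face M.σ M.d₀.symm ∧ b = face M.σ M.d₀) := by
  classical
  have hlow : ∀ u, M.lev u < M.lev M.s → False := by
    intro u h
    rw [M.lev_s] at h
    omega
  have hhigh : ∀ u, M.lev M.t < M.lev u → False := by
    intro u h
    have := M.lev_lt u
    have := M.lev_t
    omega
  have hfst : ∀ {x y}, M.σ.SameCycle x y → y.fst = x.fst := by
    intro x y h
    obtain ⟨i, rfl⟩ := h.exists_nat_pow_eq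
    clear h
    induction i with
    | zero => simp
    | succ i ih => rw [pow_succ', Equiv.Perm.mul_apply, M.σ_fst, ih]
  have hinj : Function.Injective (SimpleGraph.Dart.symm : G.Dart → G.Dart) :=
    SimpleGraph.Dart.symm_involutive.injective
  have hrev : ∀ (L : List G.Dart) (d : G.Dart),
      d ∈ (L.map SimpleGraph.Dart.symm).reverse ↔ d.symm ∈ L := by
    intro L d
    rw [List.mem_reverse, List.mem_map]
    constructor
    · rintro ⟨e, he, rfl⟩
      rwa [SimpleGraph.Dart.symm_symm]
    · intro h
      exact ⟨_, h, SimpleGraph.Dart.symm_symm d⟩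
  by_cases hs : v = M.s
  · subst hs
    obtain ⟨L, hnd, hmem, hch, hlast⟩ := exists_cycle_list M.σ M.d₀
    have hF := fPath_of_chain hch
    rw [hlast] at hF
    refine ⟨L, [], _, _, (List.nodup_cons.1 hnd).2, List.nodup_nil, ?_, ?_, fun _ => hF.2,
      fun h => absurd rfl h, fun _ => ⟨rfl, rfl⟩⟩
    · intro d
      constructor
      · intro hd
        have h1 := hfst ((hmem d).1 (List.mem_cons_of_mem _ hd))
        refine ⟨h1, ?_, ?_⟩
        · by_contra hu
          refine hlow d.snd ?_
          have h3 : M.lev d.fst ≠ M.lev d.snd := fun h => d.adj.ne (M.lev_inj h)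
          unfold Up at hu
          rw [h1] at hu h3
          change ¬ M.lev M.s < _ at hu
          change M.lev M.s ≠ _ at h3
          omega
        · rintro rfl
          exact (List.nodup_cons.1 hnd).1 hd
      · rintro ⟨h1, h2, h3⟩
        have := (hmem d).2 (M.cyc _ _ h1.symm)
        exact (List.mem_cons.1 this).resolve_left h3
    · intro d
      simp only [List.not_mem_nil, false_iff]
      rintro ⟨h1, h2, -⟩
      unfold Up at h2
      rw [h1] at h2
      exact hlow _ h2
  by_cases ht : v = M.t
  · subst ht
    obtain ⟨L, hnd, hmem, hch, hlast⟩ := exists_cycle_list M.σ M.d₀.symm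
    have hF := fPath_of_chain hch
    rw [hlast] at hF
    have hF' := hF.2.rev
    rw [SimpleGraph.Dart.symm_symm] at hF'
    refine ⟨[], (L.map SimpleGraph.Dart.symm).reverse, _, _, List.nodup_nil, ?_, ?_, ?_,
      fun h => absurd rfl h, fun _ => hF', fun _ => ⟨rfl, rfl⟩⟩
    · exact List.nodup_reverse.2 ((List.nodup_cons.1 hnd).2.map hinj)
    · intro d
      simp only [List.not_mem_nil, false_iff]
      rintro ⟨h1, h2, -⟩
      unfold Up at h2
      rw [h1] at h2
      exact hhigh _ h2
    · intro d
      rw [hrev]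
      constructor
      · intro hd
        have h1 : d.symm.fst = M.d₀.symm.fst := hfst ((hmem _).1 (List.mem_cons_of_mem _ hd))
        refine ⟨h1, ?_, ?_⟩
        · by_contra hu
          refine hhigh d.fst ?_
          have h3 : M.lev d.fst ≠ M.lev d.snd := fun h => d.adj.ne (M.lev_inj h)
          unfold Up at hu
          change d.snd = M.t at h1
          rw [h1] at hu h3
          omega
        · rintro rfl
          exact (List.nodup_cons.1 hnd).1 hd
      · rintro ⟨h1, h2, h3⟩
        have := (hmem d.symm).2 (M.cyc _ _ h1.symm)
        exact (List.mem_cons.1 this).resolve_left fun h => h3 (hinj h)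
  · obtain ⟨⟨u, hu, hu'⟩, ⟨w, hw, hw'⟩⟩ := M.mid v hs ht
    obtain ⟨d, hd, hd1, hd2⟩ := exists_switch (p := fun d => ¬ Up M.lev d)
      (M.cyc ⟨(v, u), hu⟩ ⟨(v, w), hw⟩ rfl) (by unfold Up; simpa using hu'.le)
      (by unfold Up; simpa using hw')
    have hdv : d.fst = v := hfst hd
    obtain ⟨L, hnd, hmem, hch, hlast⟩ := exists_cycle_list M.σ (M.σ d)
    have hF := fPath_of_chain hch
    rw [hlast] at hF
    have hlast' : ∃ h : M.σ d :: L ≠ [], (M.σ d :: L).getLast h = d :=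
      ⟨_, M.σ.injective hlast⟩
    generalize hl : M.σ d :: L = l at hF hnd hmem hch hlast'
    obtain ⟨hlne, hlast'⟩ := hlast'
    have hmem' : ∀ e, e ∈ l ↔ e.fst = v := by
      intro e
      rw [hmem]
      constructor
      · intro h
        rw [hfst h, M.σ_fst, hdv]
      · intro h
        exact M.cyc _ _ (by rw [M.σ_fst, hdv, h])
    have hsplit := eq_filter_append (fun e => decide (Up M.lev e)) (L := l) (by
      rw [List.isChain_iff_getElem] at hch ⊢
      intro i hi
      simp only [decide_eq_true_eq]
      intro hb
      by_contra ha
      have h1 := hch i hi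
      have h2 : l[i] = d := M.switch _ _ (by rw [(hmem' _).1 (List.getElem_mem _), hdv]) ha
        (by rw [h1]; exact hb) hd1 (not_not.1 hd2)
      rw [← hlast', List.getLast_eq_getElem] at h2
      have := (hnd.getElem_inj_iff).1 h2
      omega)
    have hne : ∀ e : G.Dart, e.fst = v → e ≠ M.d₀ := by
      rintro e he rfl
      exact hs he.symm
    have hne' : ∀ e : G.Dart, e.snd = v → e ≠ M.d₀ := by
      rintro e he rfl
      exact ht he.symm
    rw [hsplit] at hF
    obtain ⟨b, hb1, hb2⟩ := hF.of_append
    refine ⟨_, _, _, _, hnd.filter _, ?_, ?_, ?_, fun _ => hb1, fun _ => hb2.rev, ?_⟩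
    · exact List.nodup_reverse.2 ((hnd.filter _).map hinj)
    · intro e
      rw [List.mem_filter, hmem', decide_eq_true_eq]
      exact ⟨fun h => ⟨h.1, h.2, hne _ h.1⟩, fun h => ⟨h.1, h.2.1⟩⟩
    · intro e
      rw [hrev, List.mem_filter, hmem']
      simp only [Bool.not_eq_true', decide_eq_false_iff_not, M.up_symm, not_not]
      exact ⟨fun h => ⟨h.1, h.2, hne' _ h.1⟩, fun h => ⟨h.1, h.2.1⟩⟩
    · rintro (h | h) <;> contradiction

/-- A list of active darts that starts where a list reaching the face of `d₀` starts is an initial segment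
of it. -/
lemma initial_of_fPath {k : ℕ} (hk : k < M.lev M.t) {I R : List G.Dart} {a b : Face M.σ}
    (hI : ∀ e ∈ I, Up M.lev e ∧ e ≠ M.d₀ ∧ M.lev e.fst ≤ k ∧ k < M.lev e.snd)
    (hR : ∀ e ∈ R, Up M.lev e ∧ e ≠ M.d₀ ∧ M.lev e.fst ≤ k ∧ k < M.lev e.snd)
    (h1 : FPath M.σ a I b) (h2 : FPath M.σ a R (face M.σ M.d₀)) : ∃ B, R = I ++ B := by
  induction I generalizing a R with
  | nil => exact ⟨R, rfl⟩
  | cons f I ih =>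
    obtain ⟨hf1, hf2, hf3, hf4⟩ := hI f List.mem_cons_self
    rcases R with _ | ⟨g, R⟩
    · exfalso
      apply hf2
      refine M.active (h1.1.trans h2) hf1 M.up_d₀ hf3 hf4 ?_ hk
      change M.lev M.s ≤ k
      rw [M.lev_s]
      exact Nat.zero_le _
    · obtain ⟨hg1, hg2, hg3, hg4⟩ := hR g List.mem_cons_self
      have hfg : f = g := M.active (h1.1.trans h2.1.symm) hf1 hg1 hf3 hf4 hg3 hg4
      subst hfg
      obtain ⟨B, rfl⟩ := ih (fun e he => hI e (List.mem_cons_of_mem _ he))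
        (fun e he => hR e (List.mem_cons_of_mem _ he)) h1.2 h2.2
      exact ⟨B, rfl⟩

/-- The sweep: `Λ k` lists from left to right the edges, other than `s t`, that cross the level
between the vertices numbered `k` and `k + 1`. Passing a vertex replaces its incoming edges,
which are consecutive, by its outgoing edges. -/
theorem exists_sweep (h3 : 3 ≤ Fintype.card V) : ∃ (outs ins : V → List G.Dart),
    (∀ v, (outs v).Nodup) ∧ (∀ v, (ins v).Nodup) ∧
    (∀ v d, d ∈ outs v ↔ d.fst = v ∧ Up M.lev d ∧ d ≠ M.d₀) ∧
    (∀ v d, d ∈ ins v ↔ d.snd = v ∧ Up M.lev d ∧ d ≠ M.d₀) ∧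
    (∀ v, v ≠ M.s → ins v ≠ []) ∧
    ∃ Λ : ℕ → List G.Dart, Λ 0 = outs M.s ∧
      (∀ k, k + 1 < Fintype.card V → (Λ k).Nodup ∧ ∀ d, d ∈ Λ k ↔
        Up M.lev d ∧ d ≠ M.d₀ ∧ M.lev d.fst ≤ k ∧ k < M.lev d.snd) ∧
      ∀ v k, M.lev v = k + 1 → ∃ A B, Λ k = A ++ ins v ++ B ∧
        (v ≠ M.t → Λ (k + 1) = A ++ outs v ++ B) := by
  choose outs ins a b hO hI hOm hIm hOF hIF hab using M.exists_lists
  have hst : M.s ≠ M.t := M.adj.ne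
  have ht := M.lev_t
  have hne : ∀ v, v ≠ M.s → ins v ≠ [] := by
    intro v hv
    by_cases hvt : v = M.t
    · -- the last vertex before the sink has the sink as its only possible upper neighbour
      obtain ⟨u, hu⟩ := M.lev_surj (M.lev M.t - 1) (by omega)
      have hus : u ≠ M.s := by
        rintro rfl
        rw [M.lev_s] at hu
        omega
      have hut : u ≠ M.t := by
        rintro rfl
        omega
      obtain ⟨w, hw, hw'⟩ := (M.mid u hus hut).2
      have hwt : w = M.t := M.lev_inj (by have := M.lev_lt w; omega)
      refine List.ne_nil_of_mem (a := (⟨(u, w), hw⟩ : G.Dart)) ((hIm _ _).2 ⟨hwt.trans hvt.symm, hw', ?_⟩)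
      intro h
      exact hus (congrArg (fun d : G.Dart => d.fst) h)
    · obtain ⟨u, hu, hu'⟩ := (M.mid v hv hvt).1
      refine List.ne_nil_of_mem (a := (⟨(u, v), hu.symm⟩ : G.Dart)) ((hIm _ _).2 ⟨rfl, hu', ?_⟩)
      intro h
      exact hvt (congrArg (fun d : G.Dart => d.snd) h)
  refine ⟨outs, ins, hO, hI, hOm, hIm, hne, ?_⟩
  refine (fun h => ?_ : (∃ Λ : ℕ → List G.Dart, _ ∧ _ ∧ _) → _) (exists_seq
    (fun k L => k + 1 < Fintype.card V →
      FPath M.σ (face M.σ M.d₀.symm) L (face M.σ M.d₀) ∧ L.Nodup ∧ ∀ d, d ∈ L ↔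
        Up M.lev d ∧ d ≠ M.d₀ ∧ M.lev d.fst ≤ k ∧ k < M.lev d.snd)
    (fun k L L' => ∀ v, M.lev v = k + 1 → ∃ A B, L = A ++ ins v ++ B ∧
        (v ≠ M.t → L' = A ++ outs v ++ B)) (a := outs M.s) ?_ ?_)
  · obtain ⟨Λ, hΛ0, hΛP, hΛR⟩ := h
    refine ⟨Λ, hΛ0, fun k hk => (hΛP k hk).2, fun v k hv => hΛR k v hv⟩
  · intro _
    refine ⟨?_, hO _, ?_⟩
    · have h := hOF M.s hst
      rwa [(hab M.s (Or.inl rfl)).1, (hab M.s (Or.inl rfl)).2] at h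
    · intro d
      rw [hOm]
      constructor
      · rintro ⟨h1, h2, h3⟩
        have := M.lev_s
        unfold Up at h2 ⊢
        rw [h1] at h2 ⊢
        exact ⟨h2, h3, by omega, by omega⟩
      · rintro ⟨h1, h2, h3, h4⟩
        exact ⟨M.lev_inj (by rw [M.lev_s]; omega), h1, h2⟩
  · intro k L hP
    by_cases hk : k + 1 < Fintype.card V
    swap
    · refine ⟨[], fun h => absurd h (by omega), fun v hv => ?_⟩
      have := M.lev_lt v
      omega
    obtain ⟨hF, hnd, hmem⟩ := hP hk
    obtain ⟨v, hv⟩ := M.lev_surj (k + 1) hk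
    have hvs : v ≠ M.s := by
      rintro rfl
      rw [M.lev_s] at hv
      omega
    have hsub : ∀ e ∈ ins v, Up M.lev e ∧ e ≠ M.d₀ ∧ M.lev e.fst ≤ k ∧ k < M.lev e.snd := by
      intro e he
      obtain ⟨h1, h2, h3⟩ := (hIm v e).1 he
      refine ⟨h2, h3, ?_, by rw [h1]; omega⟩
      unfold Up at h2
      rw [h1] at h2
      omega
    obtain ⟨A, B, hAB⟩ : ∃ A B, L = A ++ ins v ++ B := by
      obtain ⟨e, I, heI⟩ := List.exists_cons_of_ne_nil (hne v hvs)
      have he : e ∈ L := (hmem e).2 (hsub e (by rw [heI]; exact List.mem_cons_self))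
      obtain ⟨A, R, rfl⟩ := List.append_of_mem he
      obtain ⟨c, hc1, hc2⟩ := hF.of_append
      have hIv := hIF v hvs
      have hac : a v = c := by
        rw [heI] at hIv
        exact hIv.1.symm.trans hc2.1
      rw [hac] at hIv
      obtain ⟨B, hB⟩ := M.initial_of_fPath (by omega) hsub
        (fun f hf => (hmem f).1 (List.mem_append_right _ hf)) hIv hc2
      exact ⟨A, B, by rw [hB, List.append_assoc]⟩
    refine ⟨A ++ outs v ++ B, ?_, ?_⟩
    · intro hk2
      have hvt : v ≠ M.t := by
        rintro rfl
        omega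
      refine ⟨?_, ?_, ?_⟩
      · rw [hAB] at hF
        obtain ⟨c, hc1, hc2⟩ := hF.of_append
        obtain ⟨c', hc3, hc4⟩ := hc1.of_append
        obtain ⟨e, I, heI⟩ := List.exists_cons_of_ne_nil (hne v hvs)
        have hIv := hIF v hvs
        have h1 : a v = c' := by
          rw [heI] at hIv hc4
          exact hIv.1.symm.trans hc4.1
        have h2 : ∀ (l : List G.Dart) (x y z : Face M.σ), FPath M.σ x l y → FPath M.σ x l z →
            y = z := by
          intro l
          induction l with
          | nil => intro x y z h h'; exact h.symm.trans h'
          | cons f l ih => intro x y z h h'; exact ih _ _ _ h.2 h'.2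
        rw [← h1] at hc3 hc4
        have h3 := h2 _ _ _ _ hIv hc4
        rw [← h3] at hc2
        exact (hc3.append (hOF v hvt)).append hc2
      · rw [hAB] at hnd
        have hnew : ∀ e ∈ outs v, e ∉ A ++ ins v ++ B := by
          intro e he he'
          rw [← hAB, hmem] at he'
          rw [hOm] at he
          have h1 := he'.2.2.1
          rw [he.1] at h1
          omega
        have hnd' : (outs v ++ (A ++ B)).Nodup := by
          refine List.nodup_append'.2 ⟨hO v, ?_, ?_⟩
          · refine hnd.sublist ?_
            rw [List.append_assoc]
            exact (List.Sublist.refl A).append (List.sublist_append_right _ _)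
          · intro e he he'
            refine hnew e he ?_
            simp only [List.mem_append] at he' ⊢
            tauto
        refine (List.Perm.nodup_iff ?_).2 hnd'
        rw [← List.append_assoc]
        exact List.Perm.append_right B List.perm_append_comm
      · intro d
        have h1 : ∀ e, e ∈ A ++ ins v ++ B → (e ∈ A ∨ e ∈ B ↔ e ∉ ins v) := by
          intro e he
          rw [hAB] at hnd
          have h2 : (ins v ++ (A ++ B)).Nodup := by
            refine (List.Perm.nodup_iff ?_).1 hnd
            rw [← List.append_assoc]
            exact List.Perm.append_right B List.perm_append_comm
          have h3 := List.disjoint_of_nodup_append h2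
          have h4 : e ∈ ins v → ¬ (e ∈ A ∨ e ∈ B) := fun h h' => h3 h (List.mem_append.2 h')
          simp only [List.mem_append] at he
          tauto
        have h2 : d ∈ A ++ outs v ++ B ↔ d ∈ outs v ∨ (d ∈ L ∧ d ∉ ins v) := by
          have h3 := h1 d
          rw [hAB]
          simp only [List.mem_append] at h3 ⊢
          tauto
        rw [h2, hOm, hmem, hIm]
        have hv1 : d.fst = v ↔ M.lev d.fst = k + 1 :=
          ⟨fun h => by rw [h, hv], fun h => M.lev_inj (h.trans hv.symm)⟩
        have hv2 : d.snd = v ↔ M.lev d.snd = k + 1 :=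
          ⟨fun h => by rw [h, hv], fun h => M.lev_inj (h.trans hv.symm)⟩
        rw [hv1, hv2]
        unfold Up
        by_cases hd : d = M.d₀
        · simp [hd]
        · simp only [ne_eq, hd, not_false_eq_true, true_and, and_true]
          omega
    · intro v' hv'
      have : v' = v := M.lev_inj (hv'.trans hv.symm)
      subst this
      exact ⟨A, B, hAB, fun _ => rfl⟩

end StMap
end Sweep
end OctiProof

namespace OctiProof

/-! ### Coordinates -/

section Coordinates

/-- The height of the strip between levels `k` and `k + 1`. Each strip is three times as high as
the next one, so that gaps reached in one strip survive the next. -/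
def strip (N k : ℕ) : ℤ := 3 ^ (N - k)

/-- The height of level `k`. -/
def height (N k : ℕ) : ℤ := ∑ j ∈ Finset.range k, strip N j

lemma strip_pos (N k : ℕ) : 0 < strip N k := by unfold strip; positivity

lemma strip_step {N k : ℕ} (h : k < N) : strip N k = 3 * strip N (k + 1) := by
  unfold strip
  rw [← pow_succ']
  congr 1
  omega

lemma strip_dvd {N j k : ℕ} (h : j ≤ k) : strip N k ∣ strip N j :=
  pow_dvd_pow _ (by omega)

lemma height_succ (N k : ℕ) : height N (k + 1) = height N k + strip N k :=
  Finset.sum_range_succ _ _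

lemma height_zero (N : ℕ) : height N 0 = 0 := rfl

lemma height_strictMono (N : ℕ) : StrictMono (height N) := by
  refine strictMono_nat_of_lt_succ fun k => ?_
  have := strip_pos N k
  rw [height_succ]
  omega

lemma strip_dvd_height_sub (N : ℕ) {j k : ℕ} (h : j ≤ k + 1) :
    strip N k ∣ height N (k + 1) - height N j := by
  induction k with
  | zero =>
    interval_cases j
    · simp [height_succ, height_zero]
    · simp
  | succ k ih =>
    rcases h.lt_or_eq with h | rfl
    · have := (strip_dvd (N := N) (Nat.le_succ k)).trans (ih (by omega))
      rw [height_succ, add_sub_right_comm]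
      exact dvd_add this dvd_rfl
    · simp

variable {V : Type*} {G : SimpleGraph V} [Fintype V]

/-- The combinatorial data of a sweep of a plane `st`-graph, with at most three edges besides
`s t` above and below every vertex. -/
structure Sweep (M : StMap G) where
  outs : V → List G.Dart
  ins : V → List G.Dart
  Λ : ℕ → List G.Dart
  nodup_outs : ∀ v, (outs v).Nodup
  nodup_ins : ∀ v, (ins v).Nodup
  mem_outs : ∀ v d, d ∈ outs v ↔ d.fst = v ∧ Up M.lev d ∧ d ≠ M.d₀
  mem_ins : ∀ v d, d ∈ ins v ↔ d.snd = v ∧ Up M.lev d ∧ d ≠ M.d₀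
  ins_ne : ∀ v, v ≠ M.s → ins v ≠ []
  length_outs : ∀ v, (outs v).length ≤ 3
  length_ins : ∀ v, (ins v).length ≤ 3
  zero : Λ 0 = outs M.s
  mem : ∀ k, k + 1 < Fintype.card V → ∀ d, d ∈ Λ k ↔
        Up M.lev d ∧ d ≠ M.d₀ ∧ M.lev d.fst ≤ k ∧ k < M.lev d.snd
  step : ∀ v k, M.lev v = k + 1 → ∃ A B, Λ k = A ++ ins v ++ B ∧
        (v ≠ M.t → Λ (k + 1) = A ++ outs v ++ B)

lemma length_le_of_ne (hdeg : MaxDegLE G 4) {v : V} {L : List G.Dart} (hL : L.Nodup)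
    (hv : ∀ d ∈ L, d.fst = v) {e : G.Dart} (he : e.fst = v) (heL : e ∉ L) : L.length ≤ 3 := by
  classical
  have h1 : ((e :: L).map fun d => d.snd).Nodup := by
    refine List.Nodup.map_on ?_ (List.nodup_cons.2 ⟨heL, hL⟩)
    have hv' : ∀ d ∈ e :: L, d.fst = v := by
      intro d hd
      rcases List.mem_cons.1 hd with rfl | hd
      · exact he
      · exact hv d hd
    intro x hx y hy hxy
    ext
    · rw [hv' x hx, hv' y hy]
    · exact hxy
  have h2 := List.toFinset_card_of_nodup h1
  have h3 : (((e :: L).map fun d => d.snd).toFinset : Set V) ⊆ G.neighborSet v := by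
    intro w hw
    simp only [List.coe_toFinset, Set.mem_ofPred_eq, List.mem_map, List.mem_cons] at hw
    obtain ⟨d, hd, rfl⟩ := hw
    have : d.fst = v := by
      rcases hd with rfl | hd
      · exact he
      · exact hv d hd
    rw [SimpleGraph.mem_neighborSet, ← this]
    exact d.adj
  have h4 := Set.ncard_le_ncard h3 (Set.toFinite _)
  rw [Set.ncard_coe_finset, h2] at h4
  have h5 := hdeg v
  simp at h4
  omega

theorem exists_sweep' (M : StMap G) (h3 : 3 ≤ Fintype.card V) (hdeg : MaxDegLE G 4) :
    Nonempty (Sweep M) := by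
  obtain ⟨outs, ins, hO, hI, hOm, hIm, hne, Λ, h0, hm, hs⟩ := M.exists_sweep h3
  refine ⟨⟨outs, ins, Λ, hO, hI, hOm, hIm, hne, ?_, ?_, h0, fun k hk => (hm k hk).2, hs⟩⟩
  · intro v
    by_cases hv : v = M.s
    · refine length_le_of_ne hdeg (hO v) (fun d hd => ((hOm v d).1 hd).1) (e := M.d₀) hv.symm ?_
      intro h
      exact ((hOm _ _).1 h).2.2 rfl
    · obtain ⟨e, he⟩ := List.exists_mem_of_ne_nil _ (hne v hv)
      have he' := (hIm _ _).1 he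
      refine length_le_of_ne hdeg (hO v) (fun d hd => ((hOm v d).1 hd).1) (e := e.symm) he'.1 ?_
      intro h
      exact (M.up_symm e).1 ((hOm _ _).1 h).2.1 he'.2.1
  · intro v
    have hinj : Function.Injective (SimpleGraph.Dart.symm : G.Dart → G.Dart) :=
      SimpleGraph.Dart.symm_involutive.injective
    have key : ∀ e : G.Dart, e.snd = v → e ∉ ins v → (ins v).length ≤ 3 := by
      intro e he he'
      rw [← List.length_map (f := SimpleGraph.Dart.symm)]
      refine length_le_of_ne hdeg ((hI v).map hinj) ?_ (e := e.symm) he ?_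
      · intro d hd
        obtain ⟨d', hd', rfl⟩ := List.mem_map.1 hd
        exact ((hIm _ _).1 hd').1
      · rwa [List.mem_map_of_injective hinj]
    by_cases hv : v = M.t
    · exact key M.d₀ hv.symm fun h => ((hIm _ _).1 h).2.2 rfl
    · by_cases hv' : v = M.s
      · have : ins v = [] := by
          rw [List.eq_nil_iff_forall_not_mem]
          intro d hd
          obtain ⟨h1, h2, -⟩ := (hIm _ _).1 hd
          unfold Up at h2
          rw [h1, hv', M.lev_s] at h2
          omega
        simp [this]
      · obtain ⟨w, hw, hw'⟩ := (M.mid v hv' hv).2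
        refine key ⟨(w, v), hw.symm⟩ rfl fun h => ?_
        have := ((hIm _ _).1 h).2.1
        unfold Up at this
        simp at this
        omega

namespace Sweep
variable {M : StMap G} (S : Sweep M)

/-- The incoming edge of a vertex that is drawn straight: the middle one of the incoming edges. -/
noncomputable def prim (v : V) : G.Dart := (S.ins v).getD ((S.ins v).length / 2) M.d₀

lemma prim_mem {v : V} (hv : v ≠ M.s) : S.prim v ∈ S.ins v := by
  have h := List.length_pos_of_ne_nil (S.ins_ne v hv)
  unfold prim
  rw [List.getD_eq_getElem _ _ (Nat.div_lt_self h (by norm_num))]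
  exact List.getElem_mem _

open Classical in
/-- The horizontal shift per unit of height of an edge on its way up: `-1`, `0` or `1` from left
to right among the edges leaving its lower end. -/
noncomputable def slope (d : G.Dart) : ℤ := ((S.outs d.fst).idxOf d : ℤ) - 1

lemma slope_bounds {d : G.Dart} (h : Up M.lev d) (h0 : d ≠ M.d₀) :
    -1 ≤ S.slope d ∧ S.slope d ≤ 1 := by
  classical
  have h1 : d ∈ S.outs d.fst := (S.mem_outs _ _).2 ⟨rfl, h, h0⟩
  have h2 := List.idxOf_lt_length_iff.2 h1
  have h3 := S.length_outs d.fst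
  unfold slope
  constructor
  · omega
  · have : (S.outs d.fst).idxOf d < 3 := by
      convert lt_of_lt_of_le h2 h3
    omega

lemma prim_snd {v : V} (hv : v ≠ M.s) : (S.prim v).snd = v := ((S.mem_ins _ _).1 (S.prim_mem hv)).1

lemma prim_lt {v : V} (hv : v ≠ M.s) : M.lev (S.prim v).fst < M.lev v := by
  obtain ⟨h1, h2, -⟩ := (S.mem_ins _ _).1 (S.prim_mem hv)
  unfold Up at h2
  rwa [h1] at h2

/-- The abscissas are defined by recursion along the straight incoming edges. -/
lemma exists_X : ∃ X : V → ℤ, X M.s = 0 ∧ ∀ v, v ≠ M.s → X v = X (S.prim v).fst +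
    S.slope (S.prim v) * (height (Fintype.card V) (M.lev v) -
      height (Fintype.card V) (M.lev (S.prim v).fst)) := by
  classical
  let F : (v : V) → ((u : V) → M.lev u < M.lev v → ℤ) → ℤ := fun v ih =>
    if h : v = M.s then 0 else ih (S.prim v).fst (S.prim_lt h) +
    S.slope (S.prim v) * (height (Fintype.card V) (M.lev v) -
      height (Fintype.card V) (M.lev (S.prim v).fst))
  have wf : WellFounded (fun u v : V => M.lev u < M.lev v) := (measure M.lev).wf
  refine ⟨wf.fix F, ?_, ?_⟩
  · rw [wf.fix_eq]
    simp [F]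
  · intro v hv
    rw [wf.fix_eq]
    simp only [F, dif_neg hv]

/-- The abscissa of a vertex. -/
noncomputable def X : V → ℤ := Classical.choose S.exists_X

lemma X_s : S.X M.s = 0 := (Classical.choose_spec S.exists_X).1

/-- The ordinate of a vertex. -/
noncomputable def Y (_S : Sweep M) (v : V) : ℤ := height (Fintype.card V) (M.lev v)

/-- The abscissa at level `k` of the line on which an edge leaves its lower end. -/
noncomputable def Q (d : G.Dart) (k : ℕ) : ℤ :=
  S.X d.fst + S.slope d * (height (Fintype.card V) k - S.Y d.fst)

lemma X_eq {v : V} (hv : v ≠ M.s) : S.X v = S.Q (S.prim v) (M.lev v) :=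
  (Classical.choose_spec S.exists_X).2 v hv

lemma Q_fst (d : G.Dart) : S.Q d (M.lev d.fst) = S.X d.fst := by
  simp [Q, Y]

lemma Q_succ (d : G.Dart) (k : ℕ) :
    S.Q d (k + 1) = S.Q d k + S.slope d * strip (Fintype.card V) k := by
  unfold Q
  rw [height_succ]
  ring

/-- The abscissas of the vertices up to the top of strip `k` are multiples of its height. -/
lemma dvd_X (v : V) : ∀ k, M.lev v ≤ k + 1 → strip (Fintype.card V) k ∣ S.X v := by
  induction h : M.lev v using Nat.strong_induction_on generalizing v with
  | _ n ih =>
    intro k hk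
    by_cases hv : v = M.s
    · rw [hv, X_s]
      exact dvd_zero _
    · have h1 := S.prim_lt hv
      rw [S.X_eq hv, h]
      rw [h] at h1
      obtain ⟨j, rfl⟩ : ∃ j, n = j + 1 := ⟨n - 1, by omega⟩
      refine (strip_dvd (show j ≤ k by omega)).trans ?_
      exact dvd_add (ih _ h1 _ rfl j (by omega))
        (Dvd.dvd.mul_left (strip_dvd_height_sub _ (by omega)) _)

lemma dvd_Q {d : G.Dart} {k : ℕ} (h : M.lev d.fst ≤ k + 1) :
    strip (Fintype.card V) k ∣ S.Q d (k + 1) :=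
  dvd_add (S.dvd_X _ _ h) (Dvd.dvd.mul_left (strip_dvd_height_sub _ h) _)

/-- A gap present at the lower end of a strip is a multiple of the height of the previous strip,
so it does not close in the strip. -/
lemma Q_lt_step {e e' : G.Dart} (he : Up M.lev e) (he0 : e ≠ M.d₀) (he' : Up M.lev e')
    (he0' : e' ≠ M.d₀) {k : ℕ} (hk : k < Fintype.card V) (h1 : M.lev e.fst ≤ k + 1)
    (h2 : M.lev e'.fst ≤ k + 1) (h : S.Q e (k + 1) < S.Q e' (k + 1)) :
    S.Q e (k + 2) < S.Q e' (k + 2) := by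
  have d1 := dvd_sub (S.dvd_Q h2) (S.dvd_Q h1)
  have d2 := Int.le_of_dvd (by omega) d1
  have b1 := S.slope_bounds he he0
  have b2 := S.slope_bounds he' he0'
  have p := strip_pos (Fintype.card V) (k + 1)
  rw [S.Q_succ e, S.Q_succ e']
  rw [strip_step hk] at d2
  nlinarith

/-- The left-to-right order of the edges crossing the strip `k`: strict at its top, and weak at its
bottom, where two edges may leave the same vertex. -/
def Before (k : ℕ) (e e' : G.Dart) : Prop :=
  S.Q e k ≤ S.Q e' k ∧ S.Q e (k + 1) < S.Q e' (k + 1)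

lemma outs_pairwise {v : V} {k : ℕ} (hk : M.lev v = k) : (S.outs v).Pairwise (S.Before k) := by
  classical
  have h1 : (S.outs v).Pairwise (fun e e' => S.slope e < S.slope e') := by
    rw [List.pairwise_iff_getElem]
    intro i j hi hj hij
    have e1 := ((S.mem_outs _ _).1 (List.getElem_mem hi)).1
    have e2 := ((S.mem_outs _ _).1 (List.getElem_mem hj)).1
    have e3 := (S.nodup_outs v).idxOf_getElem i hi
    have e4 := (S.nodup_outs v).idxOf_getElem j hj
    unfold slope
    rw [e1, e2]
    have e5 : (((S.outs v).idxOf (S.outs v)[i] : ℕ) : ℤ) < ((S.outs v).idxOf (S.outs v)[j] : ℕ) := by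
      rw [e3, e4]
      exact_mod_cast hij
    have e6 := sub_lt_sub_right e5 1
    convert e6
  refine h1.imp_of_mem ?_
  intro e e' he he' h
  have e1 := ((S.mem_outs _ _).1 he).1
  have e2 := ((S.mem_outs _ _).1 he').1
  have q1 : S.Q e k = S.X v := by rw [← hk, ← e1, Q_fst]
  have q2 : S.Q e' k = S.X v := by rw [← hk, ← e2, Q_fst]
  have p := strip_pos (Fintype.card V) k
  refine ⟨by rw [q1, q2], ?_⟩
  rw [Q_succ, Q_succ, q1, q2]
  nlinarith

/-- The combinatorial left-to-right order of the edges crossing a strip is the geometric one. -/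
theorem sweep_pairwise {k : ℕ} (hk : k + 1 < Fintype.card V) : (S.Λ k).Pairwise (S.Before k) := by
  induction k with
  | zero =>
    rw [S.zero]
    exact S.outs_pairwise M.lev_s
  | succ k ih =>
    have ih' := ih (by omega)
    obtain ⟨v, hv⟩ := M.lev_surj (k + 1) (by omega)
    have hvs : v ≠ M.s := by
      rintro rfl
      rw [M.lev_s] at hv
      omega
    have hvt : v ≠ M.t := by
      rintro rfl
      have := M.lev_t
      omega
    obtain ⟨A, B, h1, h2⟩ := S.step v k hv
    have hmem := S.mem k (by omega)
    have hmem' := S.mem (k + 1) hk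
    rw [h1] at ih' hmem
    rw [h2 hvt] at hmem' ⊢
    -- the position of a dart leaving `v` agrees at this level with that of the straight edge
    have hX : S.X v = S.Q (S.prim v) (k + 1) := by rw [S.X_eq hvs, hv]
    have hpm := S.prim_mem hvs
    have hout : ∀ e ∈ S.outs v, S.Q e (k + 1) = S.X v := by
      intro e he
      have e1 := ((S.mem_outs _ _).1 he).1
      rw [← hv, ← e1, Q_fst]
    have hlt : ∀ e e', e ∈ A ++ S.outs v ++ B → e' ∈ A ++ S.outs v ++ B →
        S.Q e (k + 1) < S.Q e' (k + 1) → S.Before (k + 1) e e' := by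
      intro e e' he he' h
      obtain ⟨a1, a2, a3, a4⟩ := (hmem' e).1 he
      obtain ⟨b1, b2, b3, b4⟩ := (hmem' e').1 he'
      exact ⟨h.le, S.Q_lt_step a1 a2 b1 b2 (by omega) a3 b3 h⟩
    rw [List.pairwise_append, List.pairwise_append] at ih' ⊢
    obtain ⟨⟨hA, hI, hAI⟩, hB, hAIB⟩ := ih'
    refine ⟨⟨?_, S.outs_pairwise hv, ?_⟩, ?_, ?_⟩
    · refine hA.imp_of_mem ?_
      intro e e' he he' h
      exact hlt e e' (by simp [he]) (by simp [he']) h.2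
    · intro e he e' he'
      refine hlt e e' (by simp [he]) (by simp [he']) ?_
      rw [hout e' he', hX]
      exact (hAI e he _ hpm).2
    · refine hB.imp_of_mem ?_
      intro e e' he he' h
      exact hlt e e' (by simp [he]) (by simp [he']) h.2
    · intro e he e' he'
      refine hlt e e' ?_ (by simp [he']) ?_
      · simp only [List.mem_append] at he ⊢
        exact Or.inl he
      · rcases List.mem_append.1 he with he | he
        · exact (hAIB e (by simp [he]) e' he').2
        · rw [hout e he, hX]
          exact (hAIB _ (by simp [hpm]) e' he').2

lemma Before.ne_or {k : ℕ} (hk : k + 1 < Fintype.card V) {e e' : G.Dart} (he : e ∈ S.Λ k)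
    (he' : e' ∈ S.Λ k) (hne : e ≠ e') : S.Before k e e' ∨ S.Before k e' e := by
  have h := S.sweep_pairwise hk
  rw [List.pairwise_iff_getElem] at h
  obtain ⟨i, hi, rfl⟩ := List.mem_iff_getElem.1 he
  obtain ⟨j, hj, rfl⟩ := List.mem_iff_getElem.1 he'
  rcases lt_trichotomy i j with hij | rfl | hij
  · exact Or.inl (h i j hi hj hij)
  · exact absurd rfl hne
  · exact Or.inr (h j i hj hi hij)

/-- An edge that passes a vertex lies to the left of all its incoming edges or to the right of all
of them. -/
lemma passing {v : V} {k : ℕ} (hv : M.lev v = k + 1) {d : G.Dart} (hu : Up M.lev d)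
    (h0 : d ≠ M.d₀) (h1 : M.lev d.fst ≤ k) (h2 : k + 1 < M.lev d.snd) :
    (∀ e ∈ S.ins v, S.Q d (k + 1) < S.Q e (k + 1)) ∨
      (∀ e ∈ S.ins v, S.Q e (k + 1) < S.Q d (k + 1)) := by
  have hk : k + 1 < Fintype.card V := hv ▸ M.lev_lt v
  have hd : d ∈ S.Λ k := (S.mem k hk d).2 ⟨hu, h0, h1, by omega⟩
  have hp := S.sweep_pairwise hk
  obtain ⟨A, B, h3, -⟩ := S.step v k hv
  have hdv : d ∉ S.ins v := by
    intro h
    have h4 := ((S.mem_ins _ _).1 h).1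
    rw [h4] at h2
    omega
  rw [h3, List.pairwise_append, List.pairwise_append] at hp
  obtain ⟨⟨-, -, hAI⟩, -, hAIB⟩ := hp
  rw [h3, List.mem_append, List.mem_append] at hd
  rcases hd with (hd | hd) | hd
  · exact Or.inl fun e he => (hAI d hd e he).2
  · exact absurd hd hdv
  · exact Or.inr fun e he => (hAIB e (List.mem_append_right _ he) d hd).2

lemma ins_pairwise {v : V} (hv : v ≠ M.s) :
    (S.ins v).Pairwise fun e e' => S.Q e (M.lev v) < S.Q e' (M.lev v) := by
  obtain ⟨k, hk⟩ : ∃ k, M.lev v = k + 1 := by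
    refine ⟨M.lev v - 1, ?_⟩
    have : M.lev v ≠ M.lev M.s := fun h => hv (M.lev_inj h)
    rw [M.lev_s] at this
    omega
  have hp := S.sweep_pairwise (hk ▸ M.lev_lt v)
  obtain ⟨A, B, h3, -⟩ := S.step v k hk
  rw [h3, List.pairwise_append, List.pairwise_append] at hp
  rw [hk]
  exact hp.1.2.1.imp fun h => h.2

/-- Two bent incoming edges reach a vertex from opposite sides. -/
lemma opposite {v : V} (hv : v ≠ M.s) {d d' : G.Dart} (hd : d ∈ S.ins v) (hd' : d' ∈ S.ins v)
    (hne : d ≠ d') (h : d ≠ S.prim v) (h' : d' ≠ S.prim v) :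
    (S.Q d (M.lev v) < S.X v ∧ S.X v < S.Q d' (M.lev v)) ∨
      (S.Q d' (M.lev v) < S.X v ∧ S.X v < S.Q d (M.lev v)) := by
  have hp := S.ins_pairwise hv
  have hl := S.length_ins v
  rw [S.X_eq hv]
  unfold prim at h h' ⊢
  generalize S.ins v = l at *
  rcases l with _ | ⟨a, _ | ⟨b, _ | ⟨c, _ | ⟨e, l⟩⟩⟩⟩
  · simp at hd
  · simp at hd hd' h h'
    simp_all
  · simp at hd hd' h h'
    simp_all
  · simp at hd hd' h h' hp ⊢
    rcases hd with rfl | rfl | rfl <;> rcases hd' with rfl | rfl | rfl <;> simp_all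
  · simp at hl
    omega

lemma ne_of_not_prim {v : V} (hv : v ≠ M.s) {d : G.Dart} (hd : d ∈ S.ins v) (h : d ≠ S.prim v) :
    S.Q d (M.lev v) ≠ S.X v := by
  rw [S.X_eq hv]
  intro he
  have hp := S.ins_pairwise hv
  rw [List.pairwise_iff_getElem] at hp
  obtain ⟨i, hi, rfl⟩ := List.mem_iff_getElem.1 hd
  obtain ⟨j, hj, hj'⟩ := List.mem_iff_getElem.1 (S.prim_mem hv)
  rw [← hj'] at he h
  rcases lt_trichotomy i j with hij | rfl | hij
  · have := hp i j hi hj hij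
    omega
  · exact h rfl
  · have := hp j i hj hi hij
    omega

lemma abs_X_le (v : V) : |S.X v| ≤ S.Y v := by
  induction h : M.lev v using Nat.strong_induction_on generalizing v with
  | _ n ih =>
    by_cases hv : v = M.s
    · rw [hv, X_s, Y, M.lev_s, height_zero]
      simp
    · have h1 := S.prim_lt hv
      obtain ⟨-, p1, p2⟩ := (S.mem_ins _ _).1 (S.prim_mem hv)
      have h2 := ih _ (h ▸ h1) _ rfl
      have h3 := (height_strictMono (Fintype.card V)) h1
      have h4 := abs_le.2 (S.slope_bounds p1 p2)
      rw [S.X_eq hv]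
      unfold Q
      refine (abs_add_le _ _).trans ?_
      rw [abs_mul]
      change S.Y _ < S.Y v at h3
      change _ + _ * |S.Y v - _| ≤ _
      rw [abs_of_pos (show 0 < S.Y v - S.Y (S.prim v).fst by omega)]
      nlinarith

end Sweep
end Coordinates
end OctiProof

namespace OctiProof

/-! ### Polylines with at most three segments -/

section Polylines

/-- A polyline with one segment. -/
def poly1 (a b : ℝ × ℝ) : Polyline := ⟨1, le_rfl, fun i => if i = 0 then a else b⟩

/-- A polyline with two segments. -/
def poly2 (a b c : ℝ × ℝ) : Polyline :=
  ⟨2, one_le_two, fun i => if i = 0 then a else if i = 1 then b else c⟩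

/-- A polyline with three segments. -/
def poly3 (a b c d : ℝ × ℝ) : Polyline :=
  ⟨3, by norm_num, fun i => if i = 0 then a else if i = 1 then b else if i = 2 then c else d⟩

lemma exists_seg (P : Polyline) {s : ℝ} (hs : s ∈ Set.Icc 0 (P.len : ℝ)) :
    ∃ i < P.len, ∃ t : ℝ, 0 ≤ t ∧ t ≤ 1 ∧ s = i + t := by
  obtain ⟨h0, h1⟩ := hs
  rcases h1.lt_or_eq with h1 | rfl
  · refine ⟨⌊s⌋₊, (Nat.floor_lt h0).2 h1, s - ⌊s⌋₊, ?_, ?_, by ring⟩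
    · linarith [Nat.floor_le h0]
    · linarith [Nat.lt_floor_add_one s]
  · have hp := P.len_pos
    refine ⟨P.len - 1, by omega, 1, zero_le_one, le_rfl, ?_⟩
    rw [Nat.cast_sub hp]
    push_cast
    ring

lemma exists_of_mem_image {P : Polyline} {p : ℝ × ℝ} (h : p ∈ P.image) :
    ∃ i < P.len, ∃ t : ℝ, 0 ≤ t ∧ t ≤ 1 ∧ p = P.pt i + t • (P.pt (i + 1) - P.pt i) := by
  obtain ⟨s, hs, rfl⟩ := h
  obtain ⟨i, hi, t, h0, h1, rfl⟩ := exists_seg P hs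
  exact ⟨i, hi, t, h0, h1, param_seg P i h0 h1⟩

lemma pt_zero_mem (P : Polyline) : P.pt 0 ∈ P.image :=
  ⟨0, ⟨le_rfl, Nat.cast_nonneg _⟩, by simpa using param_nat P 0⟩

lemma pt_len_mem (P : Polyline) : P.pt P.len ∈ P.image :=
  ⟨P.len, ⟨Nat.cast_nonneg _, le_rfl⟩, param_nat P P.len⟩

lemma simple_of_segments {P : Polyline} (h1 : ∀ i < P.len, P.pt i ≠ P.pt (i + 1))
    (h2 : ∀ i j, i < j → j < P.len → ∀ s t : ℝ, 0 ≤ s → s ≤ 1 → 0 ≤ t → t ≤ 1 →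
      P.pt i + s • (P.pt (i + 1) - P.pt i) = P.pt j + t • (P.pt (j + 1) - P.pt j) →
      j = i + 1 ∧ s = 1 ∧ t = 0) : P.Simple := by
  intro a ha b hb hab
  obtain ⟨i, hi, s, s0, s1, rfl⟩ := exists_seg P ha
  obtain ⟨j, hj, t, t0, t1, rfl⟩ := exists_seg P hb
  rw [param_seg P i s0 s1, param_seg P j t0 t1] at hab
  rcases lt_trichotomy i j with hij | rfl | hij
  · obtain ⟨rfl, rfl, rfl⟩ := h2 i j hij hj s t s0 s1 t0 t1 hab
    push_cast
    ring
  · have h3 : (s - t) • (P.pt (i + 1) - P.pt i) = 0 := by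
      rw [sub_smul, sub_eq_zero]
      exact add_left_cancel hab
    rcases smul_eq_zero.1 h3 with h | h
    · rw [sub_eq_zero.1 h]
    · exact absurd (sub_eq_zero.1 h).symm (h1 i hi)
  · obtain ⟨rfl, rfl, rfl⟩ := h2 j i hij hi t s t0 t1 s0 s1 hab.symm
    push_cast
    ring

lemma not_collinear_of_cross {a b c : ℝ × ℝ}
    (h : (b.1 - a.1) * (c.2 - a.2) - (b.2 - a.2) * (c.1 - a.1) ≠ 0) :
    ¬ Collinear ℝ ({a, b, c} : Set (ℝ × ℝ)) := by
  intro hc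
  rw [collinear_iff_of_mem (p₀ := a) (by simp)] at hc
  obtain ⟨v, hv⟩ := hc
  obtain ⟨r, hr⟩ := hv b (by simp)
  obtain ⟨q, hq⟩ := hv c (by simp)
  apply h
  rw [hr, hq]
  simp
  ring

lemma poly1_ok {a b : ℝ × ℝ} (h : a.2 < b.2) (ho : Polyline.OctiSeg a b) :
    (poly1 a b).Simple ∧ (poly1 a b).Octilinear := by
  have hne : a ≠ b := fun e => by rw [e] at h; exact lt_irrefl _ h
  have h1 : ∀ i < (poly1 a b).len, (poly1 a b).pt i ≠ (poly1 a b).pt (i + 1) := by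
    intro i hi
    change i < 1 at hi
    interval_cases i
    simpa [poly1] using hne
  refine ⟨simple_of_segments h1 ?_, ⟨h1, ?_⟩, ?_⟩
  · intro i j hij hj
    change j < 1 at hj
    omega
  · intro i hi
    change i + 1 < 1 at hi
    omega
  · intro i hi
    change i < 1 at hi
    interval_cases i
    simpa [poly1] using ho

/-- A rising segment followed by a horizontal one. -/
lemma poly2_ok {a b c : ℝ × ℝ} (h : a.2 < b.2) (ho : Polyline.OctiSeg a b) (hbc : b.2 = c.2)
    (hne : b.1 ≠ c.1) : (poly2 a b c).Simple ∧ (poly2 a b c).Octilinear := by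
  have hab : a ≠ b := fun e => by rw [e] at h; exact lt_irrefl _ h
  have hbc' : b ≠ c := fun e => hne (by rw [e])
  have h1 : ∀ i < (poly2 a b c).len, (poly2 a b c).pt i ≠ (poly2 a b c).pt (i + 1) := by
    intro i hi
    change i < 2 at hi
    interval_cases i
    · simpa [poly2] using hab
    · simpa [poly2] using hbc'
  refine ⟨simple_of_segments h1 ?_, ⟨h1, ?_⟩, ?_⟩
  · intro i j hij hj s t s0 s1 t0 t1 he
    change j < 2 at hj
    obtain ⟨rfl, rfl⟩ : i = 0 ∧ j = 1 := by omega
    have e1 := congrArg Prod.fst he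
    have e2 := congrArg Prod.snd he
    simp [poly2] at e1 e2
    have hs : s = 1 := by
      have : (1 - s) * (b.2 - a.2) = 0 := by rw [← hbc] at e2; linarith
      rcases mul_eq_zero.1 this with h' | h' <;> linarith
    subst hs
    refine ⟨rfl, rfl, ?_⟩
    have : t * (c.1 - b.1) = 0 := by linarith
    rcases mul_eq_zero.1 this with h' | h'
    · exact h'
    · exact absurd (by linarith) hne
  · intro i hi
    change i + 1 < 2 at hi
    obtain rfl : i = 0 := by omega
    refine not_collinear_of_cross ?_
    simp [poly2]
    rw [← hbc, show (b.1 - a.1) * (b.2 - a.2) - (b.2 - a.2) * (c.1 - a.1) =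
      (b.2 - a.2) * (b.1 - c.1) by ring]
    exact mul_ne_zero (sub_ne_zero.2 h.ne') (sub_ne_zero.2 hne)
  · intro i hi
    change i < 2 at hi
    interval_cases i
    · simpa [poly2] using ho
    · left
      simp [poly2, hbc]

/-- The outer edge: left, then up, then diagonally down to the right. -/
lemma poly3_ok {m x y : ℝ} (h1 : 0 < m) (h2 : 0 < y) (h3 : 0 < x + m) :
    (poly3 (0, 0) (-m, 0) (-m, y + x + m) (x, y)).Simple ∧
      (poly3 (0, 0) (-m, 0) (-m, y + x + m) (x, y)).Octilinear := by
  have hd : ∀ i < (poly3 (0, 0) (-m, 0) (-m, y + x + m) (x, y)).len,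
      (poly3 (0, 0) (-m, 0) (-m, y + x + m) (x, y)).pt i ≠
        (poly3 (0, 0) (-m, 0) (-m, y + x + m) (x, y)).pt (i + 1) := by
    intro i hi
    change i < 3 at hi
    interval_cases i
    · simp [poly3, h1.ne']
    · simp [poly3]
      linarith
    · simp [poly3]
      intro h
      linarith
  refine ⟨simple_of_segments hd ?_, ⟨hd, ?_⟩, ?_⟩
  · intro i j hij hj s t s0 s1 t0 t1 he
    change j < 3 at hj
    obtain ⟨rfl, rfl⟩ | ⟨rfl, rfl⟩ | ⟨rfl, rfl⟩ :
      (i = 0 ∧ j = 1) ∨ (i = 0 ∧ j = 2) ∨ (i = 1 ∧ j = 2) := by omega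
    · have e1 := congrArg Prod.fst he
      have e2 := congrArg Prod.snd he
      simp [poly3] at e1 e2
      refine ⟨rfl, ?_, ?_⟩
      · have : m * (1 - s) = 0 := by linarith
        rcases mul_eq_zero.1 this with h | h <;> linarith
      · rcases e2 with h | h <;> linarith
    · have e2 := congrArg Prod.snd he
      simp [poly3] at e2
      nlinarith
    · have e1 := congrArg Prod.fst he
      have e2 := congrArg Prod.snd he
      simp [poly3] at e1 e2
      have ht : t = 0 := by
        rcases e1 with h | h
        · exact h
        · linarith
      subst ht
      refine ⟨rfl, ?_, rfl⟩
      have : (y + x + m) * (s - 1) = 0 := by linarith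
      rcases mul_eq_zero.1 this with h | h <;> linarith
  · intro i hi
    change i + 1 < 3 at hi
    obtain rfl | rfl : i = 0 ∨ i = 1 := by omega
    · refine not_collinear_of_cross ?_
      simp [poly3]
      exact ⟨h1.ne', by linarith⟩
    · refine not_collinear_of_cross ?_
      simp [poly3]
      exact ⟨by linarith, by linarith⟩
  · intro i hi
    change i < 3 at hi
    interval_cases i
    · left; simp [poly3]
    · right; left; simp [poly3]
    · right; right; right; simp [poly3]; ring

end Polylines
end OctiProof

namespace OctiProof

/-! ### The drawing -/

section Drawing
variable {V : Type*} {G : SimpleGraph V} [Fintype V]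

namespace Sweep
variable {M : StMap G} (S : Sweep M)

/-- The position of a vertex. -/
noncomputable def pos (v : V) : ℤ × ℤ := (S.X v, S.Y v)

lemma Y_le_iff {u v : V} : S.Y u ≤ S.Y v ↔ M.lev u ≤ M.lev v :=
  (height_strictMono _).le_iff_le

lemma Y_lt_iff {u v : V} : S.Y u < S.Y v ↔ M.lev u < M.lev v :=
  (height_strictMono _).lt_iff_lt

lemma pos_injective : Function.Injective S.pos := fun _ _ h =>
  M.lev_inj ((height_strictMono _).injective (congrArg Prod.snd h))

/-- The abscissa at height `y` of the line on which an edge leaves its lower end. -/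
noncomputable def line (d : G.Dart) (y : ℝ) : ℝ := S.X d.fst + S.slope d * (y - S.Y d.fst)

lemma line_height (d : G.Dart) (k : ℕ) : S.line d (height (Fintype.card V) k) = S.Q d k := by
  unfold line Q
  push_cast
  ring

lemma line_Y (d : G.Dart) (v : V) : S.line d (S.Y v) = S.Q d (M.lev v) := S.line_height d _

/-- The curve along which an edge other than `s t` is drawn: it rises on its line up to the height
of its upper end, and continues horizontally to the upper end. -/
def curve (d : G.Dart) : Set (ℝ × ℝ) :=
  {p | S.Y d.fst ≤ p.2 ∧ p.2 ≤ S.Y d.snd ∧ p.1 = S.line d p.2} ∪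
    {p | p.2 = S.Y d.snd ∧ p.1 ∈ Set.uIcc (S.Q d (M.lev d.snd) : ℝ) (S.X d.snd)}

lemma curve_bounds {d : G.Dart} (hd : Up M.lev d) {p : ℝ × ℝ} (hp : p ∈ S.curve d) :
    S.Y d.fst ≤ p.2 ∧ p.2 ≤ S.Y d.snd := by
  rcases hp with hp | hp
  · exact ⟨hp.1, hp.2.1⟩
  · rw [hp.1]
    exact ⟨by exact_mod_cast (S.Y_lt_iff.2 hd).le, le_rfl⟩

/-- The lines of two edges are affine, so their order inside a strip follows from its two ends. -/
lemma Before.line_lt {k : ℕ} {e e' : G.Dart} (h : S.Before k e e') {y : ℝ}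
    (h1 : height (Fintype.card V) k < y) (h2 : y ≤ height (Fintype.card V) (k + 1)) :
    S.line e y < S.line e' y := by
  obtain ⟨a, b⟩ := h
  have a' : S.line e (height (Fintype.card V) k) ≤ S.line e' (height (Fintype.card V) k) := by
    rw [line_height, line_height]
    exact_mod_cast a
  have b' : S.line e (height (Fintype.card V) (k + 1)) <
      S.line e' (height (Fintype.card V) (k + 1)) := by
    rw [line_height, line_height]
    exact_mod_cast b
  unfold line at *
  generalize (height (Fintype.card V) k : ℝ) = y0 at *
  generalize (height (Fintype.card V) (k + 1) : ℝ) = y1 at *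
  have key : (S.X e'.fst + S.slope e' * (y - S.Y e'.fst) -
      (S.X e.fst + S.slope e * (y - S.Y e.fst))) * (y1 - y0) =
    (S.X e'.fst + S.slope e' * (y0 - S.Y e'.fst) -
      (S.X e.fst + S.slope e * (y0 - S.Y e.fst))) * (y1 - y) +
    (S.X e'.fst + S.slope e' * (y1 - S.Y e'.fst) -
      (S.X e.fst + S.slope e * (y1 - S.Y e.fst))) * (y - y0) := by ring
  have k1 : 0 ≤ (S.X e'.fst + S.slope e' * (y0 - S.Y e'.fst) -
      (S.X e.fst + S.slope e * (y0 - S.Y e.fst))) * (y1 - y) :=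
    mul_nonneg (by linarith) (by linarith)
  have k2 : 0 < (S.X e'.fst + S.slope e' * (y1 - S.Y e'.fst) -
      (S.X e.fst + S.slope e * (y1 - S.Y e.fst))) * (y - y0) :=
    mul_pos (by linarith) (by linarith)
  have k3 : 0 < (S.X e'.fst + S.slope e' * (y - S.Y e'.fst) -
      (S.X e.fst + S.slope e * (y - S.Y e.fst))) :=
    pos_of_mul_pos_left (by rw [key]; linarith) (by linarith : 0 ≤ y1 - y0)
  linarith

lemma exists_level_of_nonneg (N : ℕ) {y : ℝ} (h : 0 ≤ y) :
    ∃ k : ℕ, (height N k : ℝ) ≤ y ∧ y < height N (k + 1) := by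
  classical
  have hk : ∀ k : ℕ, (k : ℤ) ≤ height N k := by
    intro k
    induction k with
    | zero => simp [height_zero]
    | succ k ih =>
      have := strip_pos N k
      rw [height_succ]
      push_cast
      omega
  have hex : ∃ k : ℕ, y < height N (k + 1) := by
    obtain ⟨k, hk'⟩ := exists_nat_gt y
    refine ⟨k, hk'.trans_le ?_⟩
    have h1 := hk k
    have h2 := (height_strictMono N).monotone (Nat.le_succ k)
    exact_mod_cast h1.trans h2
  refine ⟨Nat.find hex, ?_, Nat.find_spec hex⟩
  rcases h0 : Nat.find hex with _ | k
  · simpa [height_zero] using h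
  · exact not_lt.1 (Nat.find_min hex (by rw [h0]; exact Nat.lt_succ_self k))

lemma Y_nonneg (v : V) : 0 ≤ S.Y v := (abs_nonneg _).trans (S.abs_X_le v)

/-- What an edge may do at the height of a vertex `w`: start there, end there, or pass. -/
lemma curve_at {d : G.Dart} (hd : Up M.lev d) {p : ℝ × ℝ} (hp : p ∈ S.curve d) {w : V}
    (hw : p.2 = S.Y w) :
    (d.fst = w ∧ p.1 = S.X w) ∨
      (d.snd = w ∧ p.1 ∈ Set.uIcc (S.Q d (M.lev w) : ℝ) (S.X w)) ∨
      (M.lev d.fst < M.lev w ∧ M.lev w < M.lev d.snd ∧ p.1 = S.Q d (M.lev w)) := by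
  obtain ⟨b1, b2⟩ := S.curve_bounds hd hp
  rw [hw] at b1 b2
  have c1 : M.lev d.fst ≤ M.lev w := S.Y_le_iff.1 (by exact_mod_cast b1)
  have c2 : M.lev w ≤ M.lev d.snd := S.Y_le_iff.1 (by exact_mod_cast b2)
  rcases hp with ⟨-, -, hp⟩ | ⟨hp1, hp2⟩
  · rw [hw, line_Y] at hp
    rcases c1.eq_or_lt with e | c1
    · have e' := M.lev_inj e
      subst e'
      left
      refine ⟨rfl, ?_⟩
      rw [hp, Q_fst]
    · rcases c2.eq_or_lt with e | c2
      · have e' := M.lev_inj e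
        subst e'
        right; left
        refine ⟨rfl, ?_⟩
        rw [hp]
        exact Set.left_mem_uIcc
      · exact Or.inr (Or.inr ⟨c1, c2, hp⟩)
  · have : w = d.snd := by
      apply M.lev_inj
      rw [hw] at hp1
      exact (height_strictMono _).injective (by exact_mod_cast hp1)
    subst this
    exact Or.inr (Or.inl ⟨rfl, hp2⟩)

lemma passing_ne {d : G.Dart} (hd : Up M.lev d) (hd0 : d ≠ M.d₀) {w : V}
    (h1 : M.lev d.fst < M.lev w) (h2 : M.lev w < M.lev d.snd) {e : G.Dart} (he : e ∈ S.ins w)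
    {x : ℝ} (hx : x ∈ Set.uIcc (S.Q e (M.lev w) : ℝ) (S.X w)) : x ≠ S.Q d (M.lev w) := by
  have hws : w ≠ M.s := by
    rintro rfl
    rw [M.lev_s] at h1
    omega
  obtain ⟨k, hk⟩ : ∃ k, M.lev w = k + 1 := ⟨M.lev w - 1, by omega⟩
  have hX := S.X_eq hws
  have hpm := S.prim_mem hws
  rcases S.passing hk hd hd0 (by omega) (by omega) with h | h
  · have a := h e he
    have b := h _ hpm
    rw [← hk] at a b
    rw [← hX] at b
    have a' : (S.Q d (M.lev w) : ℝ) < S.Q e (M.lev w) := by exact_mod_cast a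
    have b' : (S.Q d (M.lev w) : ℝ) < S.X w := by exact_mod_cast b
    exact ((lt_min a' b').trans_le hx.1).ne'
  · have a := h e he
    have b := h _ hpm
    rw [← hk] at a b
    rw [← hX] at b
    have a' : (S.Q e (M.lev w) : ℝ) < S.Q d (M.lev w) := by exact_mod_cast a
    have b' : (S.X w : ℝ) < S.Q d (M.lev w) := by exact_mod_cast b
    exact (hx.2.trans_lt (max_lt a' b')).ne

lemma passing_ne_X {d : G.Dart} (hd : Up M.lev d) (hd0 : d ≠ M.d₀) {w : V}
    (h1 : M.lev d.fst < M.lev w) (h2 : M.lev w < M.lev d.snd) : (S.X w : ℝ) ≠ S.Q d (M.lev w) := by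
  have hws : w ≠ M.s := by
    rintro rfl
    rw [M.lev_s] at h1
    omega
  exact S.passing_ne hd hd0 h1 h2 (S.prim_mem hws) Set.right_mem_uIcc

lemma curve_vertex {d : G.Dart} (hd : Up M.lev d) (hd0 : d ≠ M.d₀) {w : V}
    (h : toR (S.pos w) ∈ S.curve d) : w = d.fst ∨ w = d.snd := by
  rcases S.curve_at hd h (w := w) rfl with h1 | h1 | h1
  · exact Or.inl h1.1.symm
  · exact Or.inr h1.1.symm
  · exact absurd h1.2.2 (S.passing_ne_X hd hd0 h1.1 h1.2.1)

/-- Two edges ending in the same vertex only share this vertex: one of them is straight, or they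
come from opposite sides. -/
lemma eq_X_of_ends {w : V} {d d' : G.Dart} (hd : d ∈ S.ins w) (hd' : d' ∈ S.ins w) (hne : d ≠ d')
    {x : ℝ} (h : x ∈ Set.uIcc (S.Q d (M.lev w) : ℝ) (S.X w))
    (h' : x ∈ Set.uIcc (S.Q d' (M.lev w) : ℝ) (S.X w)) : x = S.X w := by
  have hws : w ≠ M.s := by
    rintro rfl
    obtain ⟨a, b, -⟩ := (S.mem_ins _ _).1 hd
    unfold Up at b
    rw [a, M.lev_s] at b
    omega
  by_cases e : d = S.prim w
  · rw [e, ← S.X_eq hws] at h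
    simpa using h
  by_cases e' : d' = S.prim w
  · rw [e', ← S.X_eq hws] at h'
    simpa using h'
  rcases S.opposite hws hd hd' hne e e' with ⟨a, b⟩ | ⟨a, b⟩
  · have a' : (S.Q d (M.lev w) : ℝ) ≤ S.X w := by exact_mod_cast a.le
    have b' : (S.X w : ℝ) ≤ S.Q d' (M.lev w) := by exact_mod_cast b.le
    rw [Set.uIcc_of_le a'] at h
    rw [Set.uIcc_of_ge b'] at h'
    exact le_antisymm h.2 h'.1
  · have a' : (S.Q d' (M.lev w) : ℝ) ≤ S.X w := by exact_mod_cast a.le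
    have b' : (S.X w : ℝ) ≤ S.Q d (M.lev w) := by exact_mod_cast b.le
    rw [Set.uIcc_of_ge b'] at h
    rw [Set.uIcc_of_le a'] at h'
    exact le_antisymm h'.2 h.1

/-- At a height strictly between two levels the curves are separated by the order `Before`; at the
height of a vertex `w` they can only meet on two edges that both start or both end at `w`. -/
theorem curve_inter {d d' : G.Dart} (hd : Up M.lev d) (hd0 : d ≠ M.d₀) (hd' : Up M.lev d')
    (hd0' : d' ≠ M.d₀) (hne : d ≠ d') {p : ℝ × ℝ} (hp : p ∈ S.curve d) (hp' : p ∈ S.curve d') :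
    ∃ w, (w = d.fst ∨ w = d.snd) ∧ (w = d'.fst ∨ w = d'.snd) ∧ p = toR (S.pos w) := by
  obtain ⟨b1, b2⟩ := S.curve_bounds hd hp
  obtain ⟨b1', b2'⟩ := S.curve_bounds hd' hp'
  have h0 : 0 ≤ p.2 := le_trans (by exact_mod_cast S.Y_nonneg _) b1
  obtain ⟨k, k1, k2⟩ := exists_level_of_nonneg (Fintype.card V) h0
  have lo : ∀ v, (S.Y v : ℝ) ≤ p.2 → M.lev v ≤ k := by
    intro v hv
    have : S.Y v < height (Fintype.card V) (k + 1) := by exact_mod_cast hv.trans_lt k2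
    have := (height_strictMono _).lt_iff_lt.1 this
    omega
  have hi : ∀ v, p.2 ≤ (S.Y v : ℝ) → k ≤ M.lev v := by
    intro v hv
    have : height (Fintype.card V) k ≤ S.Y v := by exact_mod_cast k1.trans hv
    exact (height_strictMono _).le_iff_le.1 this
  rcases k1.lt_or_eq with k1 | k1
  · exfalso
    have hi' : ∀ v, p.2 ≤ (S.Y v : ℝ) → k < M.lev v := by
      intro v hv
      have : height (Fintype.card V) k < S.Y v := by exact_mod_cast k1.trans_le hv
      exact (height_strictMono _).lt_iff_lt.1 this
    have ln : ∀ e : G.Dart, p ∈ S.curve e → p.1 = S.line e p.2 := by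
      intro e he
      rcases he with he | he
      · exact he.2.2
      · have a := lo _ he.1.ge
        have b := hi' _ he.1.le
        omega
    have hk : k + 1 < Fintype.card V := by
      have := M.lev_lt d.snd
      have := hi' _ b2
      omega
    have m : d ∈ S.Λ k := (S.mem k hk d).2 ⟨hd, hd0, lo _ b1, hi' _ b2⟩
    have m' : d' ∈ S.Λ k := (S.mem k hk d').2 ⟨hd', hd0', lo _ b1', hi' _ b2'⟩
    have e1 := ln d hp
    have e2 := ln d' hp'
    rcases Before.ne_or S hk m m' hne with h | h
    · have := Before.line_lt S h k1 k2.le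
      linarith
    · have := Before.line_lt S h k1 k2.le
      linarith
  · obtain ⟨w, rfl⟩ := M.lev_surj k ((hi _ b2).trans_lt (M.lev_lt _))
    have hw : p.2 = S.Y w := k1.symm
    have fin : p.1 = S.X w → p = toR (S.pos w) := fun h => Prod.ext h hw
    have hin : ∀ e : G.Dart, Up M.lev e → e ≠ M.d₀ → e.snd = w → e ∈ S.ins w :=
      fun e h1 h2 h3 => (S.mem_ins _ _).2 ⟨h3, h1, h2⟩
    rcases S.curve_at hd hp hw with ⟨h1, h2⟩ | ⟨h1, h2⟩ | ⟨h1, h1', h2⟩ <;>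
    rcases S.curve_at hd' hp' hw with ⟨g1, g2⟩ | ⟨g1, g2⟩ | ⟨g1, g1', g2⟩
    · exact ⟨w, Or.inl h1.symm, Or.inl g1.symm, fin h2⟩
    · exact ⟨w, Or.inl h1.symm, Or.inr g1.symm, fin h2⟩
    · exact absurd (h2.symm.trans g2) (S.passing_ne_X hd' hd0' g1 g1')
    · exact ⟨w, Or.inr h1.symm, Or.inl g1.symm, fin g2⟩
    · exact ⟨w, Or.inr h1.symm, Or.inr g1.symm,
        fin (S.eq_X_of_ends (hin d hd hd0 h1) (hin d' hd' hd0' g1) hne h2 g2)⟩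
    · exact absurd g2 (S.passing_ne hd' hd0' g1 g1' (hin d hd hd0 h1) h2)
    · exact absurd (g2.symm.trans h2) (S.passing_ne_X hd hd0 h1 h1')
    · exact absurd h2 (S.passing_ne hd hd0 h1 h1' (hin d' hd' hd0' g1) g2)
    · exfalso
      obtain ⟨k, hk⟩ : ∃ k, M.lev w = k + 1 := ⟨M.lev w - 1, by omega⟩
      have hk' : k + 1 < Fintype.card V := hk ▸ M.lev_lt w
      have m : d ∈ S.Λ k := (S.mem k hk' d).2 ⟨hd, hd0, by omega, by omega⟩
      have m' : d' ∈ S.Λ k := (S.mem k hk' d').2 ⟨hd', hd0', by omega, by omega⟩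
      have e : S.Q d (k + 1) = S.Q d' (k + 1) := by
        rw [← hk]
        exact_mod_cast h2.symm.trans g2
      rcases Before.ne_or S hk' m m' hne with h | h
      · exact absurd e h.2.ne
      · exact h.2.ne e.symm

/-- The drawing lies in the cone above the source. -/
lemma curve_cone {d : G.Dart} (hd : Up M.lev d) (hd0 : d ≠ M.d₀) {p : ℝ × ℝ}
    (hp : p ∈ S.curve d) : |p.1| ≤ p.2 := by
  have hl : ∀ y : ℝ, S.Y d.fst ≤ y → |S.line d y| ≤ y := by
    intro y hy
    have h1 : |(S.X d.fst : ℝ)| ≤ S.Y d.fst := by exact_mod_cast S.abs_X_le d.fst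
    have h2 : |(S.slope d : ℝ)| ≤ 1 := by exact_mod_cast abs_le.2 (S.slope_bounds hd hd0)
    unfold line
    refine (abs_add_le _ _).trans ?_
    rw [abs_mul, abs_of_nonneg (sub_nonneg.2 hy)]
    nlinarith
  rcases hp with ⟨h1, h2, h3⟩ | ⟨h1, h2⟩
  · rw [h3]
    exact hl _ h1
  · have h3 := hl (S.Y d.snd) (by exact_mod_cast (S.Y_lt_iff.2 hd).le)
    rw [line_Y, abs_le] at h3
    have h4 : |(S.X d.snd : ℝ)| ≤ S.Y d.snd := by exact_mod_cast S.abs_X_le d.snd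
    rw [abs_le] at h4
    rw [h1, abs_le]
    exact ⟨(le_min h3.1 h4.1).trans h2.1, h2.2.trans (max_le h3.2 h4.2)⟩

/-- A set containing the outer edge `s t`. -/
def outer : Set (ℝ × ℝ) :=
  {p | p.2 = 0} ∪ {p | p.1 = -(S.Y M.t + 1)} ∪
    {p | S.Y M.t ≤ p.2 ∧ p.1 + p.2 = S.X M.t + S.Y M.t}

/-- The outer edge meets the part of the cone that contains the drawing only at `s` and `t`. -/
lemma outer_cone {p : ℝ × ℝ} (hp : p ∈ S.outer) (h1 : |p.1| ≤ p.2) (h2 : p.2 ≤ S.Y M.t) :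
    p = toR (S.pos M.s) ∨ p = toR (S.pos M.t) := by
  rw [abs_le] at h1
  rcases hp with (hp | hp) | hp
  · left
    have hp : p.2 = 0 := hp
    rw [hp] at h1
    refine Prod.ext ?_ ?_
    · simp [toR, pos, S.X_s]
      linarith
    · simp [toR, pos, Y, M.lev_s, height_zero, hp]
  · have hp : p.1 = -(S.Y M.t + 1) := hp
    linarith
  · right
    obtain ⟨a, b⟩ := hp
    have c : p.2 = S.Y M.t := le_antisymm h2 a
    refine Prod.ext ?_ c
    change p.1 = S.X M.t
    linarith

lemma Y_le_t (v : V) : S.Y v ≤ S.Y M.t := by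
  rw [Y_le_iff]
  have := M.lev_lt v
  have := M.lev_t
  omega

lemma outer_vertex {w : V} (h : toR (S.pos w) ∈ S.outer) : w = M.s ∨ w = M.t := by
  have hinj : Function.Injective toR := by
    rintro ⟨a, b⟩ ⟨c, d⟩ h
    simpa [toR] using h
  rcases S.outer_cone h (by
    change |(S.X w : ℝ)| ≤ S.Y w
    exact_mod_cast S.abs_X_le w) (by
    change (S.Y w : ℝ) ≤ S.Y M.t
    exact_mod_cast S.Y_le_t w) with h | h
  · exact Or.inl (S.pos_injective (hinj h))
  · exact Or.inr (S.pos_injective (hinj h))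

theorem outer_inter {d : G.Dart} (hd : Up M.lev d) (hd0 : d ≠ M.d₀) {p : ℝ × ℝ}
    (hp : p ∈ S.curve d) (hp' : p ∈ S.outer) :
    ∃ w, (w = d.fst ∨ w = d.snd) ∧ (w = M.s ∨ w = M.t) ∧ p = toR (S.pos w) := by
  have h1 := S.curve_cone hd hd0 hp
  have h2 : p.2 ≤ S.Y M.t := (S.curve_bounds hd hp).2.trans (by exact_mod_cast S.Y_le_t _)
  rcases S.outer_cone hp' h1 h2 with rfl | rfl
  · exact ⟨M.s, S.curve_vertex hd hd0 hp, Or.inl rfl, rfl⟩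
  · exact ⟨M.t, S.curve_vertex hd hd0 hp, Or.inr rfl, rfl⟩

open Classical in
/-- The polyline of an up dart: straight for the edge `prim v` into a vertex `v`, around the drawing
for the edge `s t`, and with a horizontal last segment otherwise. -/
noncomputable def polyOf (d : G.Dart) : Polyline :=
  if d = M.d₀ then
    poly3 (0, 0) (-(S.Y M.t + 1), 0) (-(S.Y M.t + 1), S.Y M.t + S.X M.t + (S.Y M.t + 1))
      (S.X M.t, S.Y M.t)
  else if d = S.prim d.snd then poly1 (toR (S.pos d.fst)) (toR (S.pos d.snd))
  else poly2 (toR (S.pos d.fst)) (S.Q d (M.lev d.snd), S.Y d.snd) (toR (S.pos d.snd))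

lemma polyOf_zero (d : G.Dart) : (S.polyOf d).pt 0 = toR (S.pos d.fst) := by
  unfold polyOf
  split_ifs with h1 h2
  · rw [h1]
    change ((0 : ℝ), (0 : ℝ)) = (((S.X M.s : ℤ) : ℝ), ((S.Y M.s : ℤ) : ℝ))
    simp [S.X_s, Y, M.lev_s, height_zero]
  · rfl
  · rfl

lemma polyOf_len (d : G.Dart) : (S.polyOf d).pt (S.polyOf d).len = toR (S.pos d.snd) := by
  unfold polyOf
  split_ifs with h1 h2
  · rw [h1]
    rfl
  · rfl
  · rfl

lemma octiSeg_line {d : G.Dart} (hd : Up M.lev d) (hd0 : d ≠ M.d₀) :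
    Polyline.OctiSeg (toR (S.pos d.fst)) (S.Q d (M.lev d.snd), S.Y d.snd) := by
  have h := S.slope_bounds hd hd0
  have hq : (S.Q d (M.lev d.snd) : ℝ) = S.X d.fst + S.slope d * (S.Y d.snd - S.Y d.fst) := by
    rw [← line_Y]
    rfl
  have hs : S.slope d = -1 ∨ S.slope d = 0 ∨ S.slope d = 1 := by omega
  unfold Polyline.OctiSeg
  simp only [hq, toR, pos]
  rcases hs with h | h | h
  · right; right; right
    rw [h]; push_cast; ring
  · right; left
    rw [h]; push_cast; ring
  · right; right; left
    rw [h]; push_cast; ring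

lemma snd_ne_s {d : G.Dart} (hd : Up M.lev d) : d.snd ≠ M.s := by
  intro h
  unfold Up at hd
  rw [h, M.lev_s] at hd
  omega

lemma polyOf_ok {d : G.Dart} (hd : Up M.lev d) :
    (S.polyOf d).Simple ∧ (S.polyOf d).Octilinear := by
  have hlt : ((S.Y d.fst : ℤ) : ℝ) < S.Y d.snd := by exact_mod_cast S.Y_lt_iff.2 hd
  unfold polyOf
  split_ifs with h1 h2
  · subst h1
    have a : |(S.X M.t : ℝ)| ≤ S.Y M.t := by exact_mod_cast S.abs_X_le M.t
    rw [abs_le] at a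
    have b : (0 : ℝ) ≤ S.Y M.s := by exact_mod_cast S.Y_nonneg _
    change ((S.Y M.s : ℤ) : ℝ) < S.Y M.t at hlt
    exact poly3_ok (by linarith) (by linarith) (by linarith)
  · refine poly1_ok hlt ?_
    have := S.octiSeg_line hd h1
    have e : S.Q d (M.lev d.snd) = S.X d.snd := by
      rw [S.X_eq (snd_ne_s hd), ← h2]
    rw [e] at this
    exact this
  · refine poly2_ok hlt (S.octiSeg_line hd h1) rfl ?_
    have := S.ne_of_not_prim (snd_ne_s hd) ((S.mem_ins _ _).2 ⟨rfl, hd, h1⟩) h2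
    change ((S.Q d (M.lev d.snd) : ℤ) : ℝ) ≠ S.X d.snd
    exact_mod_cast this

lemma rising_mem {d : G.Dart} (hd : Up M.lev d) {t : ℝ} (h0 : 0 ≤ t) (h1 : t ≤ 1) :
    toR (S.pos d.fst) + t • (((S.Q d (M.lev d.snd) : ℝ), (S.Y d.snd : ℝ)) - toR (S.pos d.fst)) ∈
      S.curve d := by
  have hlt : ((S.Y d.fst : ℤ) : ℝ) < S.Y d.snd := by exact_mod_cast S.Y_lt_iff.2 hd
  left
  have hq : (S.Q d (M.lev d.snd) : ℝ) = S.X d.fst + S.slope d * (S.Y d.snd - S.Y d.fst) := by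
    rw [← line_Y]
    rfl
  simp only [toR, pos, line, Set.mem_ofPred_eq, Prod.fst_add, Prod.snd_add, Prod.smul_fst,
    Prod.smul_snd, Prod.fst_sub, Prod.snd_sub, smul_eq_mul, hq]
  refine ⟨by nlinarith, by nlinarith, by ring⟩

lemma image_subset {d : G.Dart} (hd : Up M.lev d) (h0 : d ≠ M.d₀) :
    (S.polyOf d).image ⊆ S.curve d := by
  intro p hp
  obtain ⟨i, hi, t, t0, t1, rfl⟩ := exists_of_mem_image hp
  clear hp
  unfold polyOf at hi ⊢
  rw [if_neg h0] at hi ⊢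
  split_ifs at hi ⊢ with h2
  · change i < 1 at hi
    interval_cases i
    have e : S.Q d (M.lev d.snd) = S.X d.snd := by
      rw [S.X_eq (snd_ne_s hd), ← h2]
    have := S.rising_mem hd t0 t1
    rw [e] at this
    exact this
  · change i < 2 at hi
    interval_cases i
    · exact S.rising_mem hd t0 t1
    · right
      simp only [poly2, toR, pos]
      constructor
      · simp
      · simp
        rw [Set.mem_uIcc]
        rcases le_total (S.Q d (M.lev d.snd) : ℝ) (S.X d.snd) with h | h
        · left
          constructor <;> nlinarith
        · right
          constructor <;> nlinarith

lemma image_outer : (S.polyOf M.d₀).image ⊆ S.outer := by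
  intro p hp
  obtain ⟨i, hi, t, t0, t1, rfl⟩ := exists_of_mem_image hp
  clear hp
  unfold polyOf at hi ⊢
  rw [if_pos rfl] at hi ⊢
  change i < 3 at hi
  have a : |(S.X M.t : ℝ)| ≤ S.Y M.t := by exact_mod_cast S.abs_X_le M.t
  rw [abs_le] at a
  interval_cases i
  · left; left
    simp [poly3]
  · left; right
    simp [poly3]
  · right
    simp [poly3]
    constructor
    · nlinarith
    · ring

end Sweep
end Drawing
end OctiProof

namespace OctiProof

/-! ### Counting bends -/

section Assembly
variable {V : Type*} {G : SimpleGraph V} [Fintype V]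

namespace Sweep
variable {M : StMap G} (S : Sweep M)

lemma polyOf_vertex {d : G.Dart} (hd : Up M.lev d) {w : V}
    (h : toR (S.pos w) ∈ (S.polyOf d).image) : w = d.fst ∨ w = d.snd := by
  by_cases h0 : d = M.d₀
  · subst h0
    exact S.outer_vertex (S.image_outer h)
  · exact S.curve_vertex hd h0 (S.image_subset hd h0 h)

lemma polyOf_inter {d d' : G.Dart} (hd : Up M.lev d) (hd' : Up M.lev d') (hne : d ≠ d')
    {p : ℝ × ℝ} (hp : p ∈ (S.polyOf d).image) (hp' : p ∈ (S.polyOf d').image) :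
    ∃ w, (w = d.fst ∨ w = d.snd) ∧ (w = d'.fst ∨ w = d'.snd) ∧ p = toR (S.pos w) := by
  by_cases h0 : d = M.d₀
  · have h0' : d' ≠ M.d₀ := fun h => hne (h0.trans h.symm)
    subst h0
    obtain ⟨w, h1, h2, h3⟩ := S.outer_inter hd' h0' (S.image_subset hd' h0' hp') (S.image_outer hp)
    exact ⟨w, h2, h1, h3⟩
  · by_cases h0' : d' = M.d₀
    · subst h0'
      exact S.outer_inter hd h0 (S.image_subset hd h0 hp) (S.image_outer hp')
    · exact S.curve_inter hd h0 hd' h0' hne (S.image_subset hd h0 hp) (S.image_subset hd' h0' hp')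

end Sweep

namespace StMap
variable (M : StMap G)

lemma exists_up {e : Sym2 V} (he : e ∈ G.edgeSet) : ∃ d : G.Dart, Up M.lev d ∧ d.edge = e := by
  induction e with
  | _ u v =>
    have h : G.Adj u v := he
    by_cases hu : Up M.lev (⟨(u, v), h⟩ : G.Dart)
    · exact ⟨_, hu, rfl⟩
    · exact ⟨_, (M.up_symm ⟨(u, v), h⟩).2 hu, SimpleGraph.Dart.edge_symm _⟩

open Classical in
/-- The upward orientation of an edge (with the value `d₀` on pairs that are not edges). -/
noncomputable def dartOf (e : Sym2 V) : G.Dart :=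
  if he : e ∈ G.edgeSet then (M.exists_up he).choose else M.d₀

lemma dartOf_up {e : Sym2 V} (he : e ∈ G.edgeSet) : Up M.lev (M.dartOf e) := by
  rw [dartOf, dif_pos he]
  exact (M.exists_up he).choose_spec.1

lemma dartOf_edge {e : Sym2 V} (he : e ∈ G.edgeSet) : (M.dartOf e).edge = e := by
  rw [dartOf, dif_pos he]
  exact (M.exists_up he).choose_spec.2

lemma dartOf_of_up {d : G.Dart} (hd : Up M.lev d) : M.dartOf d.edge = d := by
  have h1 := M.dartOf_edge d.edge_mem
  rcases SimpleGraph.dart_edge_eq_iff _ _ |>.1 h1 with h | h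
  · exact h
  · have h2 := M.dartOf_up d.edge_mem
    rw [h, M.up_symm] at h2
    exact absurd hd h2

lemma mem_iff_dartOf {e : Sym2 V} (he : e ∈ G.edgeSet) (w : V) :
    w ∈ e ↔ w = (M.dartOf e).fst ∨ w = (M.dartOf e).snd := by
  conv_lhs => rw [← M.dartOf_edge he]
  exact Sym2.mem_iff

lemma dartOf_pair {u v : V} (h : G.Adj u v) {α : Type*} (f : V → α) :
    ({f (M.dartOf s(u, v)).fst, f (M.dartOf s(u, v)).snd} : Set α) = {f u, f v} := by
  have h1 := M.dartOf_edge (e := s(u, v)) h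
  have h2 : s((M.dartOf s(u, v)).fst, (M.dartOf s(u, v)).snd) = s(u, v) := h1
  rcases Sym2.eq_iff.1 h2 with ⟨a, b⟩ | ⟨a, b⟩
  · rw [a, b]
  · rw [a, b, Set.pair_comm]

end StMap

namespace Sweep
variable {M : StMap G} (S : Sweep M)

/-- The octilinear drawing produced by the sweep. -/
noncomputable def drawing : OctiDrawing G where
  pos := S.pos
  inj := S.pos_injective
  poly e := S.polyOf (M.dartOf e)
  ends u v h := by
    rw [S.polyOf_zero, S.polyOf_len]
    exact M.dartOf_pair h (fun w => toR (S.pos w))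
  octi e he := (S.polyOf_ok (M.dartOf_up he)).2

lemma drawing_isPlanar : S.drawing.IsPlanar := by
  refine ⟨fun e he => (S.polyOf_ok (M.dartOf_up he)).1, ?_, ?_⟩
  · intro u v h
    change (S.polyOf (M.dartOf s(u, v))).image ∩ Set.range (fun w => toR (S.pos w)) =
      {toR (S.pos u), toR (S.pos v)}
    rw [← M.dartOf_pair h (fun w => toR (S.pos w))]
    apply Set.Subset.antisymm
    · rintro _ ⟨h1, w, rfl⟩
      rcases S.polyOf_vertex (M.dartOf_up (e := s(u, v)) h) h1 with h2 | h2
      · exact Or.inl (by rw [h2])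
      · exact Or.inr (by rw [h2]; rfl)
    · rintro _ (rfl | rfl)
      · exact ⟨by rw [← S.polyOf_zero]; exact pt_zero_mem _, _, rfl⟩
      · exact ⟨by rw [← S.polyOf_len]; exact pt_len_mem _, _, rfl⟩
  · rintro e he e' he' hne p ⟨h1, h2⟩
    have hne' : M.dartOf e ≠ M.dartOf e' := by
      intro h
      apply hne
      rw [← M.dartOf_edge he, ← M.dartOf_edge he', h]
    obtain ⟨w, a, b, c⟩ := S.polyOf_inter (M.dartOf_up he) (M.dartOf_up he') hne' h1 h2
    exact ⟨w, ⟨(M.mem_iff_dartOf he w).2 a, (M.mem_iff_dartOf he' w).2 b⟩, c.symm⟩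

lemma prim_up {v : V} (hv : v ≠ M.s) : Up M.lev (S.prim v) ∧ S.prim v ≠ M.d₀ :=
  ((S.mem_ins _ _).1 (S.prim_mem hv)).2

open Classical in
/-- Every edge bends at most once, except `d₀`, which bends twice, and the edges chosen as the
straight incoming edge of a vertex `v ≠ s`, which do not bend. -/
lemma bends_le (e : Sym2 V) :
    (S.polyOf (M.dartOf e)).bends + (if ∃ v, v ≠ M.s ∧ M.dartOf e = S.prim v then 1 else 0) ≤
      1 + (if M.dartOf e = M.d₀ then 1 else 0) := by
  by_cases h0 : M.dartOf e = M.d₀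
  · have h1 : ¬ ∃ v, v ≠ M.s ∧ M.dartOf e = S.prim v := by
      rintro ⟨v, hv, h⟩
      exact (S.prim_up hv).2 (h.symm.trans h0)
    rw [if_neg h1, if_pos h0, polyOf, if_pos h0]
    exact le_rfl
  · rw [if_neg h0]
    by_cases h1 : ∃ v, v ≠ M.s ∧ M.dartOf e = S.prim v
    · have h2 : M.dartOf e = S.prim (M.dartOf e).snd := by
        obtain ⟨v, hv, h⟩ := h1
        rw [h, S.prim_snd hv]
      rw [if_pos h1, polyOf, if_neg h0, if_pos h2]
      exact le_rfl
    · rw [if_neg h1, polyOf, if_neg h0]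
      split_ifs
      · exact Nat.zero_le _
      · exact le_rfl

/-- The edges contribute one bend each, `d₀` one more, and `n - 1` straight edges save theirs. -/
lemma totalBends_le : S.drawing.totalBends + Fintype.card V ≤ G.edgeSet.ncard + 2 := by
  classical
  set E := G.edgeSet.toFinite.toFinset with hE
  have hmem : ∀ e, e ∈ E ↔ e ∈ G.edgeSet := fun e => Set.Finite.mem_toFinset _
  have hcard : G.edgeSet.ncard = E.card := Set.ncard_eq_toFinset_card _ _
  have h1 : S.drawing.totalBends +
      (E.filter fun e => ∃ v, v ≠ M.s ∧ M.dartOf e = S.prim v).card ≤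
      E.card + (E.filter fun e => M.dartOf e = M.d₀).card := by
    rw [Finset.card_filter, Finset.card_filter, Finset.card_eq_sum_ones]
    unfold OctiDrawing.totalBends
    rw [← Finset.sum_add_distrib, ← Finset.sum_add_distrib]
    exact Finset.sum_le_sum fun e _ => S.bends_le e
  have h2 : (E.filter fun e => M.dartOf e = M.d₀).card ≤ 1 := by
    rw [Finset.card_le_one]
    intro a ha b hb
    rw [Finset.mem_filter, hmem] at ha hb
    rw [← M.dartOf_edge ha.1, ← M.dartOf_edge hb.1, ha.2, hb.2]
  have h3 : (Finset.univ.erase M.s).card ≤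
      (E.filter fun e => ∃ v, v ≠ M.s ∧ M.dartOf e = S.prim v).card := by
    refine Finset.card_le_card_of_injOn (fun v => (S.prim v).edge) ?_ ?_
    · intro v hv
      have hv' : v ≠ M.s := Finset.ne_of_mem_erase hv
      simp only [Finset.coe_filter, Set.mem_ofPred_eq, hmem]
      exact ⟨(S.prim v).edge_mem, v, hv', M.dartOf_of_up (S.prim_up hv').1⟩
    · intro v hv w hw h
      have hv' : v ≠ M.s := Finset.ne_of_mem_erase hv
      have hw' : w ≠ M.s := Finset.ne_of_mem_erase hw
      have := congrArg M.dartOf h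
      simp only [M.dartOf_of_up (S.prim_up hv').1, M.dartOf_of_up (S.prim_up hw').1] at this
      rw [← S.prim_snd hv', ← S.prim_snd hw', this]
  rw [Finset.card_erase_of_mem (Finset.mem_univ _), Finset.card_univ] at h3
  omega

end Sweep

lemma two_mul_ncard_edgeSet_le (hd : MaxDegLE G 4) : 2 * G.edgeSet.ncard ≤ 4 * Fintype.card V := by
  classical
  have h := G.sum_degrees_eq_twice_card_edges
  have h1 : ∑ v, G.degree v ≤ ∑ _v : V, 4 := by
    refine Finset.sum_le_sum fun v _ => ?_
    have := hd v
    rw [Set.ncard_eq_toFinset_card'] at this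
    exact this
  have h2 : G.edgeSet.ncard = G.edgeFinset.card := Set.ncard_eq_toFinset_card' _
  rw [h, Finset.sum_const, Finset.card_univ, smul_eq_mul, ← h2] at h1
  omega

end Assembly
end OctiProof

/-- Every triconnected planar simple graph with maximum degree at most `4`
on `n` vertices admits a planar octilinear drawing with at most `n + 5` bends in total. -/
theorem octilinear_bends_le_of_triconnected_deg4 {V : Type*} [Fintype V]
    (G : SimpleGraph V) (h3 : Triconnected G) (hp : GraphPlanar G) (hd : MaxDegLE G 4) :
    ∃ D : OctiDrawing G, D.IsPlanar ∧ D.totalBends ≤ Fintype.card V + 5 := by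
  obtain ⟨h4, hcon⟩ := h3
  have hconn : G.Connected := by
    have h := hcon ∅ (by simp)
    rw [Set.compl_empty] at h
    exact (SimpleGraph.induceUnivIso G).connected_iff.1 h
  have hconn1 : ∀ v, (G.induce ({v}ᶜ : Set V)).Connected := fun v => hcon {v} (by simp)
  have : Nontrivial V := Fintype.one_lt_card_iff_nontrivial.1 (by omega)
  obtain ⟨s, -⟩ := exists_pair_ne V
  obtain ⟨t, hst⟩ := hconn.preconnected.exists_adj_of_nontrivial s
  obtain ⟨M, -, -⟩ := OctiProof.exists_stMap hp hconn hconn1 hst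
  obtain ⟨S⟩ := OctiProof.exists_sweep' M (by omega) hd
  have h1 := S.totalBends_le
  have h2 := OctiProof.two_mul_ncard_edgeSet_le hd
  exact ⟨S.drawing, S.drawing_isPlanar, by omega⟩
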